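/- Let u(y) = s*_ε(Ty) for y ∈ ℝ^d∖{0} and u(0) = 0. There exist constants C > 0 and Θ₀ ∈ (0,π), depending only on d and α, such that for every Θ ∈ (0,Θ₀) (in particular ε = tan(Θ/2) < 1/20) and every θ ∈ V_Θ with |θ - e_d/2| = 1/2: the fractional Laplacian Δ^{α/2}u(θ) exists and |Δ^{α/2}u(θ) + |θ|^{-2α}| ≤ C·ω(ε). -/

import Mathlib

open MeasureTheory Metric Real Set Filter RealInnerProductSpace
open scoped ENNReal

noncomputable section

/-- Euclidean space ℝ^d. -/
abbrev Ed (d : ℕ) := EuclideanSpace ℝ (Fin d)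

/-- The constant `A_{d,α}`. -/
noncomputable def fracConst (d : ℕ) (α : ℝ) : ℝ :=
  α * 2 ^ (α - 1) * π ^ (-(d : ℝ) / 2) * Real.Gamma (((d : ℝ) + α) / 2) / Real.Gamma (1 - α / 2)

/-- The fractional Laplacian `Δ^{α/2} Φ (x)` exists and equals `L`. -/
def fracLapAt (d : ℕ) (α : ℝ) (Φ : Ed d → ℝ) (x : Ed d) (L : ℝ) : Prop :=
  Filter.Tendsto
    (fun ε : ℝ => fracConst d α *
      ∫ y in {y : Ed d | ε < ‖y - x‖}, (Φ y - Φ x) * ‖y - x‖ ^ (-(d : ℝ) - α))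
    (nhdsWithin 0 (Set.Ioi 0)) (nhds L)

/-- The last coordinate of a vector in ℝ^d. -/
def lastCoord (d : ℕ) (x : Ed d) : ℝ :=
  if h : 0 < d then x ⟨d - 1, Nat.sub_lt h Nat.one_pos⟩ else 0

/-- The unit vector `e_d = (0,…,0,1)`. -/
def eLast (d : ℕ) : Ed d :=
  if h : 0 < d then EuclideanSpace.single ⟨d - 1, Nat.sub_lt h Nat.one_pos⟩ (1 : ℝ) else 0

/-- The right circular cone `Γ_Θ` of angle `Θ`. -/
def cone (d : ℕ) (Θ : ℝ) : Set (Ed d) := {x | ‖x‖ * Real.cos Θ < lastCoord d x}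

/-- The unit sphere `S^{d-1}` in ℝ^d. -/
def unitSphere (d : ℕ) : Set (Ed d) := Metric.sphere (0 : Ed d) 1

/-- The spherical cap `B_Θ`. -/
def capB (d : ℕ) (Θ : ℝ) : Set (Ed d) := {θ | θ ∈ unitSphere d ∧ Real.cos Θ < lastCoord d θ}

/-- The surface measure `σ`: the (d-1)-dimensional Hausdorff measure. -/
noncomputable def sphMeasure (d : ℕ) : Measure (Ed d) := μH[(d : ℝ) - 1]

/-- The kernel `u_λ(t)`. -/
noncomputable def uKernel (d : ℕ) (α lam t : ℝ) : ℝ :=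
  ∫ r in Set.Ioi (0 : ℝ), r ^ ((d : ℝ) + lam - 1) * (r ^ 2 - 2 * r * t + 1) ^ (-((d : ℝ) + α) / 2)

/-- The kernel `u_λ(t)` as a value in `[0,∞]`. -/
noncomputable def uKernelE (d : ℕ) (α lam t : ℝ) : ℝ≥0∞ :=
  ∫⁻ r in Set.Ioi (0 : ℝ),
    ENNReal.ofReal (r ^ ((d : ℝ) + lam - 1) * (r ^ 2 - 2 * r * t + 1) ^ (-((d : ℝ) + α) / 2))

/-- The spherical fractional Laplacian `Δ_S^{α/2} φ (η)` exists and equals `L`. -/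
def sphFracLapAt (d : ℕ) (α : ℝ) (φ : Ed d → ℝ) (η : Ed d) (L : ℝ) : Prop :=
  Filter.Tendsto
    (fun ε : ℝ => fracConst d α *
      ∫ θ in {θ : Ed d | θ ∈ unitSphere d ∧ ⟪θ, η⟫ ≤ Real.cos ε},
        (φ θ - φ η) * uKernel d α 0 ⟪θ, η⟫ ∂(sphMeasure d))
    (nhdsWithin 0 (Set.Ioi 0)) (nhds L)

/-- The integrand of the radial operator `R_λ`. -/
noncomputable def RopIntegrand (d : ℕ) (α lam : ℝ) (φ : Ed d → ℝ) (η θ : Ed d) : ℝ :=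
  φ θ * (uKernel d α lam ⟪θ, η⟫ - uKernel d α 0 ⟪θ, η⟫)

/-- The radial operator `R_λ φ (η)`. -/
noncomputable def Rop (d : ℕ) (α lam : ℝ) (φ : Ed d → ℝ) (η : Ed d) : ℝ :=
  fracConst d α * ∫ θ in unitSphere d, RopIntegrand d α lam φ η θ ∂(sphMeasure d)

/-- The modulus `ω`. -/
noncomputable def omegaFn (α Θ : ℝ) : ℝ :=
  if α < 1 then Θ ^ α else if α = 1 then Θ * |Real.log Θ| else Θ

/-- The Euler beta function. -/
noncomputable def eulerBeta (a b : ℝ) : ℝ := Real.Gamma a * Real.Gamma b / Real.Gamma (a + b)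

/-- The constant `B_{d,α}`. -/
noncomputable def Bconst (d : ℕ) (α : ℝ) : ℝ :=
  Real.Gamma (((d : ℝ) + α) / 2) / (π ^ ((3 : ℝ) / 2) * Real.Gamma (((d : ℝ) - 1 + α) / 2)) *
    Real.sin (π * α / 2) * eulerBeta (1 + α / 2) (((d : ℝ) - 1) / 2)

/-- The constant `C_{d-1,α}`. -/
noncomputable def Cexit (d : ℕ) (α : ℝ) : ℝ :=
  Real.Gamma (((d : ℝ) - 1) / 2) /
    (2 ^ α * Real.Gamma (((d : ℝ) - 1 + α) / 2) * Real.Gamma (1 + α / 2))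

/-- The constant `C̃_{d,α}`. -/
noncomputable def Ctilde (d : ℕ) (α : ℝ) : ℝ :=
  π ^ (((d : ℝ) - 1) / 2) / Real.Gamma (((d : ℝ) - 1) / 2) * Cexit d α *
    eulerBeta (1 + α / 2) (((d : ℝ) - 1) / 2)

/-- The norm `|ỹ|` of the first `d-1` coordinates of `y`. -/
noncomputable def tnorm (d : ℕ) (y : Ed d) : ℝ :=
  Real.sqrt (∑ i : Fin d, if (i : ℕ) < d - 1 then (y i) ^ 2 else 0)

/-- The function `s_ε`. -/
noncomputable def sExit (d : ℕ) (α ε : ℝ) (y : Ed d) : ℝ :=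
  Cexit d α * (max (ε ^ 2 - tnorm d y ^ 2) 0) ^ (α / 2)

/-- The cylinder `Π_ε`. -/
def cylPi (d : ℕ) (ε : ℝ) : Set (Ed d) := {y | tnorm d y < ε}

/-- The hyperplane `F = {y : y_d = 1}`. -/
def hyperF (d : ℕ) : Set (Ed d) := {y | lastCoord d y = 1}

/-- The Riesz kernel `h(y) = |y|^{α-d}`. -/
noncomputable def rieszH (d : ℕ) (α : ℝ) (y : Ed d) : ℝ := ‖y‖ ^ (α - (d : ℝ))

/-- The inversion `T x = x/|x|²`. -/
noncomputable def inversion (d : ℕ) (x : Ed d) : Ed d := (‖x‖ ^ 2)⁻¹ • x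

/-- The shifted cone `V_Θ = Γ_Θ + e_d/2`. -/
def Vcone (d : ℕ) (Θ : ℝ) : Set (Ed d) := {y | y - (1 / 2 : ℝ) • eLast d ∈ cone d Θ}

/-- The spindle `L_ε = T(V_Θ)` with `ε = tan(Θ/2)`, i.e. `Θ = 2 arctan ε`. -/
def Lspindle (d : ℕ) (ε : ℝ) : Set (Ed d) := inversion d '' Vcone d (2 * Real.arctan ε)

/-- The curvilinear projection `y* = T(e_d/2 + (Ty - e_d/2)/(2|Ty - e_d/2|))`. -/
noncomputable def ystar (d : ℕ) (y : Ed d) : Ed d :=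
  inversion d ((1 / 2 : ℝ) • eLast d +
    (2 * ‖inversion d y - (1 / 2 : ℝ) • eLast d‖)⁻¹ • (inversion d y - (1 / 2 : ℝ) • eLast d))

open scoped Classical in
/-- The function `s*_ε`. -/
noncomputable def sStar (d : ℕ) (α ε : ℝ) (y : Ed d) : ℝ :=
  if y ∈ Lspindle d ε then Cexit d α * (max (ε ^ 2 - tnorm d (ystar d y) ^ 2) 0) ^ (α / 2)
  else 0

open scoped Classical in
/-- The function `u = K(h s*_ε)`, i.e. `u(y) = s*_ε(Ty)`, `u(0) = 0`. -/
noncomputable def uFn (d : ℕ) (α ε : ℝ) (y : Ed d) : ℝ :=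
  if y = 0 then 0 else sStar d α ε (inversion d y)

/-- The spherical profile `φ_Θ`. -/
noncomputable def profileFn (d : ℕ) (α Θ : ℝ) (θ : Ed d) : ℝ :=
  2 ^ α * Cexit d α *
    (max (Real.tan (Θ / 2) ^ 2 - ‖eLast d - θ‖ ^ 2 / ‖eLast d + θ‖ ^ 2) 0) ^ (α / 2)

/-- Laplacian on ℝ^d as the sum of pure second partial derivatives. -/
noncomputable def lapE (d : ℕ) (u : Ed d → ℝ) (x : Ed d) : ℝ :=
  ∑ i : Fin d,
    iteratedFDeriv ℝ 2 u x ![EuclideanSpace.single i (1 : ℝ), EuclideanSpace.single i (1 : ℝ)]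

/-- Laplacian on ℝ^d × ℝ as the sum of the d+1 pure second partial derivatives. -/
noncomputable def lapProd (d : ℕ) (U : Ed d × ℝ → ℝ) (p : Ed d × ℝ) : ℝ :=
  (∑ i : Fin d, iteratedFDeriv ℝ 2 U p
      ![(EuclideanSpace.single i (1 : ℝ), (0 : ℝ)), (EuclideanSpace.single i (1 : ℝ), (0 : ℝ))]) +
    iteratedFDeriv ℝ 2 U p ![((0 : Ed d), (1 : ℝ)), ((0 : Ed d), (1 : ℝ))]

/-- The Poisson kernel `P_t(x)` for the upper half-space. -/
noncomputable def poissonK (d : ℕ) (t : ℝ) (x : Ed d) : ℝ :=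
  Real.Gamma (((d : ℝ) + 1) / 2) / π ^ (((d : ℝ) + 1) / 2) * t *
    (‖x‖ ^ 2 + t ^ 2) ^ (-((d : ℝ) + 1) / 2)

end

theorem integral_Ioo_rpow_mul_one_sub_rpow {a b : ℝ} (ha : 0 < a) (hb : 0 < b) :
    ∫ x in Ioo (0 : ℝ) 1, x ^ (a - 1) * (1 - x) ^ (b - 1) =
      Gamma a * Gamma b / Gamma (a + b) := by
  have hB : 0 < ProbabilityTheory.beta a b := ProbabilityTheory.beta_pos ha hb
  have h1 := ProbabilityTheory.lintegral_betaPDF_eq_one ha hb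
  rw [ProbabilityTheory.lintegral_betaPDF] at h1
  have h2 : ∫ x in Ioo (0 : ℝ) 1,
      1 / ProbabilityTheory.beta a b * x ^ (a - 1) * (1 - x) ^ (b - 1) = 1 := by
    rw [integral_eq_lintegral_of_nonneg_ae, h1]
    · simp
    · refine (ae_restrict_iff' measurableSet_Ioo).2 (.of_forall fun x hx => ?_)
      have : 0 < 1 - x := by linarith [hx.2]
      have := hx.1
      simp only [Pi.zero_apply]
      positivity
    · exact Measurable.aestronglyMeasurable (by fun_prop)
  simp_rw [mul_assoc] at h2
  rw [integral_const_mul] at h2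
  have : ProbabilityTheory.beta a b = Gamma a * Gamma b / Gamma (a + b) := rfl
  rw [← this]
  field_simp at h2
  linarith

theorem integral_Ioi_rpow_div_one_add_sq {p : ℝ} (hp : 0 < p) (hp1 : p < 1) :
    ∫ y in Ioi (0 : ℝ), y ^ (1 - 2 * p) / (1 + y ^ 2) = Gamma p * Gamma (1 - p) / 2 := by
  have h0 := integral_Ioo_rpow_mul_one_sub_rpow hp (by linarith : 0 < 1 - p)
  have himg : (fun y : ℝ => (1 + y ^ 2)⁻¹) '' Ioi 0 = Ioo 0 1 := by
    ext x
    constructor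
    · rintro ⟨y, hy, rfl⟩
      have hy' : 0 < y := hy
      exact ⟨by positivity, inv_lt_one_of_one_lt₀ (by nlinarith)⟩
    · rintro ⟨h1, h2⟩
      have : 1 < x⁻¹ := (one_lt_inv₀ h1).2 h2
      refine ⟨√(x⁻¹ - 1), Real.sqrt_pos.2 (by linarith), ?_⟩
      simp only
      rw [Real.sq_sqrt (by linarith)]
      simp
  have hinj : InjOn (fun y : ℝ => (1 + y ^ 2)⁻¹) (Ioi 0) := by
    intro a ha b hb hab
    have ha' : 0 < a := ha
    have hb' : 0 < b := hb
    have := inv_injective hab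
    exact (pow_left_inj₀ ha'.le hb'.le two_ne_zero).1 (by linarith)
  have hd : ∀ y ∈ Ioi (0 : ℝ), HasDerivWithinAt (fun y : ℝ => (1 + y ^ 2)⁻¹)
      (-(2 * y) / (1 + y ^ 2) ^ 2) (Ioi 0) y := by
    intro y hy
    have := ((hasDerivAt_pow 2 y).const_add 1).fun_inv (by positivity)
    exact (this.congr_deriv (by simp)).hasDerivWithinAt
  have key := integral_image_eq_integral_abs_deriv_smul measurableSet_Ioi hd hinj
    (fun x => x ^ (p - 1) * (1 - x) ^ (1 - p - 1))
  rw [himg, h0] at key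
  have : ∀ y ∈ Ioi (0 : ℝ), |-(2 * y) / (1 + y ^ 2) ^ 2| •
      (((1 + y ^ 2)⁻¹) ^ (p - 1) * (1 - (1 + y ^ 2)⁻¹) ^ (1 - p - 1)) =
      2 * (y ^ (1 - 2 * p) / (1 + y ^ 2)) := by
    intro y hy
    have hy' : 0 < y := hy
    have h1 : 0 < 1 + y ^ 2 := by positivity
    have e1 : 1 - (1 + y ^ 2)⁻¹ = y ^ 2 * (1 + y ^ 2)⁻¹ := by field_simp; ring
    rw [e1, Real.mul_rpow (by positivity) (by positivity), abs_div, abs_neg,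
      abs_of_pos (by positivity : 0 < 2 * y), abs_of_pos (by positivity : 0 < (1 + y ^ 2) ^ 2)]
    have e2 : (y ^ 2) ^ (1 - p - 1) = y ^ (1 - 2 * p) * y⁻¹ := by
      rw [← Real.rpow_natCast, ← Real.rpow_mul hy'.le, ← Real.rpow_neg_one y, ← Real.rpow_add hy']
      congr 1; push_cast; ring
    have e3 : ((1 + y ^ 2)⁻¹) ^ (p - 1) * ((1 + y ^ 2)⁻¹) ^ (1 - p - 1) = 1 + y ^ 2 := by
      rw [← Real.rpow_add (by positivity), show p - 1 + (1 - p - 1) = -1 by ring,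
        Real.rpow_neg_one, inv_inv]
    rw [e2, smul_eq_mul]
    calc _ = 2 * y / (1 + y ^ 2) ^ 2 * (y ^ (1 - 2 * p) * y⁻¹) *
        (((1 + y ^ 2)⁻¹) ^ (p - 1) * ((1 + y ^ 2)⁻¹) ^ (1 - p - 1)) := by ring
      _ = _ := by rw [e3]; field_simp
  rw [setIntegral_congr_fun measurableSet_Ioi this, integral_const_mul] at key
  rw [show p + (1 - p) = 1 by ring, Real.Gamma_one] at key
  linarith

theorem integrableOn_Ioi_rpow_div_one_add_sq {p : ℝ} (hp : 0 < p) (hp1 : p < 1) :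
    IntegrableOn (fun y : ℝ => y ^ (1 - 2 * p) / (1 + y ^ 2)) (Ioi 0) := by
  refine Integrable.of_integral_ne_zero ?_
  rw [integral_Ioi_rpow_div_one_add_sq hp hp1]
  have := Gamma_pos_of_pos hp
  have := Gamma_pos_of_pos (by linarith : 0 < 1 - p)
  positivity

theorem integral_Ioi_inv_sub_one_mul_rpow {p c : ℝ} (hp : 0 < p) (hp1 : p < 1) (hc : 0 < c) :
    IntegrableOn (fun y : ℝ => ((1 + c * y ^ 2)⁻¹ - 1) * y ^ (-1 - 2 * p)) (Ioi 0) ∧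
    ∫ y in Ioi (0 : ℝ), ((1 + c * y ^ 2)⁻¹ - 1) * y ^ (-1 - 2 * p) =
      -c ^ p * (Gamma p * Gamma (1 - p) / 2) := by
  have hs : 0 < √c := Real.sqrt_pos.2 hc
  have e : ∀ y ∈ Ioi (0 : ℝ), ((1 + c * y ^ 2)⁻¹ - 1) * y ^ (-1 - 2 * p) =
      -(c ^ p * √c) * ((√c * y) ^ (1 - 2 * p) / (1 + (√c * y) ^ 2)) := by
    intro y hy
    have hy' : 0 < y := hy
    rw [Real.mul_rpow hs.le hy'.le, mul_pow, Real.sq_sqrt hc.le]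
    have e1 : y ^ (1 - 2 * p) = y ^ 2 * y ^ (-1 - 2 * p) := by
      rw [← Real.rpow_natCast, ← Real.rpow_add hy']; congr 1; push_cast; ring
    have e2 : c ^ p * √c * √c ^ (1 - 2 * p) = c := by
      rw [Real.sqrt_eq_rpow, ← Real.rpow_mul hc.le, ← Real.rpow_add hc, ← Real.rpow_add hc]
      nth_rw 2 [← Real.rpow_one c]
      congr 1; ring
    rw [e1]
    have h1 : 0 < 1 + c * y ^ 2 := by positivity
    calc _ = -c * y ^ 2 * y ^ (-1 - 2 * p) / (1 + c * y ^ 2) := by field_simp; ring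
      _ = _ := by nth_rw 1 [← e2]; ring
  constructor
  · rw [integrableOn_congr_fun e measurableSet_Ioi]
    have := (integrableOn_Ioi_comp_mul_left_iff
      (fun y : ℝ => y ^ (1 - 2 * p) / (1 + y ^ 2)) 0 hs).2
      (by simpa using integrableOn_Ioi_rpow_div_one_add_sq hp hp1)
    exact this.const_mul _
  · rw [setIntegral_congr_fun measurableSet_Ioi e, integral_const_mul,
      integral_comp_mul_left_Ioi (fun y : ℝ => y ^ (1 - 2 * p) / (1 + y ^ 2)) 0 hs, mul_zero,
      integral_Ioi_rpow_div_one_add_sq hp hp1, smul_eq_mul]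
    field_simp

theorem ContDiffAt.exists_abs_sub_sub_fderiv_le {E : Type*} [NormedAddCommGroup E]
    [NormedSpace ℝ E] {g : E → ℝ} {x : E} (hg : ContDiffAt ℝ 2 g x) :
    ∃ K r : ℝ, 0 ≤ K ∧ 0 < r ∧ ∀ w : E, ‖w‖ < r →
      |g (x + w) - g x - fderiv ℝ g x w| ≤ K * ‖w‖ ^ 2 := by
  have h1 : ContDiffAt ℝ 1 (fderiv ℝ g) x := hg.fderiv_right (by norm_num)
  obtain ⟨K, t, ht, hK⟩ := h1.exists_lipschitzOnWith
  have h2 : ∀ᶠ y in nhds x, DifferentiableAt ℝ g y :=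
    (hg.eventually (by simp)).mono fun y hy => hy.differentiableAt (by simp)
  obtain ⟨r, hr, hr'⟩ := Metric.mem_nhds_iff.1 (inter_mem ht h2)
  refine ⟨K, r, K.2, hr, fun w hw => ?_⟩
  have hsub : closedBall x ‖w‖ ⊆ ball x r := closedBall_subset_ball hw
  have key := (convex_closedBall x ‖w‖).norm_image_sub_le_of_norm_hasFDerivWithin_le'
    (f := g) (f' := fderiv ℝ g) (C := K * ‖w‖) (φ := fderiv ℝ g x) (x := x) (y := x + w)
    (fun y hy => ((hr' (hsub hy)).2.hasFDerivAt).hasFDerivWithinAt)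
    (fun y hy => by
      have := hK.dist_le_mul y (hr' (hsub hy)).1 x (mem_of_mem_nhds ht)
      rw [dist_eq_norm] at this
      exact this.trans (mul_le_mul_of_nonneg_left (mem_closedBall.1 hy) K.2))
    (mem_closedBall_self (norm_nonneg _)) (by simp)
  simp only [add_sub_cancel_left, Real.norm_eq_abs] at key
  linarith [key]

theorem ContDiffAt.exists_abs_second_diff_le {E : Type*} [NormedAddCommGroup E]
    [NormedSpace ℝ E] {g : E → ℝ} {x : E} (hg : ContDiffAt ℝ 2 g x) :
    ∃ K r : ℝ, 0 ≤ K ∧ 0 < r ∧ ∀ w : E, ‖w‖ < r →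
      |g (x + w) + g (x - w) - 2 * g x| ≤ K * ‖w‖ ^ 2 := by
  obtain ⟨K, r, hK, hr, h⟩ := hg.exists_abs_sub_sub_fderiv_le
  refine ⟨2 * K, r, by positivity, hr, fun w hw => ?_⟩
  have h1 := h w hw
  have h2 := h (-w) (by simpa using hw)
  rw [norm_neg, map_neg, ← sub_eq_add_neg] at h2
  rw [abs_le] at *
  constructor <;> linarith [h1.1, h1.2, h2.1, h2.2]

theorem integrableOn_Ioc_mul_rpow_of_le_sq {g : ℝ → ℝ} {a K α : ℝ} (hα2 : α < 2)
    (hm : AEStronglyMeasurable g (volume.restrict (Ioc 0 a)))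
    (hg : ∀ t ∈ Ioc 0 a, |g t| ≤ K * t ^ 2) :
    IntegrableOn (fun t => g t * t ^ (-1 - α)) (Ioc 0 a) := by
  rcases le_total a 0 with ha | ha
  · rw [Ioc_eq_empty (not_lt.2 ha)]; exact integrableOn_empty
  have h1 : IntegrableOn (fun t : ℝ => K * t ^ (1 - α)) (Ioc 0 a) := by
    refine Integrable.const_mul ?_ _
    exact (intervalIntegrable_iff_integrableOn_Ioc_of_le ha).1
      (intervalIntegral.intervalIntegrable_rpow' (by linarith))
  refine h1.mono' (hm.mul (by fun_prop)) ?_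
  refine (ae_restrict_iff' measurableSet_Ioc).2 (.of_forall fun t ht => ?_)
  have ht0 : 0 < t := ht.1
  rw [norm_mul, Real.norm_eq_abs, Real.norm_of_nonneg (by positivity)]
  have e : t ^ (1 - α) = t ^ 2 * t ^ (-1 - α) := by
    rw [← Real.rpow_natCast, ← Real.rpow_add ht0]; congr 1; push_cast; ring
  rw [e, ← mul_assoc]
  exact mul_le_mul_of_nonneg_right (hg t ht) (by positivity)

theorem integrableOn_Ioi_mul_rpow_of_bounded {g : ℝ → ℝ} {a K α : ℝ} (ha : 0 < a) (hα : 0 < α)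
    (hm : AEStronglyMeasurable g (volume.restrict (Ioi a)))
    (hg : ∀ t ∈ Ioi a, |g t| ≤ K) :
    IntegrableOn (fun t => g t * t ^ (-1 - α)) (Ioi a) := by
  have h1 : IntegrableOn (fun t : ℝ => K * t ^ (-1 - α)) (Ioi a) :=
    (integrableOn_Ioi_rpow_of_lt (by linarith) ha).const_mul _
  refine h1.mono' (hm.mul (by fun_prop)) ?_
  refine (ae_restrict_iff' measurableSet_Ioi).2 (.of_forall fun t ht => ?_)
  have ht0 : 0 < t := ha.trans ht
  rw [norm_mul, Real.norm_eq_abs, Real.norm_of_nonneg (by positivity)]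
  exact mul_le_mul_of_nonneg_right (hg t ht) (by positivity)

theorem integral_Ioi_rpow_neg_one_sub {a α : ℝ} (ha : 0 < a) (hα : 0 < α) :
    ∫ t in Ioi a, t ^ (-1 - α) = a ^ (-α) / α := by
  rw [integral_Ioi_rpow_of_lt (by linarith) ha]
  rw [show -1 - α + 1 = -α by ring]
  field_simp

theorem abs_integral_Ioi_mul_rpow_le {g : ℝ → ℝ} {a K α : ℝ} (ha : 0 < a) (hα : 0 < α)
    (hg : ∀ t ∈ Ioi a, |g t| ≤ K) :
    |∫ t in Ioi a, g t * t ^ (-1 - α)| ≤ K * (a ^ (-α) / α) := by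
  rw [← integral_Ioi_rpow_neg_one_sub ha hα, ← integral_const_mul]
  have hi : IntegrableOn (fun t : ℝ => t ^ (-1 - α)) (Ioi a) :=
    integrableOn_Ioi_rpow_of_lt (by linarith) ha
  rw [← Real.norm_eq_abs]
  refine norm_integral_le_of_norm_le (hi.const_mul K) ?_
  refine (ae_restrict_iff' measurableSet_Ioi).2 (.of_forall fun t ht => ?_)
  have ht0 : 0 < t := ha.trans ht
  rw [norm_mul, Real.norm_eq_abs, Real.norm_of_nonneg (by positivity)]
  exact mul_le_mul_of_nonneg_right (hg t ht) (by positivity)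

theorem tendsto_integral_Ioi_nhdsGT {g : ℝ → ℝ} (hg : IntegrableOn g (Ioi 0)) :
    Tendsto (fun δ : ℝ => ∫ t in Ioi δ, g t) (nhdsWithin 0 (Ioi 0))
      (nhds (∫ t in Ioi 0, g t)) := by
  have h : ∀ᶠ δ : ℝ in nhdsWithin 0 (Ioi 0),
      ∫ t in Ioi δ, g t = ∫ t in Ioi 0, (Ioi δ).indicator g t := by
    filter_upwards [self_mem_nhdsWithin] with δ hδ
    rw [setIntegral_indicator measurableSet_Ioi, inter_eq_right.2 (Ioi_subset_Ioi (le_of_lt hδ))]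
  rw [tendsto_congr' h]
  refine tendsto_integral_filter_of_dominated_convergence (fun t => ‖g t‖) ?_ ?_ hg.norm ?_
  · exact .of_forall fun δ => hg.1.indicator measurableSet_Ioi
  · exact .of_forall fun δ => .of_forall fun t => norm_indicator_le_norm_self _ _
  · refine (ae_restrict_iff' measurableSet_Ioi).2 (.of_forall fun t ht => ?_)
    refine tendsto_const_nhds.congr' ?_
    have : ∀ᶠ δ : ℝ in nhdsWithin 0 (Ioi 0), δ < t :=
      mem_nhdsWithin_of_mem_nhds (Iio_mem_nhds ht)
    filter_upwards [this] with δ hδ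
    rw [indicator_of_mem (mem_Ioi.2 hδ)]

theorem integrableOn_Ioi_second_diff {f : ℝ → ℝ} {K r B α : ℝ} (hα : 0 < α) (hα2 : α < 2)
    (hr : 0 < r) (hm : AEStronglyMeasurable f (volume.restrict (Ioi 0)))
    (h1 : ∀ t ∈ Ioc 0 r, |f t| ≤ K * t ^ 2) (h2 : ∀ t, |f t| ≤ B) :
    IntegrableOn (fun t => f t * t ^ (-1 - α)) (Ioi 0) := by
  rw [← Ioc_union_Ioi_eq_Ioi hr.le]
  exact (integrableOn_Ioc_mul_rpow_of_le_sq hα2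
      (hm.mono_measure (Measure.restrict_mono Ioc_subset_Ioi_self le_rfl)) h1).union
    (integrableOn_Ioi_mul_rpow_of_bounded hr hα
      (hm.mono_measure (Measure.restrict_mono (Ioi_subset_Ioi hr.le) le_rfl)) fun t _ => h2 t)

theorem integral_comp_projective {F : ℝ → ℝ} {α ρ c a δ : ℝ} (hρ : 0 < ρ)
    (hc : |c| * a < 1) (hδ : 0 < δ) (hδc : 0 < ρ + c * δ) (hδa : δ / (ρ + c * δ) ≤ a)
    (hF : ContinuousOn F (Icc 0 a)) :
    ∫ t in δ..(ρ * a / (1 - c * a)), F (t / (ρ + c * t)) * t ^ (-1 - α) =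
      ρ ^ (-α) * ∫ τ in (δ / (ρ + c * δ))..a, F τ * (1 - c * τ) ^ (α - 1) * τ ^ (-1 - α) := by
  set b := δ / (ρ + c * δ) with hb
  have hb0 : 0 < b := by positivity
  have ha : 0 < a := hb0.trans_le hδa
  have hpos : ∀ τ ∈ Icc b a, 0 < 1 - c * τ := by
    intro τ hτ
    have h1 : c * τ ≤ |c| * τ := mul_le_mul_of_nonneg_right (le_abs_self c) (hb0.le.trans hτ.1)
    have h2 : |c| * τ ≤ |c| * a := mul_le_mul_of_nonneg_left hτ.2 (abs_nonneg c)
    linarith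
  have hinv : ∀ τ ∈ Icc b a, ρ * τ / (1 - c * τ) / (ρ + c * (ρ * τ / (1 - c * τ))) = τ := by
    intro τ hτ
    have h1 := hpos τ hτ
    have h2 : ρ + c * (ρ * τ / (1 - c * τ)) = ρ / (1 - c * τ) := by field_simp; ring
    rw [h2, div_div_div_cancel_right₀ h1.ne', mul_div_cancel_left₀ _ hρ.ne']
  have hfb : ρ * b / (1 - c * b) = δ := by
    have : 1 - c * b = ρ / (ρ + c * δ) := by rw [hb]; field_simp; ring
    rw [this, hb, mul_div_assoc', div_div_div_cancel_right₀ hδc.ne',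
      mul_div_cancel_left₀ _ hρ.ne']
  have hu : uIcc b a = Icc b a := uIcc_of_le hδa
  have key := intervalIntegral.integral_comp_mul_deriv'' (a := b) (b := a)
    (f := fun τ => ρ * τ / (1 - c * τ)) (f' := fun τ => ρ / (1 - c * τ) ^ 2)
    (g := fun t => F (t / (ρ + c * t)) * t ^ (-1 - α)) ?_ ?_ ?_ ?_
  · simp only [hfb] at key
    rw [← key, ← intervalIntegral.integral_const_mul]
    refine intervalIntegral.integral_congr fun τ hτ => ?_
    rw [hu] at hτ
    have h1 := hpos τ hτ
    have h2 : 0 < τ := hb0.trans_le hτ.1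
    simp only [Function.comp, hinv τ hτ]
    rw [Real.div_rpow (by positivity) h1.le, Real.mul_rpow hρ.le h2.le]
    have e1 : ρ ^ (-α) = ρ ^ (-1 - α) * ρ := by
      rw [← Real.rpow_add_one hρ.ne']; congr 1; ring
    have e2 : (1 - c * τ) ^ (α - 1) = ((1 - c * τ) ^ (-1 - α))⁻¹ * ((1 - c * τ) ^ 2)⁻¹ := by
      rw [← Real.rpow_natCast, ← Real.rpow_neg h1.le, ← Real.rpow_neg h1.le,
        ← Real.rpow_add h1]
      congr 1; push_cast; ring
    rw [e1, e2]; field_simp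
  · rw [hu]
    exact ContinuousOn.div (by fun_prop) (by fun_prop) fun τ hτ => (hpos τ hτ).ne'
  · intro τ hτ
    rw [min_eq_left hδa, max_eq_right hδa] at hτ
    have h1 := hpos τ (Ioo_subset_Icc_self hτ)
    have h2 : HasDerivAt (fun τ : ℝ => ρ * τ) ρ τ := by
      simpa using (hasDerivAt_id τ).const_mul ρ
    have h3 : HasDerivAt (fun τ : ℝ => 1 - c * τ) (-c) τ := by
      simpa using ((hasDerivAt_id τ).const_mul c).const_sub 1
    refine ((h2.fun_div h3 h1.ne').congr_deriv ?_).hasDerivWithinAt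
    ring
  · rw [hu]
    exact ContinuousOn.div (by fun_prop) (by fun_prop) fun τ hτ => (pow_pos (hpos τ hτ) 2).ne'
  · rw [hu]
    have hx : ∀ x ∈ (fun τ => ρ * τ / (1 - c * τ)) '' Icc b a, 0 < x ∧ 0 < ρ + c * x := by
      rintro _ ⟨τ, hτ, rfl⟩
      have h1 := hpos τ hτ
      have h2 : 0 < τ := hb0.trans_le hτ.1
      refine ⟨by positivity, ?_⟩
      have h2 : ρ + c * (ρ * τ / (1 - c * τ)) = ρ / (1 - c * τ) := by field_simp; ring
      simp only [h2]; positivity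
    refine ContinuousOn.mul (hF.comp (ContinuousOn.div (by fun_prop) (by fun_prop)
      fun x h => (hx x h).2.ne') ?_) (ContinuousOn.rpow_const (by fun_prop)
      fun x h => Or.inl (hx x h).1.ne')
    rintro _ ⟨τ, hτ, rfl⟩
    simp only [hinv τ hτ]
    exact ⟨hb0.le.trans hτ.1, hτ.2⟩

theorem tendsto_integral_rpow_neg_shrinking {α ρ c : ℝ} (hα : 0 < α) (hα2 : α < 2) (hρ : 0 < ρ) :
    Tendsto (fun δ : ℝ => ∫ τ in (δ / (ρ + c * δ))..(δ / (ρ - c * δ)), τ ^ (-α))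
      (nhdsWithin 0 (Ioi 0)) (nhds 0) := by
  have hev : ∀ᶠ δ : ℝ in nhdsWithin 0 (Ioi 0), |c| * δ < ρ / 2 := by
    refine mem_nhdsWithin_of_mem_nhds (IsOpen.mem_nhds (isOpen_lt (by fun_prop) (by fun_prop)) ?_)
    simp [hρ]
  have hlim : Tendsto (fun δ : ℝ => (8 * |c| / ρ ^ 2) * (2 * ρ) ^ α * δ ^ (2 - α))
      (nhdsWithin 0 (Ioi 0)) (nhds 0) := by
    have : Tendsto (fun δ : ℝ => δ ^ (2 - α)) (nhds 0) (nhds (0 ^ (2 - α))) :=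
      (Real.continuousAt_rpow_const _ _ (Or.inr (by linarith))).tendsto
    rw [Real.zero_rpow (by linarith)] at this
    simpa using (this.mono_left nhdsWithin_le_nhds).const_mul ((8 * |c| / ρ ^ 2) * (2 * ρ) ^ α)
  refine squeeze_zero_norm' ?_ hlim
  filter_upwards [hev, self_mem_nhdsWithin] with δ h1 h2
  have hδ : 0 < δ := h2
  have h3 : |c * δ| < ρ / 2 := by rwa [abs_mul, abs_of_pos hδ]
  obtain ⟨h4, h5⟩ := abs_lt.1 h3
  have p1 : 0 < ρ + c * δ := by linarith
  have p2 : 0 < ρ - c * δ := by linarith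
  have hlow : ∀ s, 0 < s → s ≤ 2 * ρ → δ / (2 * ρ) ≤ δ / s := fun s hs hs2 =>
    div_le_div_of_nonneg_left hδ.le hs hs2
  have hb : ∀ τ ∈ uIoc (δ / (ρ + c * δ)) (δ / (ρ - c * δ)), ‖τ ^ (-α)‖ ≤ (δ / (2 * ρ)) ^ (-α) := by
    intro τ hτ
    have h6 : δ / (2 * ρ) ≤ τ := by
      have := hτ.1.le
      refine le_trans ?_ this
      exact le_min (hlow _ p1 (by linarith)) (hlow _ p2 (by linarith))
    have h7 : 0 < δ / (2 * ρ) := by positivity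
    rw [Real.norm_of_nonneg (Real.rpow_nonneg (h7.le.trans h6) _)]
    exact Real.rpow_le_rpow_of_nonpos h7 h6 (by linarith)
  refine (intervalIntegral.norm_integral_le_of_norm_le_const hb).trans ?_
  have e : δ / (ρ - c * δ) - δ / (ρ + c * δ) = 2 * c * δ ^ 2 / ((ρ - c * δ) * (ρ + c * δ)) := by
    rw [div_sub_div _ _ p2.ne' p1.ne']; congr 1; ring
  rw [e, abs_div, abs_mul, abs_mul, abs_of_pos (by positivity : 0 < (ρ - c * δ) * (ρ + c * δ)),
    abs_two, abs_of_pos (by positivity : 0 < δ ^ 2)]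
  have h8 : 2 * |c| * δ ^ 2 / ((ρ - c * δ) * (ρ + c * δ)) ≤ 2 * |c| * δ ^ 2 / (ρ ^ 2 / 4) := by
    apply div_le_div_of_nonneg_left (by positivity) (by positivity)
    nlinarith
  have e2 : (δ / (2 * ρ)) ^ (-α) = δ ^ (-α) * (2 * ρ) ^ α := by
    rw [Real.div_rpow hδ.le (by positivity), Real.rpow_neg (by positivity : 0 ≤ 2 * ρ), div_inv_eq_mul]
  have e3 : δ ^ (2 - α) = δ ^ 2 * δ ^ (-α) := by
    rw [← Real.rpow_natCast, ← Real.rpow_add hδ]; congr 1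
  calc _ ≤ (δ / (2 * ρ)) ^ (-α) * (2 * |c| * δ ^ 2 / (ρ ^ 2 / 4)) :=
        mul_le_mul_of_nonneg_left h8 (by positivity)
    _ = _ := by rw [e2, e3]; field_simp; ring

theorem exists_abs_sub_linear_le {G : ℝ → ℝ} {a : ℝ}
    (hGc : ContinuousOn G (Icc (-a) a)) (hG : ContDiffAt ℝ 2 G 0) (hG0 : G 0 = 0) :
    ∃ K ℓ : ℝ, ∀ τ ∈ Icc (-a) a, |G τ - ℓ * τ| ≤ K * τ ^ 2 := by
  obtain ⟨K, r, hK, hr, h⟩ := hG.exists_abs_sub_sub_fderiv_le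
  set ℓ := fderiv ℝ G 0 1 with hℓ
  have hlin : ∀ τ : ℝ, fderiv ℝ G 0 τ = ℓ * τ := by
    intro τ
    have : fderiv ℝ G 0 (τ • (1 : ℝ)) = τ • fderiv ℝ G 0 1 := map_smul _ _ _
    rw [smul_eq_mul, mul_one, smul_eq_mul] at this
    rw [this, hℓ, mul_comm]
  have hc2 : ContinuousOn (fun τ => G τ - ℓ * τ) (Icc (-a) a) := hGc.sub (by fun_prop)
  obtain ⟨B, hB⟩ := isCompact_Icc.exists_bound_of_continuousOn hc2
  refine ⟨max K (|B| / r ^ 2), ℓ, fun τ hτ => ?_⟩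
  rcases lt_or_ge |τ| r with h1 | h1
  · have := h τ h1
    rw [zero_add, hG0, sub_zero, hlin, Real.norm_eq_abs, sq_abs] at this
    exact this.trans (mul_le_mul_of_nonneg_right (le_max_left _ _) (sq_nonneg _))
  · have h2 : r ^ 2 ≤ τ ^ 2 := by
      rw [← sq_abs τ]; exact pow_le_pow_left₀ hr.le h1 2
    calc _ ≤ |B| := (hB τ hτ).trans (le_abs_self _)
      _ = |B| / r ^ 2 * r ^ 2 := by field_simp
      _ ≤ |B| / r ^ 2 * τ ^ 2 := by gcongr
      _ ≤ _ := mul_le_mul_of_nonneg_right (le_max_right _ _) (sq_nonneg _)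

theorem tendsto_div_add_mul_nhdsGT {ρ c : ℝ} (hρ : 0 < ρ) :
    Tendsto (fun δ : ℝ => δ / (ρ + c * δ)) (nhdsWithin 0 (Ioi 0)) (nhdsWithin 0 (Ioi 0)) := by
  refine tendsto_nhdsWithin_iff.2 ⟨?_, ?_⟩
  · have : ContinuousAt (fun δ : ℝ => δ / (ρ + c * δ)) 0 :=
      ContinuousAt.div (by fun_prop) (by fun_prop) (by simp [hρ.ne'])
    have h2 := this.tendsto
    simp only [zero_div] at h2
    exact h2.mono_left nhdsWithin_le_nhds
  · have hev : ∀ᶠ δ : ℝ in nhdsWithin 0 (Ioi 0), 0 < ρ + c * δ := by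
      refine mem_nhdsWithin_of_mem_nhds (IsOpen.mem_nhds (isOpen_lt (by fun_prop) (by fun_prop)) ?_)
      simp [hρ]
    filter_upwards [hev, self_mem_nhdsWithin] with δ h1 h2
    exact div_pos h2 h1

theorem tendsto_integral_left_nhdsGT {g : ℝ → ℝ} {a : ℝ} (ha : 0 < a)
    (hg : IntegrableOn g (Ioc 0 a)) :
    Tendsto (fun δ => ∫ τ in δ..a, g τ) (nhdsWithin 0 (Ioi 0)) (nhds (∫ τ in Ioc 0 a, g τ)) := by
  have h1 : IntegrableOn g (uIcc 0 a) := by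
    rw [uIcc_of_le ha.le]; exact (integrableOn_Icc_iff_integrableOn_Ioc (by finiteness)).2 hg
  have h2 := intervalIntegral.continuousOn_primitive_interval_left h1 0 left_mem_uIcc
  rw [uIcc_of_le ha.le] at h2
  have h3 := h2.tendsto
  simp only [intervalIntegral.integral_of_le ha.le] at h3
  exact h3.mono_left (nhdsWithin_le_of_mem (Icc_mem_nhdsGT ha))

theorem tendsto_integral_symmetrized {G : ℝ → ℝ} {α ρ c a K ℓ : ℝ} (hα : 0 < α) (hα2 : α < 2)
    (hρ : 0 < ρ) (ha : 0 < a) (hGc : ContinuousOn G (Icc (-a) a))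
    (hK : ∀ τ ∈ Icc (-a) a, |G τ - ℓ * τ| ≤ K * τ ^ 2) :
    IntegrableOn (fun τ => (G τ + G (-τ)) * τ ^ (-1 - α)) (Ioc 0 a) ∧
    Tendsto (fun δ => (∫ τ in (δ / (ρ + c * δ))..a, G τ * τ ^ (-1 - α)) +
        ∫ τ in (δ / (ρ - c * δ))..a, G (-τ) * τ ^ (-1 - α))
      (nhdsWithin 0 (Ioi 0)) (nhds (∫ τ in Ioc 0 a, (G τ + G (-τ)) * τ ^ (-1 - α))) := by
  have hGc' : ContinuousOn (fun τ => G (-τ)) (Icc (-a) a) := by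
    refine hGc.comp (by fun_prop) fun τ hτ => ?_
    exact ⟨by linarith [hτ.2], by linarith [hτ.1]⟩
  have hsub : Ioc 0 a ⊆ Icc (-a) a := fun τ hτ => ⟨by linarith [hτ.1], hτ.2⟩
  have i1 : IntegrableOn (fun τ => (G τ - ℓ * τ) * τ ^ (-1 - α)) (Ioc 0 a) :=
    integrableOn_Ioc_mul_rpow_of_le_sq hα2
      (((hGc.sub (by fun_prop)).mono hsub).aestronglyMeasurable measurableSet_Ioc)
      fun τ hτ => hK τ (hsub hτ)
  have i2 : IntegrableOn (fun τ => (G (-τ) + ℓ * τ) * τ ^ (-1 - α)) (Ioc 0 a) := by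
    refine integrableOn_Ioc_mul_rpow_of_le_sq (K := K) hα2
      (((hGc'.add (by fun_prop)).mono hsub).aestronglyMeasurable measurableSet_Ioc)
      fun τ hτ => ?_
    have := hK (-τ) ⟨by linarith [hτ.2], by linarith [hτ.1]⟩
    simpa using this
  have hsum : (fun τ => (G τ + G (-τ)) * τ ^ (-1 - α)) =
      fun τ => (G τ - ℓ * τ) * τ ^ (-1 - α) + (G (-τ) + ℓ * τ) * τ ^ (-1 - α) := by
    ext τ; ring
  have hev1 : ∀ᶠ δ in nhdsWithin 0 (Ioi 0), δ / (ρ + c * δ) ∈ Ioo 0 a :=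
    (tendsto_div_add_mul_nhdsGT hρ).eventually (Ioo_mem_nhdsGT ha)
  have hev2 : ∀ᶠ δ in nhdsWithin 0 (Ioi 0), δ / (ρ - c * δ) ∈ Ioo 0 a := by
    have := (tendsto_div_add_mul_nhdsGT (c := -c) hρ).eventually (Ioo_mem_nhdsGT ha)
    simpa only [neg_mul, ← sub_eq_add_neg, mem_Ioo] using this
  refine ⟨by rw [hsum]; exact i1.add i2, ?_⟩
  rw [hsum, integral_add i1 i2]
  have t1 := (tendsto_integral_left_nhdsGT ha i1).comp (tendsto_div_add_mul_nhdsGT (c := c) hρ)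
  have t2 := (tendsto_integral_left_nhdsGT ha i2).comp (tendsto_div_add_mul_nhdsGT (c := -c) hρ)
  have t3 := (tendsto_integral_rpow_neg_shrinking (c := c) hα hα2 hρ).const_mul ℓ
  have t4 := (t1.add t2).add t3
  rw [mul_zero, add_zero] at t4
  refine t4.congr' ?_
  filter_upwards [hev1, hev2] with δ h1 h2
  simp only [Function.comp, neg_mul, ← sub_eq_add_neg]
  have hlin : ∀ s ∈ Ioo 0 a, IntervalIntegrable (fun τ => τ ^ (-α)) volume s a := by
    intro s hs
    refine ContinuousOn.intervalIntegrable fun τ hτ => ?_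
    rw [uIcc_of_le hs.2.le] at hτ
    exact (Real.continuousAt_rpow_const _ _
      (Or.inl (hs.1.trans_le hτ.1).ne')).continuousWithinAt
  have hint : ∀ s ∈ Ioo 0 a, ∀ g : ℝ → ℝ, IntegrableOn g (Ioc 0 a) →
      IntervalIntegrable g volume s a := fun s hs g hg =>
    (intervalIntegrable_iff_integrableOn_Ioc_of_le hs.2.le).2
      (hg.mono_set (Ioc_subset_Ioc_left hs.1.le))
  have hpw : ∀ s ∈ Ioo 0 a, ∀ τ ∈ uIcc s a, τ ^ (-α) = τ * τ ^ (-1 - α) := by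
    intro s hs τ hτ
    rw [uIcc_of_le hs.2.le] at hτ
    rw [← Real.rpow_one_add' (hs.1.le.trans hτ.1) (by ring_nf; linarith)]
    congr 1; ring
  have e1 : ∫ τ in (δ / (ρ + c * δ))..a, G τ * τ ^ (-1 - α) =
      (∫ τ in (δ / (ρ + c * δ))..a, (G τ - ℓ * τ) * τ ^ (-1 - α)) +
        ℓ * ∫ τ in (δ / (ρ + c * δ))..a, τ ^ (-α) := by
    rw [← intervalIntegral.integral_const_mul,
      ← intervalIntegral.integral_add (hint _ h1 _ i1) ((hlin _ h1).const_mul _)]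
    refine intervalIntegral.integral_congr fun τ hτ => ?_
    simp only [hpw _ h1 τ hτ]; ring
  have e2 : ∫ τ in (δ / (ρ - c * δ))..a, G (-τ) * τ ^ (-1 - α) =
      (∫ τ in (δ / (ρ - c * δ))..a, (G (-τ) + ℓ * τ) * τ ^ (-1 - α)) -
        ℓ * ∫ τ in (δ / (ρ - c * δ))..a, τ ^ (-α) := by
    rw [← intervalIntegral.integral_const_mul,
      ← intervalIntegral.integral_sub (hint _ h2 _ i2) ((hlin _ h2).const_mul _)]
    refine intervalIntegral.integral_congr fun τ hτ => ?_
    simp only [hpw _ h2 τ hτ]; ring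
  rw [e1, e2, ← intervalIntegral.integral_add_adjacent_intervals
    ((hlin _ h1).trans (hlin _ h2).symm) (hlin _ h2)]
  ring

theorem integral_second_diff_projective {f F : ℝ → ℝ} {α ρ c a B : ℝ} (hα : 0 < α) (hα2 : α < 2)
    (hρ : 0 < ρ) (ha : 0 < a) (hc : |c| * a < 1) (hfm : Measurable f) (hfB : ∀ t, |f t| ≤ B)
    (hFc : ContinuousOn F (Icc (-a) a)) (hF : ContDiffAt ℝ 2 F 0) (hF0 : F 0 = 0)
    (hfF : ∀ t, -(ρ * a / (1 + c * a)) ≤ t → t ≤ ρ * a / (1 - c * a) →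
      f t - f 0 = F (t / (ρ + c * t))) :
    IntegrableOn (fun t => (f t + f (-t) - 2 * f 0) * t ^ (-1 - α)) (Ioi 0) ∧
    IntegrableOn (fun τ => (F τ * (1 - c * τ) ^ (α - 1) + F (-τ) * (1 + c * τ) ^ (α - 1)) *
      τ ^ (-1 - α)) (Ioc 0 a) ∧
    ∫ t in Ioi 0, (f t + f (-t) - 2 * f 0) * t ^ (-1 - α) =
      ρ ^ (-α) * (∫ τ in Ioc 0 a, (F τ * (1 - c * τ) ^ (α - 1) +
        F (-τ) * (1 + c * τ) ^ (α - 1)) * τ ^ (-1 - α)) +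
      (∫ t in Ioi (ρ * a / (1 - c * a)), (f t - f 0) * t ^ (-1 - α)) +
      ∫ t in Ioi (ρ * a / (1 + c * a)), (f (-t) - f 0) * t ^ (-1 - α) := by
  have hca := abs_lt.1 (show |c * a| < 1 by rwa [abs_mul, abs_of_pos ha])
  have hp1 : 0 < 1 - c * a := by linarith [hca.2]
  have hp2 : 0 < 1 + c * a := by linarith [hca.1]
  have ht1 : 0 < ρ * a / (1 - c * a) := by positivity
  have ht2 : 0 < ρ * a / (1 + c * a) := by positivity
  have hpos : ∀ τ ∈ Icc (-a) a, 0 < 1 - c * τ := by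
    intro τ hτ
    have h1 : c * τ ≤ |c| * |τ| := by rw [← abs_mul]; exact le_abs_self _
    have h2 : |c| * |τ| ≤ |c| * a := mul_le_mul_of_nonneg_left (abs_le.2 hτ) (abs_nonneg c)
    linarith
  set G : ℝ → ℝ := fun τ => F τ * (1 - c * τ) ^ (α - 1) with hG
  have hGneg : ∀ τ, G (-τ) = F (-τ) * (1 + c * τ) ^ (α - 1) := by
    intro τ; simp only [hG, mul_neg, sub_neg_eq_add]
  have hGc : ContinuousOn G (Icc (-a) a) :=
    hFc.mul (ContinuousOn.rpow_const (by fun_prop) fun τ hτ => Or.inl (hpos τ hτ).ne')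
  have hG2 : ContDiffAt ℝ 2 G 0 :=
    hF.mul (ContDiffAt.rpow_const_of_ne (by fun_prop) (by simp))
  obtain ⟨K, ℓ, hK⟩ := exists_abs_sub_linear_le hGc hG2 (by simp [hG, hF0])
  obtain ⟨hi, hlim⟩ := tendsto_integral_symmetrized (c := c) hα hα2 hρ ha hGc hK
  have hi' : IntegrableOn (fun t => (f t + f (-t) - 2 * f 0) * t ^ (-1 - α)) (Ioi 0) := by
    have hf2 : ContDiffAt ℝ 2 f 0 := by
      have h1 : ContDiffAt ℝ 2 (fun t => f 0 + F (t / (ρ + c * t))) 0 := by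
        refine contDiffAt_const.add (ContDiffAt.comp 0 (by simpa using hF) ?_)
        exact ContDiffAt.div (by fun_prop) (by fun_prop) (by simp [hρ.ne'])
      refine h1.congr_of_eventuallyEq ?_
      filter_upwards [Ioo_mem_nhds (neg_lt_zero.2 ht2) ht1] with t ht
      rw [← hfF t ht.1.le ht.2.le]; ring
    obtain ⟨K', r, hK', hr, hb⟩ := hf2.exists_abs_second_diff_le
    refine integrableOn_Ioi_second_diff (r := r / 2) (K := K') (B := 4 * B) hα hα2 (by positivity)
      (Measurable.aestronglyMeasurable (by fun_prop)) (fun t ht => ?_) fun t => ?_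
    · have := hb t (by rw [Real.norm_of_nonneg ht.1.le]; linarith [ht.2])
      rwa [zero_add, zero_sub, Real.norm_eq_abs, sq_abs] at this
    · have h1 := abs_le.1 (hfB t)
      have h2 := abs_le.1 (hfB (-t))
      have h3 := abs_le.1 (hfB 0)
      rw [abs_le]
      constructor <;> linarith [h1.1, h1.2, h2.1, h2.2, h3.1, h3.2]
  refine ⟨hi', by simpa only [← hGneg] using hi, ?_⟩
  have hev1 : ∀ᶠ δ in nhdsWithin 0 (Ioi 0), δ / (ρ + c * δ) ∈ Ioo 0 a :=
    (tendsto_div_add_mul_nhdsGT hρ).eventually (Ioo_mem_nhdsGT ha)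
  have hev2 : ∀ᶠ δ in nhdsWithin 0 (Ioi 0), δ / (ρ - c * δ) ∈ Ioo 0 a := by
    have := (tendsto_div_add_mul_nhdsGT (c := -c) hρ).eventually (Ioo_mem_nhdsGT ha)
    simpa only [neg_mul, ← sub_eq_add_neg, mem_Ioo] using this
  have hL := tendsto_integral_Ioi_nhdsGT hi'
  have hR := ((hlim.const_mul (ρ ^ (-α))).add_const
    (∫ t in Ioi (ρ * a / (1 - c * a)), (f t - f 0) * t ^ (-1 - α))).add_const
    (∫ t in Ioi (ρ * a / (1 + c * a)), (f (-t) - f 0) * t ^ (-1 - α))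
  simp only [hGneg] at hR
  refine tendsto_nhds_unique hL (hR.congr' ?_)
  filter_upwards [hev1, hev2, self_mem_nhdsWithin, Ioo_mem_nhdsGT ht1, Ioo_mem_nhdsGT ht2]
    with δ h1 h2 h3 h4 h5
  have hδ : 0 < δ := h3
  have hFc1 : ContinuousOn F (Icc 0 a) := hFc.mono (Icc_subset_Icc_left (by linarith))
  have hFc2 : ContinuousOn (fun τ => F (-τ)) (Icc 0 a) :=
    hFc.comp (by fun_prop) fun τ hτ => ⟨by linarith [hτ.2], by linarith [hτ.1]⟩
  have p1 : 0 < ρ + c * δ := by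
    have := h1.1
    by_contra hcon
    exact absurd this (not_lt.2 (div_nonpos_of_nonneg_of_nonpos hδ.le (not_lt.1 hcon)))
  have p2 : 0 < ρ - c * δ := by
    have := h2.1
    by_contra hcon
    exact absurd this (not_lt.2 (div_nonpos_of_nonneg_of_nonpos hδ.le (not_lt.1 hcon)))
  have q1 := integral_comp_projective (α := α) hρ hc hδ p1 h1.2.le hFc1
  have q2 := integral_comp_projective (c := -c) (α := α) hρ (by rwa [abs_neg]) hδ
    (by linarith) (by rw [neg_mul, ← sub_eq_add_neg]; exact h2.2.le) hFc2
  simp only [neg_mul, sub_neg_eq_add, ← sub_eq_add_neg] at q2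
  have bd : ∀ g : ℝ → ℝ, Measurable g → (∀ t, |g t| ≤ B) →
      IntegrableOn (fun t => (g t - f 0) * t ^ (-1 - α)) (Ioi δ) := fun g hg hgB =>
    integrableOn_Ioi_mul_rpow_of_bounded (K := 2 * B) hδ hα
      (Measurable.aestronglyMeasurable (by fun_prop)) fun t _ => by
        have h1 := abs_le.1 (hgB t)
        have h3 := abs_le.1 (hfB 0)
        rw [abs_le]
        constructor <;> linarith [h1.1, h1.2, h3.1, h3.2]
  have b1 := bd f hfm hfB
  have b2 := bd (fun t => f (-t)) (by fun_prop) fun t => hfB (-t)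
  have split : ∀ g : ℝ → ℝ, ∀ s, δ < s → IntegrableOn g (Ioi δ) →
      ∫ t in Ioi δ, g t = (∫ t in δ..s, g t) + ∫ t in Ioi s, g t := by
    intro g s hs hg
    rw [intervalIntegral.integral_of_le hs.le, ← setIntegral_union (Ioc_disjoint_Ioi le_rfl)
      measurableSet_Ioi (hg.mono_set Ioc_subset_Ioi_self) (hg.mono_set (Ioi_subset_Ioi hs.le)),
      Ioc_union_Ioi_eq_Ioi hs.le]
  have e1 : ∫ t in δ..(ρ * a / (1 - c * a)), (f t - f 0) * t ^ (-1 - α) =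
      ∫ t in δ..(ρ * a / (1 - c * a)), F (t / (ρ + c * t)) * t ^ (-1 - α) := by
    refine intervalIntegral.integral_congr fun t ht => ?_
    rw [uIcc_of_le h4.2.le] at ht
    simp only [hfF t (by linarith [ht.1]) ht.2]
  have e2 : ∫ t in δ..(ρ * a / (1 + c * a)), (f (-t) - f 0) * t ^ (-1 - α) =
      ∫ t in δ..(ρ * a / (1 + c * a)), F (-(t / (ρ - c * t))) * t ^ (-1 - α) := by
    refine intervalIntegral.integral_congr fun t ht => ?_
    rw [uIcc_of_le h5.2.le] at ht
    simp only [hfF (-t) (by linarith [ht.2]) (by linarith [ht.1]), mul_neg, ← sub_eq_add_neg,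
      neg_div]
  have e0 : ∫ t in Ioi δ, (f t + f (-t) - 2 * f 0) * t ^ (-1 - α) =
      (∫ t in Ioi δ, (f t - f 0) * t ^ (-1 - α)) +
        ∫ t in Ioi δ, (f (-t) - f 0) * t ^ (-1 - α) := by
    rw [← integral_add b1 b2]
    congr 1; ext t; ring
  rw [e0, split _ _ h4.2 b1, split _ _ h5.2 b2, e1, e2, q1, q2]
  ring

theorem integral_Ioi_one_sub_rpow_mul_rpow {p : ℝ} (hp : 0 < p) (hp1 : p < 1) :
    IntegrableOn (fun y : ℝ => (1 - (1 + y ^ 2) ^ (p - 1)) * y ^ (-1 - 2 * p)) (Ioi 0) ∧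
    ∫ y in Ioi (0 : ℝ), (1 - (1 + y ^ 2) ^ (p - 1)) * y ^ (-1 - 2 * p) = 1 / (2 * p) := by
  set G : ℝ → ℝ := fun y => 1 / (2 * p) * (y ^ (-(2 * p)) * ((1 + y ^ 2) ^ p - 1)) with hG
  have hder : ∀ y ∈ Ioi (0 : ℝ),
      HasDerivAt G ((1 - (1 + y ^ 2) ^ (p - 1)) * y ^ (-1 - 2 * p)) y := by
    intro y hy
    have hy' : 0 < y := hy
    have h1 : 0 < 1 + y ^ 2 := by positivity
    have d1 : HasDerivAt (fun y : ℝ => y ^ (-(2 * p))) (-(2 * p) * y ^ (-(2 * p) - 1)) y :=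
      Real.hasDerivAt_rpow_const (Or.inl hy'.ne')
    have d2 : HasDerivAt (fun y : ℝ => (1 + y ^ 2) ^ p - 1)
        (2 * y * p * (1 + y ^ 2) ^ (p - 1)) y := by
      have := ((hasDerivAt_pow 2 y).const_add 1)
      simpa using (this.rpow_const (p := p) (Or.inl h1.ne')).sub_const 1
    refine ((d1.fun_mul d2).const_mul (1 / (2 * p))).congr_deriv ?_
    have e1 : (1 + y ^ 2) ^ p = (1 + y ^ 2) ^ (p - 1) * (1 + y ^ 2) := by
      rw [← Real.rpow_add_one h1.ne']; congr 1; ring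
    have e2 : y ^ (-(2 * p)) = y ^ (-1 - 2 * p) * y := by
      rw [← Real.rpow_add_one hy'.ne']; congr 1; ring
    rw [e1, e2, show -(2 * p) - 1 = -1 - 2 * p by ring]
    field_simp; ring
  have hnn : ∀ y ∈ Ioi (0 : ℝ), 0 ≤ (1 - (1 + y ^ 2) ^ (p - 1)) * y ^ (-1 - 2 * p) := by
    intro y hy
    have hy' : 0 < y := hy
    have : (1 + y ^ 2) ^ (p - 1) ≤ 1 :=
      Real.rpow_le_one_of_one_le_of_nonpos (by nlinarith) (by linarith)
    exact mul_nonneg (by linarith) (by positivity)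
  have hG0 : G 0 = 0 := by simp [hG]
  have hcont : ContinuousWithinAt G (Ici 0) 0 := by
    rw [← continuousWithinAt_Ioi_iff_Ici]
    have hlim : Tendsto (fun y : ℝ => 1 / 2 * y ^ (2 - 2 * p)) (nhdsWithin 0 (Ioi 0)) (nhds 0) := by
      have : Tendsto (fun δ : ℝ => δ ^ (2 - 2 * p)) (nhds 0) (nhds (0 ^ (2 - 2 * p))) :=
        (Real.continuousAt_rpow_const _ _ (Or.inr (by linarith))).tendsto
      rw [Real.zero_rpow (by linarith)] at this
      have h := (this.mono_left (nhdsWithin_le_nhds (s := Ioi 0))).const_mul (1 / 2)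
      rwa [mul_zero] at h
    rw [ContinuousWithinAt, hG0]
    refine squeeze_zero_norm' ?_ hlim
    filter_upwards [self_mem_nhdsWithin] with y hy
    have hy' : 0 < y := hy
    have h1 : (1 + y ^ 2) ^ p ≤ 1 + p * y ^ 2 :=
      rpow_one_add_le_one_add_mul_self (by nlinarith) hp.le hp1.le
    have h2 : 1 ≤ (1 + y ^ 2) ^ p := Real.one_le_rpow (by nlinarith) hp.le
    have e : y ^ (2 - 2 * p) = y ^ (-(2 * p)) * y ^ 2 := by
      rw [← Real.rpow_natCast, ← Real.rpow_add hy']; congr 1; push_cast; ring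
    have h3 : 0 ≤ y ^ (-(2 * p)) := by positivity
    have hGn : 0 ≤ G y := mul_nonneg (by positivity) (mul_nonneg h3 (by linarith))
    rw [Real.norm_of_nonneg hGn]
    calc G y ≤ 1 / (2 * p) * (y ^ (-(2 * p)) * (p * y ^ 2)) := by
          simp only [hG]; gcongr; linarith
      _ = _ := by rw [e]; field_simp
  have htop : Tendsto G atTop (nhds (1 / (2 * p))) := by
    have h1 : Tendsto (fun y : ℝ => y ^ (-(2 * p))) atTop (nhds 0) :=
      tendsto_rpow_neg_atTop (by linarith)
    have h2 : Tendsto (fun y : ℝ => (y ^ (-(2 : ℝ)) + 1) ^ p) atTop (nhds 1) := by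
      have := ((tendsto_rpow_neg_atTop (y := 2) (by norm_num)).add_const 1).rpow_const (p := p)
        (Or.inr hp.le)
      simpa using this
    have h3 := (h2.sub h1).const_mul (1 / (2 * p))
    rw [sub_zero, mul_one] at h3
    refine h3.congr' ?_
    filter_upwards [eventually_gt_atTop 0] with y hy
    simp only [hG]
    have : y ^ (-(2 : ℝ)) + 1 = y ^ (-(2 : ℝ)) * (1 + y ^ 2) := by
      rw [mul_add, mul_one, ← Real.rpow_natCast, ← Real.rpow_add hy]; simp
    rw [this, Real.mul_rpow (by positivity) (by positivity), ← Real.rpow_mul hy.le,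
      show -(2 : ℝ) * p = -(2 * p) by ring]
    ring
  refine ⟨integrableOn_Ioi_deriv_of_nonneg hcont hder hnn htop, ?_⟩
  rw [integral_Ioi_of_hasDerivAt_of_nonneg hcont hder hnn htop, hG0, sub_zero]

theorem integral_Ioc_one_sub_sq_rpow {p x : ℝ} (hp : 0 < p) (hp1 : p < 1) (hx : x ^ 2 < 1) :
    ∫ z in Ioc (0 : ℝ) 1, (2 * (1 - z ^ 2) ^ p / (1 - x ^ 2 * z ^ 2) - 2) * z ^ (-1 - 2 * p) =
      -(1 - x ^ 2) ^ p * (Gamma p * Gamma (1 - p)) + 1 / p := by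
  have hc : 0 < 1 - x ^ 2 := by linarith
  obtain ⟨i1, v1⟩ := integral_Ioi_inv_sub_one_mul_rpow hp hp1 hc
  obtain ⟨i2, v2⟩ := integral_Ioi_one_sub_rpow_mul_rpow hp hp1
  have himg : (fun y : ℝ => y / √(1 + y ^ 2)) '' Ioi 0 = Ioo 0 1 := by
    ext z
    constructor
    · rintro ⟨y, hy, rfl⟩
      have hy' : 0 < y := hy
      refine ⟨by positivity, ?_⟩
      simp only
      rw [div_lt_one (by positivity)]
      exact Real.lt_sqrt_of_sq_lt (by linarith)
    · rintro ⟨h1, h2⟩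
      have h3 : 0 < 1 - z ^ 2 := by nlinarith
      refine ⟨z / √(1 - z ^ 2), by simp only [mem_Ioi]; positivity, ?_⟩
      have h4 : 1 + (z / √(1 - z ^ 2)) ^ 2 = (1 - z ^ 2)⁻¹ := by
        rw [div_pow, Real.sq_sqrt h3.le]; field_simp; ring
      simp only [h4, Real.sqrt_inv]
      have : √(1 - z ^ 2) ≠ 0 := (Real.sqrt_pos.2 h3).ne'
      field_simp
  have hinj : InjOn (fun y : ℝ => y / √(1 + y ^ 2)) (Ioi 0) := by
    intro a ha b hb hab
    have ha' : 0 < a := ha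
    have hb' : 0 < b := hb
    have h := congrArg (fun t : ℝ => t ^ 2) hab
    simp only [div_pow] at h
    rw [Real.sq_sqrt (by positivity), Real.sq_sqrt (by positivity),
      div_eq_div_iff (by positivity) (by positivity)] at h
    exact (pow_left_inj₀ ha'.le hb'.le two_ne_zero).1 (by linarith)
  have hd : ∀ y ∈ Ioi (0 : ℝ), HasDerivWithinAt (fun y : ℝ => y / √(1 + y ^ 2))
      ((1 + y ^ 2)⁻¹ * (√(1 + y ^ 2))⁻¹) (Ioi 0) y := by
    intro y hy
    have h0 : (0 : ℝ) < 1 + y ^ 2 := by positivity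
    have h1 := (((hasDerivAt_pow 2 y).const_add 1).sqrt h0.ne')
    have h2 := ((hasDerivAt_id y).fun_div h1 (Real.sqrt_pos.2 h0).ne')
    refine (h2.congr_deriv ?_).hasDerivWithinAt
    have h3 : √(1 + y ^ 2) ^ 2 = 1 + y ^ 2 := Real.sq_sqrt h0.le
    have h4 : √(1 + y ^ 2) ≠ 0 := (Real.sqrt_pos.2 h0).ne'
    simp only [id, h3]
    field_simp
    rw [h3]; push_cast; ring
  have key := integral_image_eq_integral_abs_deriv_smul measurableSet_Ioi hd hinj
    (fun z => (2 * (1 - z ^ 2) ^ p / (1 - x ^ 2 * z ^ 2) - 2) * z ^ (-1 - 2 * p))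
  rw [himg] at key
  rw [integral_Ioc_eq_integral_Ioo, key]
  have : ∀ y ∈ Ioi (0 : ℝ), |(1 + y ^ 2)⁻¹ * (√(1 + y ^ 2))⁻¹| •
      ((2 * (1 - (y / √(1 + y ^ 2)) ^ 2) ^ p / (1 - x ^ 2 * (y / √(1 + y ^ 2)) ^ 2) - 2) *
        (y / √(1 + y ^ 2)) ^ (-1 - 2 * p)) =
      2 * (((1 + (1 - x ^ 2) * y ^ 2)⁻¹ - 1) * y ^ (-1 - 2 * p)) +
      2 * ((1 - (1 + y ^ 2) ^ (p - 1)) * y ^ (-1 - 2 * p)) := by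
    intro y hy
    have hy' : 0 < y := hy
    have h0 : (0 : ℝ) < 1 + y ^ 2 := by positivity
    have h5 : 0 < 1 + (1 - x ^ 2) * y ^ 2 := by positivity
    rw [abs_of_pos (by positivity), smul_eq_mul, div_pow, Real.sq_sqrt h0.le,
      Real.div_rpow hy'.le (Real.sqrt_nonneg _)]
    have e1 : 1 - y ^ 2 / (1 + y ^ 2) = (1 + y ^ 2)⁻¹ := by field_simp; ring
    have e2 : 1 - x ^ 2 * (y ^ 2 / (1 + y ^ 2)) = (1 + (1 - x ^ 2) * y ^ 2) / (1 + y ^ 2) := by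
      field_simp; ring
    have e3 : (1 + y ^ 2)⁻¹ * (√(1 + y ^ 2))⁻¹ / √(1 + y ^ 2) ^ (-1 - 2 * p) =
        (1 + y ^ 2) ^ (p - 1) := by
      rw [Real.sqrt_eq_rpow, ← Real.rpow_mul h0.le, div_eq_mul_inv, ← Real.rpow_neg h0.le,
        ← Real.rpow_neg h0.le, ← Real.rpow_neg_one, ← Real.rpow_add h0, ← Real.rpow_add h0]
      congr 1; ring
    have e4 : ((1 + y ^ 2)⁻¹) ^ p * (1 + y ^ 2) ^ (p - 1) = (1 + y ^ 2)⁻¹ := by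
      rw [Real.inv_rpow h0.le, ← Real.rpow_neg h0.le, ← Real.rpow_add h0, ← Real.rpow_neg_one]
      congr 1; ring
    rw [e1, e2]
    generalize hw : ((1 + y ^ 2)⁻¹) ^ p = w at *
    generalize hv : (1 + y ^ 2) ^ (p - 1) = v at *
    calc _ = (2 * w / ((1 + (1 - x ^ 2) * y ^ 2) / (1 + y ^ 2)) - 2) * y ^ (-1 - 2 * p) *
          ((1 + y ^ 2)⁻¹ * (√(1 + y ^ 2))⁻¹ / √(1 + y ^ 2) ^ (-1 - 2 * p)) := by ring
      _ = 2 * (w * v) * (1 + y ^ 2) * (1 + (1 - x ^ 2) * y ^ 2)⁻¹ * y ^ (-1 - 2 * p)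
          - 2 * v * y ^ (-1 - 2 * p) := by
          rw [e3, div_div_eq_mul_div]; ring
      _ = _ := by
          rw [e4]
          have : (1 + y ^ 2)⁻¹ * (1 + y ^ 2) = 1 := inv_mul_cancel₀ h0.ne'
          linear_combination 2 * (1 + (1 - x ^ 2) * y ^ 2)⁻¹ * y ^ (-1 - 2 * p) * this
  rw [setIntegral_congr_fun measurableSet_Ioi this,
    integral_add (i1.const_mul 2) (i2.const_mul 2), integral_const_mul, integral_const_mul, v1, v2]
  field_simp

theorem exists_abs_symm_sub_le {φ : ℝ → ℝ} {a : ℝ} (hφ : ContinuousOn φ (Icc (-a) a))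
    (h2 : ContDiffAt ℝ 2 φ 0) :
    ∃ K : ℝ, ∀ τ ∈ Icc (-a) a, |φ τ + φ (-τ) - 2 * φ 0| ≤ K * τ ^ 2 := by
  obtain ⟨K, ℓ, h⟩ := exists_abs_sub_linear_le (G := fun τ => φ τ - φ 0) (a := a)
    (hφ.sub continuousOn_const) (h2.sub contDiffAt_const) (by simp)
  refine ⟨2 * K, fun τ hτ => ?_⟩
  have h3 := abs_le.1 (h τ hτ)
  have h4 := abs_le.1 (h (-τ) ⟨by linarith [hτ.2], by linarith [hτ.1]⟩)
  rw [neg_sq] at h4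
  rw [abs_le]
  constructor <;> linarith [h3.1, h3.2, h4.1, h4.2]

theorem integral_Ioc_one_add_rpow_symm {p x : ℝ} (hp : 0 < p) (hp1 : p < 1) (hx : |x| < 1) :
    IntegrableOn (fun z : ℝ => ((1 + x * z) ^ (2 * p - 1) + (1 - x * z) ^ (2 * p - 1) - 2) *
      z ^ (-1 - 2 * p)) (Ioc 0 1) ∧
    ∫ z in Ioc (0 : ℝ) 1, ((1 + x * z) ^ (2 * p - 1) + (1 - x * z) ^ (2 * p - 1) - 2) *
      z ^ (-1 - 2 * p) = -(1 / (2 * p)) * ((1 + x) ^ (2 * p) + (1 - x) ^ (2 * p) - 2) := by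
  have hpos : ∀ z ∈ Icc (-1 : ℝ) 1, 0 < 1 + x * z := by
    intro z hz
    have h1 : |x * z| < 1 := by
      rw [abs_mul]
      exact (mul_le_of_le_one_right (abs_nonneg x) (abs_le.2 hz)).trans_lt hx
    linarith [(abs_lt.1 h1).1]
  have hc : ∀ q : ℝ, ContinuousOn (fun z : ℝ => (1 + x * z) ^ q) (Icc (-1) 1) := fun q =>
    ContinuousOn.rpow_const (by fun_prop) fun z hz => Or.inl (hpos z hz).ne'
  have hbd : ∀ q : ℝ, ∃ K : ℝ, ∀ z ∈ Icc (-1 : ℝ) 1,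
      |(1 + x * z) ^ q + (1 - x * z) ^ q - 2| ≤ K * z ^ 2 := by
    intro q
    have h2 : ContDiffAt ℝ 2 (fun z : ℝ => (1 + x * z) ^ q) 0 :=
      ContDiffAt.rpow_const_of_ne (by fun_prop) (by simp)
    obtain ⟨K, hK⟩ := exists_abs_symm_sub_le (hc q) h2
    refine ⟨K, fun z hz => ?_⟩
    have := hK z hz
    simpa [← sub_eq_add_neg] using this
  obtain ⟨K, hK⟩ := hbd (2 * p - 1)
  have hcm : ContinuousOn (fun z : ℝ => (1 + x * z) ^ (2 * p - 1) + (1 - x * z) ^ (2 * p - 1) - 2)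
      (Icc (-1) 1) := by
    refine ((hc _).add ?_).sub continuousOn_const
    refine ContinuousOn.rpow_const (by fun_prop) fun z hz => Or.inl ?_
    have := hpos (-z) ⟨by linarith [hz.2], by linarith [hz.1]⟩
    rw [mul_neg, ← sub_eq_add_neg] at this
    exact this.ne'
  have hsub : Ioc (0 : ℝ) 1 ⊆ Icc (-1) 1 := fun z hz => ⟨by linarith [hz.1], hz.2⟩
  have hint := integrableOn_Ioc_mul_rpow_of_le_sq (α := 2 * p) (by linarith)
    ((hcm.mono hsub).aestronglyMeasurable measurableSet_Ioc) fun z hz => hK z (hsub hz)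
  refine ⟨hint, ?_⟩
  set G : ℝ → ℝ := fun z => -(1 / (2 * p)) *
    (z ^ (-(2 * p)) * ((1 + x * z) ^ (2 * p) + (1 - x * z) ^ (2 * p) - 2)) with hG
  have hder : ∀ z ∈ Ioo (0 : ℝ) 1, HasDerivAt G
      (((1 + x * z) ^ (2 * p - 1) + (1 - x * z) ^ (2 * p - 1) - 2) * z ^ (-1 - 2 * p)) z := by
    intro z hz
    have h1 : 0 < 1 + x * z := hpos z ⟨by linarith [hz.1], hz.2.le⟩
    have h2 : 0 < 1 - x * z := by
      have := hpos (-z) ⟨by linarith [hz.2], by linarith [hz.1]⟩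
      rwa [mul_neg, ← sub_eq_add_neg] at this
    have d0 : HasDerivAt (fun y : ℝ => y ^ (-(2 * p))) (-(2 * p) * z ^ (-(2 * p) - 1)) z :=
      Real.hasDerivAt_rpow_const (Or.inl hz.1.ne')
    have d1 : HasDerivAt (fun z : ℝ => (1 + x * z) ^ (2 * p))
        (x * (2 * p) * (1 + x * z) ^ (2 * p - 1)) z := by
      have : HasDerivAt (fun z : ℝ => 1 + x * z) x z := by
        simpa using ((hasDerivAt_id z).const_mul x).const_add 1
      exact this.rpow_const (Or.inl h1.ne')
    have d2 : HasDerivAt (fun z : ℝ => (1 - x * z) ^ (2 * p))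
        (-x * (2 * p) * (1 - x * z) ^ (2 * p - 1)) z := by
      have : HasDerivAt (fun z : ℝ => 1 - x * z) (-x) z := by
        simpa using ((hasDerivAt_id z).const_mul x).const_sub 1
      exact this.rpow_const (Or.inl h2.ne')
    refine ((d0.fun_mul ((d1.fun_add d2).sub_const 2)).const_mul (-(1 / (2 * p)))).congr_deriv ?_
    have e1 : (1 + x * z) ^ (2 * p) = (1 + x * z) ^ (2 * p - 1) * (1 + x * z) := by
      rw [← Real.rpow_add_one h1.ne']; congr 1; ring
    have e2 : (1 - x * z) ^ (2 * p) = (1 - x * z) ^ (2 * p - 1) * (1 - x * z) := by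
      rw [← Real.rpow_add_one h2.ne']; congr 1; ring
    have e3 : z ^ (-(2 * p)) = z ^ (-1 - 2 * p) * z := by
      rw [← Real.rpow_add_one hz.1.ne']; congr 1; ring
    rw [e1, e2, e3, show -(2 * p) - 1 = -1 - 2 * p by ring]
    field_simp; ring
  have hlim0 : Tendsto G (nhdsWithin 0 (Ioi 0)) (nhds 0) := by
    obtain ⟨K2, hK2⟩ := hbd (2 * p)
    have hlim : Tendsto (fun y : ℝ => (1 / (2 * p) * K2) * y ^ (2 - 2 * p))
        (nhdsWithin 0 (Ioi 0)) (nhds 0) := by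
      have : Tendsto (fun δ : ℝ => δ ^ (2 - 2 * p)) (nhds 0) (nhds (0 ^ (2 - 2 * p))) :=
        (Real.continuousAt_rpow_const _ _ (Or.inr (by linarith))).tendsto
      rw [Real.zero_rpow (by linarith)] at this
      have h := (this.mono_left (nhdsWithin_le_nhds (s := Ioi 0))).const_mul (1 / (2 * p) * K2)
      rwa [mul_zero] at h
    refine squeeze_zero_norm' ?_ hlim
    filter_upwards [Ioo_mem_nhdsGT one_pos] with y hy
    have hy' : 0 < y := hy.1
    have h1 := hK2 y ⟨by linarith, hy.2.le⟩
    have e : y ^ (2 - 2 * p) = y ^ (-(2 * p)) * y ^ 2 := by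
      rw [← Real.rpow_natCast, ← Real.rpow_add hy']; congr 1; push_cast; ring
    rw [hG, norm_mul, norm_mul, norm_neg, Real.norm_of_nonneg (by positivity : 0 ≤ 1 / (2 * p)),
      Real.norm_of_nonneg (by positivity : 0 ≤ y ^ (-(2 * p))), Real.norm_eq_abs]
    calc _ ≤ 1 / (2 * p) * (y ^ (-(2 * p)) * (K2 * y ^ 2)) := by gcongr
      _ = _ := by rw [e]; ring
  have hlim1 : Tendsto G (nhdsWithin 1 (Iio 1)) (nhds (G 1)) := by
    have h1 := hpos 1 (by simp)
    have h2 := hpos (-1) (by simp)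
    have : ContinuousAt G 1 := by
      simp only [hG]
      refine ContinuousAt.mul continuousAt_const (ContinuousAt.mul ?_ (ContinuousAt.sub
        (ContinuousAt.add ?_ ?_) continuousAt_const))
      · exact Real.continuousAt_rpow_const _ _ (Or.inl one_ne_zero)
      · exact ContinuousAt.rpow_const (by fun_prop) (Or.inl h1.ne')
      · refine ContinuousAt.rpow_const (by fun_prop) (Or.inl ?_)
        rw [mul_neg, ← sub_eq_add_neg] at h2
        exact h2.ne'
    exact this.tendsto.mono_left nhdsWithin_le_nhds
  have := intervalIntegral.integral_eq_sub_of_hasDerivAt_of_tendsto (a := 0) (b := 1) one_pos hder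
    ((intervalIntegrable_iff_integrableOn_Ioc_of_le zero_le_one).2 hint) hlim0 hlim1
  rw [intervalIntegral.integral_of_le zero_le_one] at this
  rw [this]
  simp [hG]

theorem integral_second_diff_one_sub_sq_rpow {p x : ℝ} (hp : 0 < p) (hp1 : p < 1)
    (hx : |x| < 1) :
    IntegrableOn (fun t : ℝ => ((max (1 - (x + t) ^ 2) 0) ^ p + (max (1 - (x - t) ^ 2) 0) ^ p -
      2 * (1 - x ^ 2) ^ p) * t ^ (-1 - 2 * p)) (Ioi 0) ∧
    ∫ t in Ioi (0 : ℝ), ((max (1 - (x + t) ^ 2) 0) ^ p + (max (1 - (x - t) ^ 2) 0) ^ p -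
      2 * (1 - x ^ 2) ^ p) * t ^ (-1 - 2 * p) = -(Gamma p * Gamma (1 - p)) := by
  obtain ⟨hx1, hx2⟩ := abs_lt.1 hx
  have hm : 0 < 1 - x := by linarith
  have hpl : 0 < 1 + x := by linarith
  set ρ := 1 - x ^ 2 with hρdef
  have hρeq : ρ = (1 - x) * (1 + x) := by rw [hρdef]; ring
  have hρ : 0 < ρ := by rw [hρeq]; positivity
  set f : ℝ → ℝ := fun t => (max (1 - (x + t) ^ 2) 0) ^ p with hf
  set F : ℝ → ℝ := fun z => ρ ^ p * ((1 - z ^ 2) ^ p * (1 + x * z) ^ (-(2 * p)) - 1) with hF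
  have hpos : ∀ z ∈ Icc (-1 : ℝ) 1, 0 < 1 + x * z := by
    intro z hz
    have h1 : |x * z| < 1 := by
      rw [abs_mul]
      exact (mul_le_of_le_one_right (abs_nonneg x) (abs_le.2 hz)).trans_lt hx
    linarith [(abs_lt.1 h1).1]
  have hf0 : f 0 = ρ ^ p := by
    simp only [hf, add_zero]
    rw [max_eq_left hρ.le]
  have tp : ρ * 1 / (1 - -x * 1) = 1 - x := by
    have : 1 - -x * 1 = 1 + x := by ring
    rw [hρeq, this]; field_simp
  have tm : ρ * 1 / (1 + -x * 1) = 1 + x := by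
    have : 1 + -x * 1 = 1 - x := by ring
    rw [hρeq, this]; field_simp
  have main := integral_second_diff_projective (f := f) (F := F) (α := 2 * p) (ρ := ρ) (c := -x)
    (a := 1) (B := 1) (by linarith) (by linarith) hρ one_pos (by simpa using hx)
    (by fun_prop) ?_ ?_ ?_ ?_ ?_
  · obtain ⟨i1, i2, v⟩ := main
    have hneg : ∀ t, f (-t) = (max (1 - (x - t) ^ 2) 0) ^ p := fun t => by
      simp only [hf, sub_eq_add_neg]
    simp only [hneg, hf0] at i1 v
    simp only [hf] at i1 v
    refine ⟨i1, ?_⟩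
    rw [v, tp, tm]
    have o1 : ∫ t in Ioi (1 - x), ((max (1 - (x + t) ^ 2) 0) ^ p - ρ ^ p) * t ^ (-1 - 2 * p) =
        -ρ ^ p * ((1 - x) ^ (-(2 * p)) / (2 * p)) := by
      rw [← integral_Ioi_rpow_neg_one_sub hm (by linarith), ← integral_const_mul]
      refine setIntegral_congr_fun measurableSet_Ioi fun t ht => ?_
      have ht' : 1 - x < t := ht
      rw [max_eq_right (by nlinarith), Real.zero_rpow hp.ne']
      ring
    have o2 : ∫ t in Ioi (1 + x), ((max (1 - (x - t) ^ 2) 0) ^ p - ρ ^ p) * t ^ (-1 - 2 * p) =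
        -ρ ^ p * ((1 + x) ^ (-(2 * p)) / (2 * p)) := by
      rw [← integral_Ioi_rpow_neg_one_sub hpl (by linarith), ← integral_const_mul]
      refine setIntegral_congr_fun measurableSet_Ioi fun t ht => ?_
      have ht' : 1 + x < t := ht
      rw [max_eq_right (by nlinarith), Real.zero_rpow hp.ne']
      ring
    obtain ⟨i5, v5⟩ := integral_Ioc_one_add_rpow_symm hp hp1 hx
    have v4 := integral_Ioc_one_sub_sq_rpow hp hp1 (by nlinarith : x ^ 2 < 1)
    have heq : ∀ z ∈ Ioc (0 : ℝ) 1, (F z * (1 - -x * z) ^ (2 * p - 1) +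
        F (-z) * (1 + -x * z) ^ (2 * p - 1)) * z ^ (-1 - 2 * p) =
        ρ ^ p * ((2 * (1 - z ^ 2) ^ p / (1 - x ^ 2 * z ^ 2) - 2) * z ^ (-1 - 2 * p)) -
        ρ ^ p * (((1 + x * z) ^ (2 * p - 1) + (1 - x * z) ^ (2 * p - 1) - 2) *
          z ^ (-1 - 2 * p)) := by
      intro z hz
      have h1 : 0 < 1 + x * z := hpos z ⟨by linarith [hz.1], hz.2⟩
      have h2 : 0 < 1 - x * z := by
        have := hpos (-z) ⟨by linarith [hz.2], by linarith [hz.1]⟩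
        rwa [mul_neg, ← sub_eq_add_neg] at this
      have e1 : (1 + x * z) ^ (-(2 * p)) * (1 + x * z) ^ (2 * p - 1) = (1 + x * z)⁻¹ := by
        rw [← Real.rpow_add h1, ← Real.rpow_neg_one]; congr 1; ring
      have e2 : (1 - x * z) ^ (-(2 * p)) * (1 - x * z) ^ (2 * p - 1) = (1 - x * z)⁻¹ := by
        rw [← Real.rpow_add h2, ← Real.rpow_neg_one]; congr 1; ring
      have e3 : (1 + x * z)⁻¹ + (1 - x * z)⁻¹ = 2 / (1 - x ^ 2 * z ^ 2) := by
        have : 1 - x ^ 2 * z ^ 2 = (1 + x * z) * (1 - x * z) := by ring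
        rw [this, inv_add_inv h1.ne' h2.ne']
        congr 1; ring
      simp only [hF, neg_mul, sub_neg_eq_add, mul_neg, neg_sq, ← sub_eq_add_neg]
      linear_combination ρ ^ p * (1 - z ^ 2) ^ p * z ^ (-1 - 2 * p) * (e1 + e2 + e3)
    have i4 : IntegrableOn (fun z : ℝ => (2 * (1 - z ^ 2) ^ p / (1 - x ^ 2 * z ^ 2) - 2) *
        z ^ (-1 - 2 * p)) (Ioc 0 1) := by
      have h := (integrableOn_congr_fun heq measurableSet_Ioc).1 i2
      have h2 := (h.add (i5.const_mul (ρ ^ p))).const_mul (ρ ^ p)⁻¹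
      refine h2.congr (.of_forall fun z => ?_)
      have : ρ ^ p ≠ 0 := (by positivity : 0 < ρ ^ p).ne'
      simp only [Pi.add_apply]
      field_simp; ring
    rw [o1, o2, setIntegral_congr_fun measurableSet_Ioc heq,
      integral_sub (i4.const_mul _) (i5.const_mul _), integral_const_mul, integral_const_mul,
      v4, v5]
    have r1 : ρ ^ (-(2 * p)) * ρ ^ p * ρ ^ p = 1 := by
      rw [← Real.rpow_add hρ, ← Real.rpow_add hρ, ← Real.rpow_zero ρ]; congr 1; ring
    have r2 : ρ ^ p * ρ ^ p = (1 - x) ^ (2 * p) * (1 + x) ^ (2 * p) := by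
      rw [← Real.mul_rpow hm.le hpl.le, ← hρeq, ← Real.rpow_add hρ]; congr 1; ring
    rw [Real.rpow_neg hm.le, Real.rpow_neg hpl.le]
    rw [Real.rpow_neg hρ.le] at r1 ⊢
    have p1 : 0 < (1 - x) ^ (2 * p) := by positivity
    have p2 : 0 < (1 + x) ^ (2 * p) := by positivity
    have p3 : 0 < ρ ^ p := by positivity
    have r3 : ρ ^ (2 * p) = ρ ^ p * ρ ^ p := by rw [← Real.rpow_add hρ]; congr 1; ring
    rw [r3] at r1 ⊢
    generalize (1 - x) ^ (2 * p) = u at *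
    generalize (1 + x) ^ (2 * p) = w at *
    generalize ρ ^ p = s at *
    field_simp
    rw [show s ^ 2 = u * w by rw [← r2]; ring]
    ring
  · intro t
    have h0 : 0 ≤ max (1 - (x + t) ^ 2) 0 := le_max_right _ _
    simp only [hf]
    rw [abs_of_nonneg (by positivity)]
    exact Real.rpow_le_one h0 (max_le (by nlinarith [sq_nonneg (x + t)]) zero_le_one) hp.le
  · refine continuousOn_const.mul (((ContinuousOn.rpow_const (by fun_prop)
      fun z hz => Or.inr hp.le).mul ?_).sub continuousOn_const)
    exact ContinuousOn.rpow_const (by fun_prop) fun z hz => Or.inl (hpos z hz).ne'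
  · refine contDiffAt_const.mul (ContDiffAt.sub (ContDiffAt.mul ?_ ?_) contDiffAt_const)
    · exact ContDiffAt.rpow_const_of_ne (by fun_prop) (by simp)
    · exact ContDiffAt.rpow_const_of_ne (by fun_prop) (by simp)
  · simp [hF]
  · intro t h1 h2
    rw [tp] at h2
    rw [tm] at h1
    have hq : 0 < ρ + -x * t := by
      have : ρ + -x * t = 1 - x * (x + t) := by rw [hρdef]; ring
      have h3 : |x * (x + t)| < 1 := by
        rw [abs_mul]
        refine (mul_le_of_le_one_right (abs_nonneg x) (abs_le.2 ⟨by linarith, by linarith⟩)).trans_lt hx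
      linarith [(abs_lt.1 h3).2]
    have hy : 0 ≤ 1 - (x + t) ^ 2 := by nlinarith
    rw [hf0]
    simp only [hf, hF]
    rw [max_eq_left hy]
    have e1 : 1 + x * (t / (ρ + -x * t)) = ρ / (ρ + -x * t) := by
      rw [eq_div_iff hq.ne', add_mul, mul_assoc, div_mul_cancel₀ _ hq.ne']; ring
    have e2 : 1 - (t / (ρ + -x * t)) ^ 2 = ρ * (1 - (x + t) ^ 2) / (ρ + -x * t) ^ 2 := by
      rw [div_pow, eq_div_iff (pow_pos hq 2).ne', sub_mul, div_mul_cancel₀ _ (pow_pos hq 2).ne']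
      rw [hρdef]; ring
    rw [e1, e2, Real.div_rpow (by positivity) (by positivity), Real.mul_rpow hρ.le hy,
      Real.div_rpow hρ.le hq.le]
    have e3 : ((ρ + -x * t) ^ 2) ^ p = (ρ + -x * t) ^ (2 * p) := by
      rw [← Real.rpow_natCast, ← Real.rpow_mul hq.le]; norm_num
    rw [e3, Real.rpow_neg hρ.le, Real.rpow_neg hq.le]
    have r3 : ρ ^ (2 * p) = ρ ^ p * ρ ^ p := by rw [← Real.rpow_add hρ]; congr 1; ring
    rw [r3]
    have p3 : 0 < ρ ^ p := by positivity
    have p4 : 0 < (ρ + -x * t) ^ (2 * p) := by positivity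
    generalize (ρ + -x * t) ^ (2 * p) = u at *
    generalize ρ ^ p = s at *
    field_simp

theorem integral_second_diff_quadratic_rpow {p X R β κ : ℝ} (hp : 0 < p) (hp1 : p < 1)
    (hXR : X < R) (hκ : 0 ≤ κ) (hβ : β ^ 2 ≤ X * κ ^ 2) :
    IntegrableOn (fun t : ℝ => ((max (R - (X + 2 * β * t + κ ^ 2 * t ^ 2)) 0) ^ p +
      (max (R - (X - 2 * β * t + κ ^ 2 * t ^ 2)) 0) ^ p - 2 * (R - X) ^ p) * t ^ (-1 - 2 * p))
      (Ioi 0) ∧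
    ∫ t in Ioi (0 : ℝ), ((max (R - (X + 2 * β * t + κ ^ 2 * t ^ 2)) 0) ^ p +
      (max (R - (X - 2 * β * t + κ ^ 2 * t ^ 2)) 0) ^ p - 2 * (R - X) ^ p) * t ^ (-1 - 2 * p) =
      -(Gamma p * Gamma (1 - p)) * κ ^ (2 * p) := by
  rcases hκ.eq_or_lt with h0 | hκ
  · subst h0
    have hβ0 : β = 0 := by
      have : β ^ 2 ≤ 0 := by simpa using hβ
      exact pow_eq_zero_iff two_ne_zero |>.1 (le_antisymm this (sq_nonneg β))
    subst hβ0
    have e : ∀ t : ℝ, ((max (R - (X + 2 * 0 * t + 0 ^ 2 * t ^ 2)) 0) ^ p +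
      (max (R - (X - 2 * 0 * t + 0 ^ 2 * t ^ 2)) 0) ^ p - 2 * (R - X) ^ p) * t ^ (-1 - 2 * p) =
        0 := by
      intro t
      simp only [mul_zero, zero_mul, add_zero, sub_zero, ne_eq, OfNat.ofNat_ne_zero,
        not_false_eq_true, zero_pow]
      rw [max_eq_left (by linarith)]
      ring
    rw [funext e, Real.zero_rpow (by linarith : 2 * p ≠ 0), mul_zero]
    exact ⟨integrableOn_zero, by simp⟩
  set D := √((R - X) / κ ^ 2 + (β / κ ^ 2) ^ 2) with hD
  have hDarg : 0 < (R - X) / κ ^ 2 + (β / κ ^ 2) ^ 2 := by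
    have : 0 < (R - X) / κ ^ 2 := div_pos (by linarith) (by positivity)
    positivity
  have hDpos : 0 < D := Real.sqrt_pos.2 hDarg
  have hDsq : D ^ 2 = (R - X) / κ ^ 2 + (β / κ ^ 2) ^ 2 := Real.sq_sqrt hDarg.le
  have hDsq' : κ ^ 4 * D ^ 2 = κ ^ 2 * (R - X) + β ^ 2 := by
    rw [hDsq]; field_simp
  set x := β / κ ^ 2 / D with hx
  have hxD : κ ^ 2 * (x * D) = β := by rw [hx]; field_simp
  have hx1 : |x| < 1 := by
    rw [hx, abs_div, abs_of_pos hDpos, div_lt_one hDpos, hD, ← Real.sqrt_sq_eq_abs]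
    refine Real.sqrt_lt_sqrt (sq_nonneg _) ?_
    have : 0 < (R - X) / κ ^ 2 := div_pos (by linarith) (by positivity)
    linarith
  have hid : ∀ s : ℝ, R - (X + 2 * β * s + κ ^ 2 * s ^ 2) =
      (κ * D) ^ 2 * (1 - (x + D⁻¹ * s) ^ 2) := by
    intro s
    have h1 : D * (x + D⁻¹ * s) = x * D + s := by field_simp
    have h2 : (κ * D) ^ 2 * (1 - (x + D⁻¹ * s) ^ 2) =
        κ ^ 2 * D ^ 2 - κ ^ 2 * (D * (x + D⁻¹ * s)) ^ 2 := by ring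
    rw [h2, h1]
    have h3 : κ ^ 2 * (κ ^ 2 * D ^ 2 - κ ^ 2 * (x * D + s) ^ 2) =
        κ ^ 2 * (R - (X + 2 * β * s + κ ^ 2 * s ^ 2)) := by
      linear_combination hDsq' - (κ ^ 2 * (x * D) + β + 2 * κ ^ 2 * s) * hxD
    exact (mul_left_cancel₀ (by positivity) h3).symm
  have hmax : ∀ s : ℝ, (max (R - (X + 2 * β * s + κ ^ 2 * s ^ 2)) 0) ^ p =
      (κ * D) ^ (2 * p) * (max (1 - (x + D⁻¹ * s) ^ 2) 0) ^ p := by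
    intro s
    rw [hid, ← mul_zero ((κ * D) ^ 2), ← mul_max_of_nonneg _ _ (by positivity), mul_zero,
      Real.mul_rpow (by positivity) (le_max_right _ _), ← Real.rpow_natCast,
      ← Real.rpow_mul (by positivity)]
    norm_num
  have hx2 : 0 < 1 - x ^ 2 := by nlinarith [abs_lt.1 hx1]
  have hmax0 : (R - X) ^ p = (κ * D) ^ (2 * p) * (1 - x ^ 2) ^ p := by
    have := hmax 0
    simpa [max_eq_left hx2.le, max_eq_left (by linarith : (0 : ℝ) ≤ R - X)] using this
  obtain ⟨i, v⟩ := integral_second_diff_one_sub_sq_rpow hp hp1 hx1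
  set h : ℝ → ℝ := fun t => ((max (1 - (x + t) ^ 2) 0) ^ p + (max (1 - (x - t) ^ 2) 0) ^ p -
      2 * (1 - x ^ 2) ^ p) * t ^ (-1 - 2 * p) with hh
  have heq : ∀ t ∈ Ioi (0 : ℝ), ((max (R - (X + 2 * β * t + κ ^ 2 * t ^ 2)) 0) ^ p +
      (max (R - (X - 2 * β * t + κ ^ 2 * t ^ 2)) 0) ^ p - 2 * (R - X) ^ p) * t ^ (-1 - 2 * p) =
      ((κ * D) ^ (2 * p) * D ^ (-1 - 2 * p)) * h (D⁻¹ * t) := by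
    intro t ht
    have ht' : 0 < t := ht
    have h2 := hmax (-t)
    simp only [mul_neg, neg_sq, ← sub_eq_add_neg] at h2
    rw [hmax t, h2, hmax0, hh]
    simp only
    rw [Real.mul_rpow (by positivity) ht'.le, Real.inv_rpow hDpos.le]
    have : 0 < D ^ (-1 - 2 * p) := by positivity
    field_simp
  have hDi : 0 < D⁻¹ := by positivity
  constructor
  · rw [integrableOn_congr_fun heq measurableSet_Ioi]
    exact ((integrableOn_Ioi_comp_mul_left_iff h 0 hDi).2 (by simpa using i)).const_mul _
  · rw [setIntegral_congr_fun measurableSet_Ioi heq, integral_const_mul,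
      integral_comp_mul_left_Ioi h 0 hDi, mul_zero, v, smul_eq_mul, inv_inv,
      Real.mul_rpow hκ.le hDpos.le]
    have : D ^ (2 * p) * D ^ (-1 - 2 * p) * D = 1 := by
      rw [← Real.rpow_add hDpos, ← Real.rpow_add_one hDpos.ne', ← Real.rpow_zero D]
      congr 1; ring
    linear_combination -κ ^ (2 * p) * (Gamma p * Gamma (1 - p)) * this

theorem exists_uniform_second_diff_bound {E : Type*} [NormedAddCommGroup E] [NormedSpace ℝ E]
    {ψ : E → ℝ} {S : Set E} (hS : IsCompact S) (hconv : Convex ℝ S)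
    (hψ : ∀ z ∈ S, ContDiffAt ℝ 2 ψ z) :
    ∃ K : ℝ, 0 ≤ K ∧ (∀ z ∈ S, ∀ w, z + w ∈ S → |ψ (z + w) - ψ z| ≤ K * ‖w‖) ∧
      ∀ z ∈ S, ∀ w, z + w ∈ S → z - w ∈ S →
        |ψ (z + w) + ψ (z - w) - 2 * ψ z| ≤ K * ‖w‖ ^ 2 := by
  have hψ1 : ∀ z ∈ S, ContDiffAt ℝ 1 (fderiv ℝ ψ) z := fun z hz =>
    (hψ z hz).fderiv_right (by norm_num)
  have hd : ∀ z ∈ S, DifferentiableAt ℝ ψ z := fun z hz => (hψ z hz).differentiableAt (by simp)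
  have hd1 : ∀ z ∈ S, DifferentiableAt ℝ (fderiv ℝ ψ) z := fun z hz =>
    (hψ1 z hz).differentiableAt (by simp)
  have hc1 : ContinuousOn (fderiv ℝ ψ) S := fun z hz => (hψ1 z hz).continuousAt.continuousWithinAt
  have hc2 : ContinuousOn (fun z => ‖fderiv ℝ (fderiv ℝ ψ) z‖) S := fun z hz =>
    ((hψ1 z hz).fderiv_right (m := 0) (by norm_num)).continuousAt.norm.continuousWithinAt
  obtain ⟨K1, hK1⟩ := hS.exists_bound_of_continuousOn hc1
  obtain ⟨K2, hK2⟩ := hS.exists_bound_of_continuousOn hc2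
  have taylor : ∀ z ∈ S, ∀ w, z + w ∈ S →
      |ψ (z + w) - ψ z - fderiv ℝ ψ z w| ≤ |K2| * ‖w‖ ^ 2 := by
    intro z hz w hw
    have key := (hconv.inter (convex_closedBall z ‖w‖)).norm_image_sub_le_of_norm_hasFDerivWithin_le'
      (f := ψ) (f' := fderiv ℝ ψ) (C := |K2| * ‖w‖) (φ := fderiv ℝ ψ z) (x := z) (y := z + w)
      (fun y hy => (hd y hy.1).hasFDerivAt.hasFDerivWithinAt)
      (fun y hy => by
        have := hconv.norm_image_sub_le_of_norm_fderiv_le (𝕜 := ℝ) (C := |K2|) hd1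
          (fun y hy => ((norm_norm _).symm.le.trans (hK2 y hy)).trans (le_abs_self _)) hz hy.1
        refine this.trans (mul_le_mul_of_nonneg_left ?_ (abs_nonneg _))
        simpa [dist_eq_norm] using hy.2)
      ⟨hz, mem_closedBall_self (norm_nonneg _)⟩ ⟨hw, by simp⟩
    simp only [add_sub_cancel_left, Real.norm_eq_abs] at key
    linarith [key]
  refine ⟨max |K1| (2 * |K2|), by positivity, fun z hz w hw => ?_, fun z hz w hw hw' => ?_⟩
  · have := hconv.norm_image_sub_le_of_norm_fderiv_le (𝕜 := ℝ) (C := |K1|) hd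
      (fun y hy => (hK1 y hy).trans (le_abs_self _)) hz hw
    rw [add_sub_cancel_left, Real.norm_eq_abs] at this
    exact this.trans (mul_le_mul_of_nonneg_right (le_max_left _ _) (norm_nonneg _))
  · have h1 := abs_le.1 (taylor z hz w hw)
    have h2 := abs_le.1 (taylor z hz (-w) (by rwa [← sub_eq_add_neg]))
    rw [norm_neg, map_neg, ← sub_eq_add_neg] at h2
    have h3 : |ψ (z + w) + ψ (z - w) - 2 * ψ z| ≤ 2 * |K2| * ‖w‖ ^ 2 := by
      rw [abs_le]
      constructor <;> linarith [h1.1, h1.2, h2.1, h2.2]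
    exact h3.trans (mul_le_mul_of_nonneg_right (le_max_right _ _) (by positivity))

/-- The smooth factor in the projective coordinates of the cone, with `s = 1 / cos Θ`. -/
noncomputable def coneFactor (p s X : ℝ) : ℝ :=
  (2 / ((s + 1) * (√(1 + X) + 1) * (s + √(1 + X)))) ^ p

theorem coneFactor_pos {p s X : ℝ} (hs : 1 ≤ s) : 0 < coneFactor p s X := by
  unfold coneFactor
  have := Real.sqrt_nonneg (1 + X)
  positivity

theorem coneFactor_le_one {p s X : ℝ} (hp : 0 ≤ p) (hs : 1 ≤ s) : coneFactor p s X ≤ 1 := by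
  unfold coneFactor
  have := Real.sqrt_nonneg (1 + X)
  refine Real.rpow_le_one (by positivity) ?_ hp
  rw [div_le_one (by positivity)]
  have h1 : 2 * 1 ≤ (s + 1) * (√(1 + X) + 1) :=
    mul_le_mul (by linarith) (by linarith) (by linarith) (by linarith)
  nlinarith

theorem contDiffAt_coneFactor {E : Type*} [NormedAddCommGroup E] [NormedSpace ℝ E]
    {p : ℝ} {s X : E → ℝ} {z : E} (hs : ContDiffAt ℝ 2 s z) (hX : ContDiffAt ℝ 2 X z)
    (h1 : 1 ≤ s z) (h2 : 0 < 1 + X z) :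
    ContDiffAt ℝ 2 (fun z => coneFactor p (s z) (X z)) z := by
  unfold coneFactor
  have hS : 0 < √(1 + X z) := Real.sqrt_pos.2 h2
  have hS2 : ContDiffAt ℝ 2 (fun z => √(1 + X z)) z := (contDiffAt_const.add hX).sqrt h2.ne'
  refine ContDiffAt.rpow_const_of_ne (ContDiffAt.div contDiffAt_const ?_ ?_) ?_
  · fun_prop
  · positivity
  · positivity

/-- Uniform smoothness of the product of the smooth factors along a line. -/
theorem exists_bound_coneFactor_line (p q : ℝ) :
    ∃ K : ℝ, 0 ≤ K ∧ ∀ s ∈ Icc (1 : ℝ) 2, ∀ X ∈ Icc (0 : ℝ) 1, ∀ β ∈ Icc (-1 : ℝ) 1,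
      ∀ κ ∈ Icc (0 : ℝ) 2, ∀ c ∈ Icc (-1 : ℝ) 1, ∀ τ ∈ Icc (0 : ℝ) (1 / 4),
      |coneFactor p s (X + 2 * β * τ + κ ^ 2 * τ ^ 2) * (1 - c * τ) ^ q - coneFactor p s X|
        ≤ K * τ ∧
      |coneFactor p s (X - 2 * β * τ + κ ^ 2 * τ ^ 2) * (1 + c * τ) ^ q - coneFactor p s X|
        ≤ K * τ ∧
      |coneFactor p s (X + 2 * β * τ + κ ^ 2 * τ ^ 2) * (1 - c * τ) ^ q +
        coneFactor p s (X - 2 * β * τ + κ ^ 2 * τ ^ 2) * (1 + c * τ) ^ q -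
        2 * coneFactor p s X| ≤ K * τ ^ 2 ∧
      |(1 - c * τ) ^ q + (1 + c * τ) ^ q - 2| ≤ K * τ ^ 2 := by
  set S : Set (ℝ × ℝ × ℝ × ℝ × ℝ × ℝ) := Icc (1 : ℝ) 2 ×ˢ Icc (0 : ℝ) 1 ×ˢ Icc (-1 : ℝ) 1 ×ˢ
    Icc (0 : ℝ) 2 ×ˢ Icc (-1 : ℝ) 1 ×ˢ Icc (-(1 / 4) : ℝ) (1 / 4) with hS
  have hcomp : IsCompact S := isCompact_Icc.prod (isCompact_Icc.prod (isCompact_Icc.prod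
    (isCompact_Icc.prod (isCompact_Icc.prod isCompact_Icc))))
  have hconv : Convex ℝ S := (convex_Icc _ _).prod ((convex_Icc _ _).prod ((convex_Icc _ _).prod
    ((convex_Icc _ _).prod ((convex_Icc _ _).prod (convex_Icc _ _)))))
  have hlin : ∀ z ∈ S, 0 < 1 - z.2.2.2.2.1 * z.2.2.2.2.2 := by
    rintro ⟨s, X, β, κ, c, τ⟩ ⟨_, _, _, _, hc, hτ⟩
    simp only at hc hτ ⊢
    have : |c * τ| ≤ 1 * (1 / 4) := by
      rw [abs_mul]
      exact mul_le_mul (abs_le.2 hc) (abs_le.2 hτ) (abs_nonneg _) zero_le_one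
    linarith [(abs_le.1 this).2]
  obtain ⟨K1, hK1, hA, hB⟩ := exists_uniform_second_diff_bound hcomp hconv
    (ψ := fun z => coneFactor p z.1
      (z.2.1 + 2 * z.2.2.1 * z.2.2.2.2.2 + z.2.2.2.1 ^ 2 * z.2.2.2.2.2 ^ 2) *
      (1 - z.2.2.2.2.1 * z.2.2.2.2.2) ^ q) (by
    intro z hz
    have h1 := hlin z hz
    refine ContDiffAt.mul (contDiffAt_coneFactor (by fun_prop) (by fun_prop) hz.1.1 ?_)
      (ContDiffAt.rpow_const_of_ne (by fun_prop) h1.ne')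
    obtain ⟨s, X, β, κ, c, τ⟩ := z
    obtain ⟨_, hX, hβ, _, _, hτ⟩ := hz
    simp only at hX hβ hτ ⊢
    have : |β * τ| ≤ 1 * (1 / 4) := by
      rw [abs_mul]
      exact mul_le_mul (abs_le.2 hβ) (abs_le.2 hτ) (abs_nonneg _) zero_le_one
    have h4 : 0 ≤ κ ^ 2 * τ ^ 2 := by positivity
    linarith [(abs_le.1 this).1, hX.1])
  obtain ⟨K2, hK2, -, hD⟩ := exists_uniform_second_diff_bound hcomp hconv
    (ψ := fun z => (1 - z.2.2.2.2.1 * z.2.2.2.2.2) ^ q) (fun z hz =>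
      ContDiffAt.rpow_const_of_ne (by fun_prop) (hlin z hz).ne')
  refine ⟨max K1 K2, by positivity, fun s hs X hX β hβ κ hκ c hc τ hτ => ?_⟩
  have m0 : ∀ t ∈ Icc (-(1 / 4) : ℝ) (1 / 4), (s, X, β, κ, c, t) ∈ S := fun t ht =>
    ⟨hs, hX, hβ, hκ, hc, ht⟩
  have z0 := m0 0 (by norm_num)
  have zp := m0 τ ⟨by linarith [hτ.1], hτ.2⟩
  have zm := m0 (-τ) ⟨by linarith [hτ.2], by linarith [hτ.1]⟩
  set w : ℝ × ℝ × ℝ × ℝ × ℝ × ℝ := (0, 0, 0, 0, 0, τ) with hw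
  have hwn : ‖w‖ = τ := by simp [hw, Prod.norm_def, abs_of_nonneg hτ.1, hτ.1]
  have ep : (s, X, β, κ, c, 0) + w = (s, X, β, κ, c, τ) := by simp [hw]
  have em : (s, X, β, κ, c, 0) - w = (s, X, β, κ, c, -τ) := by simp [hw]
  have em' : (s, X, β, κ, c, 0) + -w = (s, X, β, κ, c, -τ) := by simp [hw]
  have a1 := hA _ z0 w (by rwa [ep])
  have a2 := hA _ z0 (-w) (by rwa [em'])
  have a3 := hB _ z0 w (by rwa [ep]) (by rwa [em])
  have a4 := hD _ z0 w (by rwa [ep]) (by rwa [em])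
  rw [norm_neg, em', hwn] at a2
  rw [ep, hwn] at a1
  rw [ep, em, hwn] at a3 a4
  simp only [mul_zero, add_zero, sub_zero, Real.one_rpow, mul_one, mul_neg, neg_sq,
    sub_neg_eq_add, ← sub_eq_add_neg, ne_eq, OfNat.ofNat_ne_zero, not_false_eq_true,
    zero_pow] at a1 a2 a3 a4
  have hm1 : K1 * τ ≤ max K1 K2 * τ := mul_le_mul_of_nonneg_right (le_max_left _ _) hτ.1
  have hm2 : K1 * τ ^ 2 ≤ max K1 K2 * τ ^ 2 :=
    mul_le_mul_of_nonneg_right (le_max_left _ _) (sq_nonneg _)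
  have hm3 : K2 * τ ^ 2 ≤ max K1 K2 * τ ^ 2 :=
    mul_le_mul_of_nonneg_right (le_max_right _ _) (sq_nonneg _)
  exact ⟨a1.trans hm1, a2.trans hm1, a3.trans hm2, a4.trans hm3⟩

theorem one_le_abs_log {ε : ℝ} (h0 : 0 < ε) (h1 : ε < 1 / 20) : 1 ≤ |Real.log ε| := by
  have h2 : Real.log ε ≤ -1 := by
    rw [← Real.log_exp (-1)]
    refine Real.log_le_log h0 ?_
    rw [Real.exp_neg]
    have := Real.exp_one_lt_d9
    have h3 : (3 : ℝ)⁻¹ ≤ (Real.exp 1)⁻¹ := inv_anti₀ (Real.exp_pos 1) (by linarith)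
    norm_num at h3 ⊢
    linarith
  rw [abs_of_neg (by linarith)]
  linarith

theorem le_omegaFn {α ε : ℝ} (h0 : 0 < ε) (h1 : ε < 1 / 20) : ε ≤ omegaFn α ε := by
  unfold omegaFn
  split_ifs with h h'
  · simpa using Real.rpow_le_rpow_of_exponent_ge h0 (by linarith) h.le
  · exact le_mul_of_one_le_right h0.le (one_le_abs_log h0 h1)
  · exact le_rfl

theorem rpow_le_omegaFn {α ε : ℝ} (h0 : 0 < ε) (h1 : ε < 1 / 20) : ε ^ α ≤ omegaFn α ε := by
  unfold omegaFn
  split_ifs with h h'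
  · exact le_rfl
  · subst h'
    simpa using le_mul_of_one_le_right h0.le (one_le_abs_log h0 h1)
  · simpa using Real.rpow_le_rpow_of_exponent_ge h0 (by linarith) (not_lt.1 h)

theorem exists_rpow_mul_integral_Ioc_rpow_le (α : ℝ) :
    ∃ C : ℝ, 0 ≤ C ∧ ∀ ε : ℝ, 0 < ε → ε < 1 / 20 →
      IntegrableOn (fun τ : ℝ => τ ^ (-α)) (Ioc ε (1 / 4)) ∧
      ε ^ α * ∫ τ in Ioc ε (1 / 4), τ ^ (-α) ≤ C * omegaFn α ε := by
  refine ⟨|1 - α|⁻¹ + 1, by positivity, fun ε h0 h1 => ?_⟩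
  have hle : ε ≤ 1 / 4 := by linarith
  have hnot : (0 : ℝ) ∉ uIcc ε (1 / 4) := by
    rw [uIcc_of_le hle]
    exact fun h => absurd h.1 (not_le.2 h0)
  constructor
  · rw [← intervalIntegrable_iff_integrableOn_Ioc_of_le hle]
    exact intervalIntegral.intervalIntegrable_rpow (Or.inr hnot)
  rw [← intervalIntegral.integral_of_le hle]
  rcases eq_or_ne α 1 with rfl | hne
  · have : ∀ τ : ℝ, τ ^ (-(1 : ℝ)) = τ⁻¹ := fun τ => Real.rpow_neg_one τ
    simp only [this]
    rw [integral_inv hnot]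
    have h2 : omegaFn 1 ε = ε * |Real.log ε| := by simp [omegaFn]
    have hlog : Real.log ε < 0 := Real.log_neg h0 (by linarith)
    have h4 : Real.log (1 / 4) ≤ 0 := Real.log_nonpos (by norm_num) (by norm_num)
    rw [h2, Real.log_div (by norm_num) h0.ne', Real.rpow_one, abs_of_neg hlog]
    simp only [sub_self, abs_zero, inv_zero, zero_add, one_mul]
    exact mul_le_mul_of_nonneg_left (by linarith) h0.le
  · rw [integral_rpow (Or.inr ⟨by contrapose! hne; linarith, hnot⟩)]
    have hne' : 1 - α ≠ 0 := sub_ne_zero.2 hne.symm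
    rcases lt_or_gt_of_ne hne with h | h
    · have hw : omegaFn α ε = ε ^ α := by simp [omegaFn, h]
      rw [hw, mul_comm]
      refine mul_le_mul_of_nonneg_right ?_ (Real.rpow_nonneg h0.le _)
      have h5 : (1 / 4 : ℝ) ^ (-α + 1) ≤ 1 :=
        Real.rpow_le_one (by norm_num) (by norm_num) (by linarith)
      have h6 : 0 ≤ ε ^ (-α + 1) := Real.rpow_nonneg h0.le _
      rw [div_eq_mul_inv, abs_of_pos (by linarith), show -α + 1 = 1 - α by ring] at *
      have h7 : 0 < (1 - α)⁻¹ := inv_pos.2 (by linarith)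
      nlinarith
    · have hw := le_omegaFn (α := α) h0 h1
      refine le_trans ?_ (mul_le_mul_of_nonneg_left hw (by positivity))
      have h5 : 0 ≤ (1 / 4 : ℝ) ^ (-α + 1) := Real.rpow_nonneg (by norm_num) _
      have h6 : ε ^ α * ε ^ (-α + 1) = ε := by
        rw [← Real.rpow_add h0]; simp
      have h7 : 0 < (α - 1)⁻¹ := inv_pos.2 (by linarith)
      rw [abs_of_neg (by linarith), show -(1 - α) = α - 1 by ring,
        show -α + 1 = -(α - 1) by ring, div_neg, ← neg_div, neg_sub, div_eq_mul_inv]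
      rw [show -α + 1 = -(α - 1) by ring] at h5 h6
      have h8 : 0 ≤ ε ^ α := Real.rpow_nonneg h0.le _
      calc ε ^ α * ((ε ^ (-(α - 1)) - (1 / 4) ^ (-(α - 1))) * (α - 1)⁻¹)
          = (α - 1)⁻¹ * ε - (α - 1)⁻¹ * (ε ^ α * (1 / 4) ^ (-(α - 1))) := by
            linear_combination (α - 1)⁻¹ * h6
        _ ≤ ((α - 1)⁻¹ + 1) * ε := by
            have : 0 ≤ (α - 1)⁻¹ * (ε ^ α * (1 / 4) ^ (-(α - 1))) := by positivity
            linarith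

/-- Integrals dominated by `ε ^ (α / 2) * τ ^ (-α / 2)` up to `ε` and by `ε ^ α * τ ^ (-α)`
afterwards are of order `omegaFn α ε`. -/
theorem exists_abs_integral_Ioc_le_omegaFn {α : ℝ} (hα2 : α < 2) :
    ∃ C : ℝ, 0 ≤ C ∧ ∀ (ε K : ℝ) (H : ℝ → ℝ), 0 < ε → ε < 1 / 20 → 0 ≤ K →
      IntegrableOn H (Ioc 0 (1 / 4)) →
      (∀ τ ∈ Ioc 0 ε, |H τ| ≤ K * (ε ^ (α / 2) * τ ^ (-(α / 2)))) →
      (∀ τ ∈ Ioc ε (1 / 4), |H τ| ≤ K * (ε ^ α * τ ^ (-α))) →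
      |∫ τ in Ioc 0 (1 / 4), H τ| ≤ K * C * omegaFn α ε := by
  obtain ⟨C1, hC1, hC⟩ := exists_rpow_mul_integral_Ioc_rpow_le α
  have hp : 0 < 1 - α / 2 := by linarith
  refine ⟨(1 - α / 2)⁻¹ + C1, by positivity, fun ε K H h0 h1 hK hH hA hB => ?_⟩
  obtain ⟨hI, hCε⟩ := hC ε h0 h1
  have hle : ε ≤ 1 / 4 := by linarith
  have hsplit : ∫ τ in Ioc 0 (1 / 4), H τ = (∫ τ in Ioc 0 ε, H τ) + ∫ τ in Ioc ε (1 / 4), H τ := by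
    rw [← Ioc_union_Ioc_eq_Ioc h0.le hle] at hH ⊢
    exact setIntegral_union (Ioc_disjoint_Ioc_of_le le_rfl) measurableSet_Ioc
      (hH.mono_set subset_union_left) (hH.mono_set subset_union_right)
  have hI1 : IntegrableOn (fun τ : ℝ => τ ^ (-(α / 2))) (Ioc 0 ε) := by
    rw [← intervalIntegrable_iff_integrableOn_Ioc_of_le h0.le]
    exact intervalIntegral.intervalIntegrable_rpow' (by linarith)
  have e1 : |∫ τ in Ioc 0 ε, H τ| ≤ K * ((1 - α / 2)⁻¹ * ε) := by
    have := norm_integral_le_of_norm_le (f := H) (μ := volume.restrict (Ioc 0 ε))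
      ((hI1.const_mul (ε ^ (α / 2))).const_mul K)
      ((ae_restrict_iff' measurableSet_Ioc).2 (ae_of_all _ fun τ hτ => hA τ hτ))
    rw [Real.norm_eq_abs, integral_const_mul, integral_const_mul,
      ← intervalIntegral.integral_of_le (f := fun τ : ℝ => τ ^ (-(α / 2))) h0.le,
      integral_rpow (Or.inl (by linarith)),
      Real.zero_rpow (by linarith), sub_zero, show -(α / 2) + 1 = 1 - α / 2 by ring,
      mul_div_assoc', ← Real.rpow_add h0, show α / 2 + (1 - α / 2) = 1 by ring,
      Real.rpow_one, div_eq_inv_mul] at this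
    exact this
  have e2 : |∫ τ in Ioc ε (1 / 4), H τ| ≤ K * (C1 * omegaFn α ε) := by
    have := norm_integral_le_of_norm_le (f := H) (μ := volume.restrict (Ioc ε (1 / 4)))
      ((hI.const_mul (ε ^ α)).const_mul K)
      ((ae_restrict_iff' measurableSet_Ioc).2 (ae_of_all _ fun τ hτ => hB τ hτ))
    rw [Real.norm_eq_abs, integral_const_mul, integral_const_mul] at this
    exact this.trans (mul_le_mul_of_nonneg_left hCε hK)
  have e3 : K * ((1 - α / 2)⁻¹ * ε) ≤ K * ((1 - α / 2)⁻¹ * omegaFn α ε) := by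
    gcongr
    exact le_omegaFn h0 h1
  rw [hsplit]
  calc _ ≤ _ := abs_add_le _ _
    _ ≤ K * ((1 - α / 2)⁻¹ * omegaFn α ε) + K * (C1 * omegaFn α ε) := add_le_add (e1.trans e3) e2
    _ = _ := by ring

theorem abs_max_rpow_sub_max_rpow_le {p a b : ℝ} (hp : 0 ≤ p) (hp1 : p ≤ 1) :
    |(max a 0) ^ p - (max b 0) ^ p| ≤ |a - b| ^ p := by
  have key : ∀ a b : ℝ, b ≤ a → |(max a 0) ^ p - (max b 0) ^ p| ≤ |a - b| ^ p := by
    intro a b h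
    have h1 : max b 0 ≤ max a 0 := max_le_max h le_rfl
    have h2 : (max b 0) ^ p ≤ (max a 0) ^ p := Real.rpow_le_rpow (le_max_right _ _) h1 hp
    rw [abs_of_nonneg (by linarith), abs_of_nonneg (by linarith)]
    have h3 : max a 0 ≤ max b 0 + (a - b) := by
      rcases le_total a 0 with h | h
      · rw [max_eq_right h]; linarith [le_max_right b 0]
      · rw [max_eq_left h]; linarith [le_max_left b 0]
    have h4 := (Real.rpow_le_rpow (le_max_right _ _) h3 hp).trans
      (Real.rpow_add_le_add_rpow (le_max_right b 0) (by linarith : 0 ≤ a - b) hp hp1)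
    linarith
  rcases le_total b a with h | h
  · exact key a b h
  · rw [abs_sub_comm, abs_sub_comm a b]; exact key b a h

theorem quadratic_nonneg_of_sq_le {X β κ τ : ℝ} (hX : 0 ≤ X) (hβ : β ^ 2 ≤ X * κ ^ 2) :
    0 ≤ X + 2 * β * τ + κ ^ 2 * τ ^ 2 := by
  rcases eq_or_ne κ 0 with rfl | hκ
  · have : β = 0 := by nlinarith [sq_nonneg β]
    subst this
    simpa using hX
  · have hκ2 : 0 < κ ^ 2 := by positivity
    have : 0 ≤ κ ^ 2 * (X + 2 * β * τ + κ ^ 2 * τ ^ 2) := by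
      nlinarith [sq_nonneg (κ ^ 2 * τ + β)]
    exact nonneg_of_mul_nonneg_right this hκ2

/-- Pointwise decomposition bound for the weighted symmetrized increment of a product. -/
theorem abs_symm_product_sub_le {K τ P0 Pp Pm M0 mp mm np nm Mp Mm a : ℝ}
    (hP0 : 0 ≤ P0) (hM0 : 0 ≤ M0) (hM1 : M0 ≤ 1) (hPp : |Pp - P0| ≤ a) (hPm : |Pm - P0| ≤ a)
    (hmp : mp = Mp * np) (hmm : mm = Mm * nm)
    (h1 : |mp - M0| ≤ K * τ) (h2 : |mm - M0| ≤ K * τ) (h3 : |mp + mm - 2 * M0| ≤ K * τ ^ 2)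
    (h4 : |np + nm - 2| ≤ K * τ ^ 2) :
    |(Pp * Mp - P0 * M0) * np + (Pm * Mm - P0 * M0) * nm - M0 * (Pp + Pm - 2 * P0)| ≤
      2 * K * τ * a + 2 * K * τ ^ 2 * P0 := by
  have e : (Pp * Mp - P0 * M0) * np + (Pm * Mm - P0 * M0) * nm - M0 * (Pp + Pm - 2 * P0) =
      (Pp - P0) * (mp - M0) + (Pm - P0) * (mm - M0) + P0 * (mp + mm - 2 * M0) -
        P0 * (M0 * (np + nm - 2)) := by
    rw [hmp, hmm]; ring
  have a1 : |(Pp - P0) * (mp - M0)| ≤ a * (K * τ) := by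
    rw [abs_mul]
    exact mul_le_mul hPp h1 (abs_nonneg _) ((abs_nonneg _).trans hPp)
  have a2 : |(Pm - P0) * (mm - M0)| ≤ a * (K * τ) := by
    rw [abs_mul]
    exact mul_le_mul hPm h2 (abs_nonneg _) ((abs_nonneg _).trans hPp)
  have a3 : |P0 * (mp + mm - 2 * M0)| ≤ P0 * (K * τ ^ 2) := by
    rw [abs_mul, abs_of_nonneg hP0]
    exact mul_le_mul_of_nonneg_left h3 hP0
  have a4 : |P0 * (M0 * (np + nm - 2))| ≤ P0 * (K * τ ^ 2) := by
    rw [abs_mul, abs_of_nonneg hP0, abs_mul, abs_of_nonneg hM0]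
    refine mul_le_mul_of_nonneg_left ?_ hP0
    exact (mul_le_of_le_one_left (abs_nonneg _) hM1).trans h4
  rw [e, abs_le]
  rw [abs_le] at a1 a2 a3 a4
  constructor <;> linarith [a1.1, a1.2, a2.1, a2.2, a3.1, a3.2, a4.1, a4.2]

theorem max_sub_rpow_le {p ε R2 Y : ℝ} (hp : 0 < p) (hp1 : p < 1) (hε : 0 < ε) (hR0 : 0 ≤ R2)
    (hR : R2 ≤ (3 * ε) ^ 2) (hY : 0 ≤ Y) : (max (R2 - Y) 0) ^ p ≤ 9 * ε ^ (2 * p) := by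
  have hR9 : R2 ^ p ≤ 9 * ε ^ (2 * p) := by
    calc R2 ^ p ≤ ((3 * ε) ^ 2) ^ p := Real.rpow_le_rpow hR0 hR hp.le
      _ = 9 ^ p * ε ^ (2 * p) := by
        rw [mul_pow, Real.mul_rpow (by norm_num) (by positivity), ← Real.rpow_natCast ε 2,
          ← Real.rpow_mul hε.le]
        norm_num
      _ ≤ 9 * ε ^ (2 * p) := by
        refine mul_le_mul_of_nonneg_right ?_ (Real.rpow_nonneg hε.le _)
        simpa using Real.rpow_le_rpow_of_exponent_le (x := 9) (by norm_num) hp1.le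
  exact (Real.rpow_le_rpow (le_max_right _ _) (max_le (by linarith) hR0) hp.le).trans hR9

/-- Bounds for the increment of `(R2 - X)₊ ^ p` along the quadratic parametrizing a line. -/
theorem abs_quadratic_rpow_sub_le {p ε R2 X β κ τ : ℝ} (hp : 0 < p) (hp1 : p < 1)
    (hε : 0 < ε) (hX : 0 ≤ X) (hXR : X < R2) (hR : R2 ≤ (3 * ε) ^ 2) (hκ : κ ∈ Icc (0 : ℝ) 2)
    (hβ : β ^ 2 ≤ X * κ ^ 2) :
    |(max (R2 - (X + 2 * β * τ + κ ^ 2 * τ ^ 2)) 0) ^ p - (R2 - X) ^ p| ≤ 9 * ε ^ (2 * p) ∧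
    (|τ| ≤ ε → |(max (R2 - (X + 2 * β * τ + κ ^ 2 * τ ^ 2)) 0) ^ p - (R2 - X) ^ p| ≤
      16 * (ε ^ p * |τ| ^ p)) := by
  have hq := quadratic_nonneg_of_sq_le (τ := τ) hX hβ
  have hmax : R2 - X = max (R2 - X) 0 := (max_eq_left (by linarith)).symm
  constructor
  · have b : ∀ Y : ℝ, 0 ≤ Y → 0 ≤ (max (R2 - Y) 0) ^ p ∧ (max (R2 - Y) 0) ^ p ≤ 9 * ε ^ (2 * p) :=
      fun Y hY => ⟨Real.rpow_nonneg (le_max_right _ _) _,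
        max_sub_rpow_le hp hp1 hε (by linarith) hR hY⟩
    rw [hmax, abs_le]
    have b1 := b _ hq
    have b2 := b _ hX
    constructor <;> linarith [b1.1, b1.2, b2.1, b2.2]
  · intro hτ
    rw [hmax]
    refine (abs_max_rpow_sub_max_rpow_le hp.le hp1.le).trans ?_
    have hβ' : |β| ≤ 6 * ε := by
      refine abs_le_of_sq_le_sq ?_ (by positivity)
      have : κ ^ 2 ≤ 4 := by nlinarith [hκ.1, hκ.2]
      nlinarith [mul_le_mul (hXR.le.trans hR) this (sq_nonneg _) (by positivity)]
    have h1 : |R2 - (X + 2 * β * τ + κ ^ 2 * τ ^ 2) - (R2 - X)| ≤ 16 * (ε * |τ|) := by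
      have hk : κ ^ 2 ≤ 4 := by nlinarith [hκ.1, hκ.2]
      have e1 : |β * τ| ≤ 6 * ε * |τ| := by
        rw [abs_mul]
        exact mul_le_mul_of_nonneg_right hβ' (abs_nonneg _)
      have e2 : κ ^ 2 * τ ^ 2 ≤ 4 * (ε * |τ|) := by
        refine mul_le_mul hk ?_ (sq_nonneg _) (by norm_num)
        rw [← sq_abs, sq]
        exact mul_le_mul_of_nonneg_right hτ (abs_nonneg _)
      have e3 : 0 ≤ κ ^ 2 * τ ^ 2 := by positivity
      rw [abs_le] at e1 ⊢
      constructor <;> nlinarith [e1.1, e1.2]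
    calc _ ≤ (16 * (ε * |τ|)) ^ p := Real.rpow_le_rpow (abs_nonneg _) h1 hp.le
      _ = 16 ^ p * (ε ^ p * |τ| ^ p) := by
        rw [Real.mul_rpow (by norm_num) (by positivity), Real.mul_rpow hε.le (abs_nonneg _)]
      _ ≤ 16 * (ε ^ p * |τ| ^ p) := by
        refine mul_le_mul_of_nonneg_right ?_ (by positivity)
        simpa using Real.rpow_le_rpow_of_exponent_le (x := 16) (by norm_num) hp1.le

theorem contDiffAt_quadratic_rpow_mul_coneFactor {p s R2 X β κ : ℝ} (hs : 1 ≤ s) (hX : 0 ≤ X)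
    (hXR : X < R2) : ContDiffAt ℝ 2 (fun τ : ℝ =>
      (max (R2 - (X + 2 * β * τ + κ ^ 2 * τ ^ 2)) 0) ^ p *
        coneFactor p s (X + 2 * β * τ + κ ^ 2 * τ ^ 2)) 0 := by
  refine ContDiffAt.mul ?_ (contDiffAt_coneFactor contDiffAt_const (by fun_prop) hs (by
    simp only [mul_zero, add_zero]; nlinarith))
  have hcont : Continuous fun τ : ℝ => R2 - (X + 2 * β * τ + κ ^ 2 * τ ^ 2) := by fun_prop
  have hev : ∀ᶠ τ in nhds (0 : ℝ), 0 < R2 - (X + 2 * β * τ + κ ^ 2 * τ ^ 2) :=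
    hcont.continuousAt.eventually_mem (Ioi_mem_nhds (by simpa using hXR))
  refine ContDiffAt.congr_of_eventuallyEq (f := fun τ : ℝ =>
    (R2 - (X + 2 * β * τ + κ ^ 2 * τ ^ 2)) ^ p) ?_ ?_
  · exact ContDiffAt.rpow_const_of_ne (by fun_prop) (by simp; linarith)
  · filter_upwards [hev] with τ hτ
    rw [max_eq_left hτ.le]

theorem continuous_quadratic_rpow_mul_coneFactor {p s R2 X β κ : ℝ} (hp : 0 < p) (hs : 1 ≤ s)
    (hX : 0 ≤ X) (hβ : β ^ 2 ≤ X * κ ^ 2) : Continuous (fun τ : ℝ =>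
      (max (R2 - (X + 2 * β * τ + κ ^ 2 * τ ^ 2)) 0) ^ p *
        coneFactor p s (X + 2 * β * τ + κ ^ 2 * τ ^ 2)) := by
  refine Continuous.mul (Continuous.rpow_const (by fun_prop) fun _ => Or.inr hp.le) ?_
  refine continuous_iff_continuousAt.2 fun τ => ?_
  have := quadratic_nonneg_of_sq_le (τ := τ) hX hβ
  exact (contDiffAt_coneFactor (E := ℝ) contDiffAt_const (by fun_prop) hs (by linarith)).continuousAt

/-- The contribution of the symmetrized increment in projective coordinates. -/
theorem exists_abs_integral_projective_sub_le {α : ℝ} (hα : 0 < α) (hα2 : α < 2) :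
    ∃ C : ℝ, 0 ≤ C ∧ ∀ (ε R2 s X c κ β : ℝ), 0 < ε → ε < 1 / 20 → 0 ≤ X → X < R2 →
      R2 ≤ (3 * ε) ^ 2 → s ∈ Icc (1 : ℝ) 2 → c ∈ Icc (-1 : ℝ) 1 → κ ∈ Icc (0 : ℝ) 2 →
      β ^ 2 ≤ X * κ ^ 2 → ∀ F : ℝ → ℝ,
      (∀ τ, F τ = (max (R2 - (X + 2 * β * τ + κ ^ 2 * τ ^ 2)) 0) ^ (α / 2) *
        coneFactor (α / 2) s (X + 2 * β * τ + κ ^ 2 * τ ^ 2) -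
          (R2 - X) ^ (α / 2) * coneFactor (α / 2) s X) →
      IntegrableOn (fun τ => (F τ * (1 - c * τ) ^ (α - 1) + F (-τ) * (1 + c * τ) ^ (α - 1)) *
        τ ^ (-1 - α)) (Ioc 0 (1 / 4)) →
      |(∫ τ in Ioc 0 (1 / 4), (F τ * (1 - c * τ) ^ (α - 1) + F (-τ) * (1 + c * τ) ^ (α - 1)) *
        τ ^ (-1 - α)) + coneFactor (α / 2) s X * (Gamma (α / 2) * Gamma (1 - α / 2) * κ ^ α)| ≤
        C * omegaFn α ε := by
  obtain ⟨C0, hC0, hdom⟩ := exists_abs_integral_Ioc_le_omegaFn hα2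
  obtain ⟨K, hK, hline⟩ := exists_bound_coneFactor_line (α / 2) (α - 1)
  refine ⟨50 * K * C0 + 18 * ((1 / 4) ^ (-α) / α), by positivity, ?_⟩
  intro ε R2 s X c κ β hε hε1 hX hXR hR hs hc hκ hβ F hF hint
  have hp : 0 < α / 2 := by linarith
  have hp1 : α / 2 < 1 := by linarith
  set p := α / 2 with hpdef
  have hαp : 2 * p = α := by rw [hpdef]; ring
  obtain ⟨hQi, hQ⟩ := integral_second_diff_quadratic_rpow hp hp1 hXR hκ.1 hβ
  rw [hαp] at hQi hQ
  set Q : ℝ → ℝ := fun t => (max (R2 - (X + 2 * β * t + κ ^ 2 * t ^ 2)) 0) ^ p +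
    (max (R2 - (X - 2 * β * t + κ ^ 2 * t ^ 2)) 0) ^ p - 2 * (R2 - X) ^ p with hQdef
  set G : ℝ → ℝ := fun τ => F τ * (1 - c * τ) ^ (α - 1) + F (-τ) * (1 + c * τ) ^ (α - 1) with hG
  set M0 := coneFactor p s X with hM0
  have hM0p : 0 < M0 := coneFactor_pos hs.1
  have hM01 : M0 ≤ 1 := coneFactor_le_one hp.le hs.1
  have hneg : ∀ τ : ℝ, X + 2 * β * (-τ) + κ ^ 2 * (-τ) ^ 2 = X - 2 * β * τ + κ ^ 2 * τ ^ 2 := by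
    intro τ; ring
  have hP : ∀ τ : ℝ, 0 ≤ τ →
      (|(max (R2 - (X + 2 * β * τ + κ ^ 2 * τ ^ 2)) 0) ^ p - (R2 - X) ^ p| ≤ 9 * ε ^ α ∧
      |(max (R2 - (X - 2 * β * τ + κ ^ 2 * τ ^ 2)) 0) ^ p - (R2 - X) ^ p| ≤ 9 * ε ^ α) ∧
      (τ ≤ ε → |(max (R2 - (X + 2 * β * τ + κ ^ 2 * τ ^ 2)) 0) ^ p - (R2 - X) ^ p| ≤
          16 * (ε ^ p * τ ^ p) ∧
        |(max (R2 - (X - 2 * β * τ + κ ^ 2 * τ ^ 2)) 0) ^ p - (R2 - X) ^ p| ≤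
          16 * (ε ^ p * τ ^ p)) := by
    intro τ hτ
    have h1 := abs_quadratic_rpow_sub_le (τ := τ) hp hp1 hε hX hXR hR hκ hβ
    have h2 := abs_quadratic_rpow_sub_le (τ := -τ) hp hp1 hε hX hXR hR hκ hβ
    rw [hneg, abs_neg] at h2
    rw [hαp, abs_of_nonneg hτ] at h1 h2
    exact ⟨⟨h1.1, h2.1⟩, fun h => ⟨h1.2 h, h2.2 h⟩⟩
  have hP0 : 0 ≤ (R2 - X) ^ p := Real.rpow_nonneg (by linarith) _
  have hP09 : (R2 - X) ^ p ≤ 9 * ε ^ α := by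
    have := max_sub_rpow_le hp hp1 hε (by linarith) hR hX
    rwa [hαp, max_eq_left (by linarith)] at this
  have hβ1 : β ∈ Icc (-1 : ℝ) 1 := by
    refine abs_le.1 (abs_le_of_sq_le_sq ?_ zero_le_one)
    have hk : κ ^ 2 ≤ 4 := by nlinarith [hκ.1, hκ.2]
    nlinarith [mul_le_mul (hXR.le.trans hR) hk (sq_nonneg _) (by positivity)]
  have hX1 : X ∈ Icc (0 : ℝ) 1 := ⟨hX, by nlinarith⟩
  have hpt : ∀ a τ : ℝ, τ ∈ Icc (0 : ℝ) (1 / 4) →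
      |(max (R2 - (X + 2 * β * τ + κ ^ 2 * τ ^ 2)) 0) ^ p - (R2 - X) ^ p| ≤ a →
      |(max (R2 - (X - 2 * β * τ + κ ^ 2 * τ ^ 2)) 0) ^ p - (R2 - X) ^ p| ≤ a →
      |G τ - M0 * Q τ| ≤ 2 * K * τ * a + 2 * K * τ ^ 2 * (9 * ε ^ α) := by
    intro a τ hτ h1 h2
    obtain ⟨l1, l2, l3, l4⟩ := hline s hs X hX1 β hβ1 κ hκ c hc τ hτ
    have := abs_symm_product_sub_le hP0 hM0p.le hM01 h1 h2 rfl rfl l1 l2 l3 l4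
    simp only [hG, hQdef, hF, hneg]
    refine this.trans ?_
    have : 2 * K * τ ^ 2 * (R2 - X) ^ p ≤ 2 * K * τ ^ 2 * (9 * ε ^ α) :=
      mul_le_mul_of_nonneg_left hP09 (by positivity)
    linarith
  have hQ1 : IntegrableOn (fun t => Q t * t ^ (-1 - α)) (Ioc 0 (1 / 4)) :=
    hQi.mono_set Ioc_subset_Ioi_self
  have hQ2 : IntegrableOn (fun t => Q t * t ^ (-1 - α)) (Ioi (1 / 4)) :=
    hQi.mono_set (Ioi_subset_Ioi (by norm_num))
  have hsplit : (∫ t in Ioc 0 (1 / 4), Q t * t ^ (-1 - α)) +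
      (∫ t in Ioi (1 / 4), Q t * t ^ (-1 - α)) = -(Gamma p * Gamma (1 - p)) * κ ^ α := by
    rw [← hQ, ← setIntegral_union (Ioc_disjoint_Ioi le_rfl) measurableSet_Ioi hQ1 hQ2,
      Ioc_union_Ioi_eq_Ioi (by norm_num)]
  have htail : |∫ t in Ioi (1 / 4), Q t * t ^ (-1 - α)| ≤
      18 * ε ^ α * ((1 / 4) ^ (-α) / α) := by
    refine abs_integral_Ioi_mul_rpow_le (by norm_num) hα fun t ht => ?_
    have ht0 : (0 : ℝ) ≤ t := (by norm_num : (0 : ℝ) ≤ 1 / 4).trans (le_of_lt ht)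
    obtain ⟨⟨h1, h2⟩, -⟩ := hP t ht0
    simp only [hQdef]
    rw [abs_le] at h1 h2 ⊢
    constructor <;> linarith [h1.1, h1.2, h2.1, h2.2]
  have hmain : |∫ τ in Ioc 0 (1 / 4), (G τ * τ ^ (-1 - α) - M0 * (Q τ * τ ^ (-1 - α)))| ≤
      50 * K * C0 * omegaFn α ε := by
    have key : ∀ τ : ℝ, 0 < τ → ∀ b, |G τ - M0 * Q τ| ≤ b →
        |G τ * τ ^ (-1 - α) - M0 * (Q τ * τ ^ (-1 - α))| ≤ b * τ ^ (-1 - α) := by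
      intro τ hτ b hb
      rw [← mul_assoc, ← sub_mul, abs_mul, abs_of_nonneg (Real.rpow_nonneg hτ.le _)]
      exact mul_le_mul_of_nonneg_right hb (Real.rpow_nonneg hτ.le _)
    refine hdom ε (50 * K) _ hε hε1 (by positivity) (hint.sub (hQ1.const_mul M0)) ?_ ?_
    · intro τ hτ
      have hτ4 : τ ∈ Icc (0 : ℝ) (1 / 4) := ⟨hτ.1.le, by linarith [hτ.2]⟩
      obtain ⟨h1, h2⟩ := (hP τ hτ.1.le).2 hτ.2
      refine (key τ hτ.1 _ (hpt _ τ hτ4 h1 h2)).trans ?_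
      have e1 : τ * τ ^ p * τ ^ (-1 - α) = τ ^ (-p) := by
        rw [← Real.rpow_one_add' hτ.1.le (by linarith), ← Real.rpow_add hτ.1]
        congr 1; rw [← hαp]; ring
      have e2 : τ ^ 2 * τ ^ (-1 - α) = τ ^ (-p) * τ ^ (1 - p) := by
        rw [← Real.rpow_natCast τ 2, ← Real.rpow_add hτ.1, ← Real.rpow_add hτ.1]
        congr 1; rw [← hαp]; push_cast; ring
      have e3 : ε ^ α = ε ^ p * ε ^ p := by
        rw [← Real.rpow_add hε]; congr 1; rw [← hαp]; ring
      have e4 : ε ^ p * τ ^ (1 - p) ≤ 1 :=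
        mul_le_one₀ (Real.rpow_le_one hε.le (by linarith) hp.le) (Real.rpow_nonneg hτ.1.le _)
          (Real.rpow_le_one hτ.1.le (by linarith [hτ4.2]) (by linarith))
      have e5 : 0 ≤ K * (ε ^ p * τ ^ (-p)) :=
        mul_nonneg hK (mul_nonneg (Real.rpow_nonneg hε.le _) (Real.rpow_nonneg hτ.1.le _))
      calc _ = 32 * K * ε ^ p * (τ * τ ^ p * τ ^ (-1 - α)) +
            18 * K * ε ^ α * (τ ^ 2 * τ ^ (-1 - α)) := by ring
        _ = 32 * (K * (ε ^ p * τ ^ (-p))) +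
            18 * ((K * (ε ^ p * τ ^ (-p))) * (ε ^ p * τ ^ (1 - p))) := by
            rw [e1, e2, e3]; ring
        _ ≤ 32 * (K * (ε ^ p * τ ^ (-p))) + 18 * ((K * (ε ^ p * τ ^ (-p))) * 1) := by gcongr
        _ = 50 * K * (ε ^ p * τ ^ (-p)) := by ring
    · intro τ hτ
      have hτ0 : 0 < τ := hε.trans hτ.1
      have hτ4 : τ ∈ Icc (0 : ℝ) (1 / 4) := ⟨hτ0.le, hτ.2⟩
      obtain ⟨⟨h1, h2⟩, -⟩ := hP τ hτ0.le
      refine (key τ hτ0 _ (hpt _ τ hτ4 h1 h2)).trans ?_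
      have e1 : τ * τ ^ (-1 - α) = τ ^ (-α) := by
        nth_rw 1 [← Real.rpow_one τ]
        rw [← Real.rpow_add hτ0]
        congr 1; ring
      have e5 : 0 ≤ K * (ε ^ α * τ ^ (-α)) :=
        mul_nonneg hK (mul_nonneg (Real.rpow_nonneg hε.le _) (Real.rpow_nonneg hτ0.le _))
      calc _ = 18 * K * ε ^ α * (τ * τ ^ (-1 - α)) +
            18 * K * ε ^ α * (τ * τ ^ (-1 - α)) * τ := by ring
        _ = 18 * (K * (ε ^ α * τ ^ (-α))) + 18 * (K * (ε ^ α * τ ^ (-α)) * τ) := by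
            rw [e1]; ring
        _ ≤ 18 * (K * (ε ^ α * τ ^ (-α))) + 18 * (K * (ε ^ α * τ ^ (-α)) * 1) := by
            gcongr; linarith [hτ.2]
        _ ≤ 50 * K * (ε ^ α * τ ^ (-α)) := by linarith
  rw [integral_sub hint (hQ1.const_mul M0), integral_const_mul] at hmain
  have hω := rpow_le_omegaFn (α := α) hε hε1
  have htail' : |M0 * ∫ t in Ioi (1 / 4), Q t * t ^ (-1 - α)| ≤
      18 * ((1 / 4) ^ (-α) / α) * omegaFn α ε := by
    rw [abs_mul, abs_of_pos hM0p]
    refine (mul_le_of_le_one_left (abs_nonneg _) hM01).trans (htail.trans ?_)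
    have : 0 ≤ 18 * ((1 / 4 : ℝ) ^ (-α) / α) := by positivity
    nlinarith
  have e : (∫ τ in Ioc 0 (1 / 4), G τ * τ ^ (-1 - α)) + M0 * (Gamma p * Gamma (1 - p) * κ ^ α) =
      ((∫ τ in Ioc 0 (1 / 4), G τ * τ ^ (-1 - α)) -
        M0 * ∫ τ in Ioc 0 (1 / 4), Q τ * τ ^ (-1 - α)) -
        M0 * ∫ t in Ioi (1 / 4), Q t * t ^ (-1 - α) := by
    linear_combination M0 * hsplit
  rw [e, add_mul]
  exact (abs_sub _ _).trans (add_le_add hmain htail')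

/-- The directional estimate: second differences along a line of a function that is, in projective
coordinates, `(R2 - q)₊ ^ (α / 2)` times the smooth cone factor. -/
theorem exists_abs_integral_second_diff_cone_le {α : ℝ} (hα : 0 < α) (hα2 : α < 2) :
    ∃ C : ℝ, 0 ≤ C ∧ ∀ (ε R2 s X ρ c κ β : ℝ) (f : ℝ → ℝ), 0 < ε → ε < 1 / 20 → 0 ≤ X → X < R2 →
      R2 ≤ (3 * ε) ^ 2 → s ∈ Icc (1 : ℝ) 2 → ρ ∈ Icc (1 / 4 : ℝ) (1 / 2) → c ∈ Icc (-1 : ℝ) 1 →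
      κ ∈ Icc (0 : ℝ) 2 → β ^ 2 ≤ X * κ ^ 2 → Measurable f → (∀ t, |f t| ≤ 9 * ε ^ α) →
      (∀ t, -(ρ * (1 / 4) / (1 + c * (1 / 4))) ≤ t → t ≤ ρ * (1 / 4) / (1 - c * (1 / 4)) →
        f t = (max (R2 - (X + 2 * β * (t / (ρ + c * t)) + κ ^ 2 * (t / (ρ + c * t)) ^ 2)) 0) ^
          (α / 2) *
          coneFactor (α / 2) s (X + 2 * β * (t / (ρ + c * t)) + κ ^ 2 * (t / (ρ + c * t)) ^ 2)) →
      IntegrableOn (fun t => (f t + f (-t) - 2 * f 0) * t ^ (-1 - α)) (Ioi 0) ∧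
      |(∫ t in Ioi 0, (f t + f (-t) - 2 * f 0) * t ^ (-1 - α)) +
        ρ ^ (-α) * (coneFactor (α / 2) s X * (Gamma (α / 2) * Gamma (1 - α / 2) * κ ^ α))| ≤
        C * omegaFn α ε := by
  obtain ⟨C0, hC0, hproj⟩ := exists_abs_integral_projective_sub_le hα hα2
  refine ⟨(1 / 4) ^ (-α) * C0 + 36 * ((1 / 20) ^ (-α) / α), by positivity, ?_⟩
  intro ε R2 s X ρ c κ β f hε hε1 hX hXR hR hs hρ hc hκ hβ hfm hfB hf
  have hρ0 : 0 < ρ := by linarith [hρ.1]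
  have hf0 : f 0 = (R2 - X) ^ (α / 2) * coneFactor (α / 2) s X := by
    have h1 : (0 : ℝ) < 1 + c * (1 / 4) := by linarith [hc.1]
    have h2 : (0 : ℝ) < 1 - c * (1 / 4) := by linarith [hc.2]
    have := hf 0 (by rw [neg_nonpos]; positivity) (by positivity)
    simpa [max_eq_left (sub_nonneg.2 hXR.le)] using this
  have hca : |c| * (1 / 4) < 1 := by
    have := abs_le.2 hc
    linarith
  obtain ⟨hi1, hi2, heq⟩ := integral_second_diff_projective (f := f) (a := 1 / 4) (B := 9 * ε ^ α)
    (F := fun τ => (max (R2 - (X + 2 * β * τ + κ ^ 2 * τ ^ 2)) 0) ^ (α / 2) *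
        coneFactor (α / 2) s (X + 2 * β * τ + κ ^ 2 * τ ^ 2) -
          (R2 - X) ^ (α / 2) * coneFactor (α / 2) s X)
    hα hα2 hρ0 (by norm_num) hca hfm hfB
    ((continuous_quadratic_rpow_mul_coneFactor (by linarith) hs.1 hX hβ).sub
      continuous_const).continuousOn
    ((contDiffAt_quadratic_rpow_mul_coneFactor hs.1 hX hXR).sub contDiffAt_const)
    (by simp [max_eq_left (sub_nonneg.2 hXR.le)])
    (fun t h1 h2 => by rw [hf0, hf t h1 h2])
  refine ⟨hi1, ?_⟩
  have hP := hproj ε R2 s X c κ β hε hε1 hX hXR hR hs hc hκ hβ _ (fun _ => rfl) hi2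
  rw [heq]
  have hω := rpow_le_omegaFn (α := α) hε hε1
  have hω0 : 0 ≤ omegaFn α ε := (Real.rpow_nonneg hε.le _).trans hω
  have htail : ∀ (g : ℝ → ℝ) (b : ℝ), (∀ t, |g t| ≤ 18 * ε ^ α) → 1 / 20 ≤ b →
      |∫ t in Ioi b, g t * t ^ (-1 - α)| ≤ 18 * ((1 / 20) ^ (-α) / α) * omegaFn α ε := by
    intro g b hg hb
    refine (abs_integral_Ioi_mul_rpow_le (by linarith) hα fun t _ => hg t).trans ?_
    have h1 : b ^ (-α) / α ≤ (1 / 20) ^ (-α) / α := by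
      refine div_le_div_of_nonneg_right ?_ hα.le
      exact Real.rpow_le_rpow_of_nonpos (by norm_num) hb (by linarith)
    have h2 : 0 ≤ b ^ (-α) / α := div_nonneg (Real.rpow_nonneg (by linarith) _) hα.le
    calc _ ≤ 18 * omegaFn α ε * ((1 / 20) ^ (-α) / α) :=
          mul_le_mul (by linarith) h1 h2 (by linarith)
      _ = _ := by ring
  have hb : ∀ x ∈ Icc (3 / 4 : ℝ) (5 / 4), 1 / 20 ≤ ρ * (1 / 4) / x := by
    intro x hx
    rw [le_div_iff₀ (by linarith [hx.1])]
    linarith [hx.2, hρ.1]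
  have hg : ∀ t, |f t - f 0| ≤ 18 * ε ^ α := fun t => by
    have h1 := abs_le.1 (hfB t)
    have h2 := abs_le.1 (hfB 0)
    rw [abs_le]
    constructor <;> linarith [h1.1, h1.2, h2.1, h2.2]
  have t1 := htail (fun t => f t - f 0) (ρ * (1 / 4) / (1 - c * (1 / 4))) hg
    (hb _ ⟨by linarith [hc.2], by linarith [hc.1]⟩)
  have t2 := htail (fun t => f (-t) - f 0) (ρ * (1 / 4) / (1 + c * (1 / 4))) (fun t => hg (-t))
    (hb _ ⟨by linarith [hc.1], by linarith [hc.2]⟩)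
  set T1 := ∫ t in Ioi (ρ * (1 / 4) / (1 - c * (1 / 4))), (f t - f 0) * t ^ (-1 - α)
  set T2 := ∫ t in Ioi (ρ * (1 / 4) / (1 + c * (1 / 4))), (f (-t) - f 0) * t ^ (-1 - α)
  have hρα : ρ ^ (-α) ≤ (1 / 4) ^ (-α) :=
    Real.rpow_le_rpow_of_nonpos (by norm_num) hρ.1 (by linarith)
  have t3 := mul_le_mul hρα hP (abs_nonneg _) (by positivity)
  rw [← abs_of_nonneg (Real.rpow_nonneg hρ0.le (-α)), ← abs_mul, mul_add] at t3
  rw [abs_le] at t1 t2 t3 ⊢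
  constructor <;> linarith [t1.1, t1.2, t2.1, t2.2, t3.1, t3.2]

section Polar

variable {E : Type*} [NormedAddCommGroup E] [NormedSpace ℝ E] [MeasurableSpace E]
  [BorelSpace E] [FiniteDimensional ℝ E] [Nontrivial E] (μ : Measure E) [μ.IsAddHaarMeasure]

/-- Integration in polar coordinates. -/
theorem integrable_and_integral_polar {f : E → ℝ} (hf : Integrable f μ) :
    Integrable (fun h : sphere (0 : E) 1 =>
      ∫ r in Ioi (0 : ℝ), r ^ (Module.finrank ℝ E - 1) * f (r • (h : E))) μ.toSphere ∧
    ∫ x, f x ∂μ = ∫ h : sphere (0 : E) 1,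
      (∫ r in Ioi (0 : ℝ), r ^ (Module.finrank ℝ E - 1) * f (r • (h : E))) ∂μ.toSphere := by
  set n := Module.finrank ℝ E - 1 with hn
  set g : sphere (0 : E) 1 × Ioi (0 : ℝ) → ℝ := fun z => f ((z.2 : ℝ) • (z.1 : E)) with hg
  have hcomp : ∀ x : ({(0)}ᶜ : Set E), g (homeomorphUnitSphereProd E x) = f x := by
    intro x
    have h1 := congrArg Subtype.val ((homeomorphUnitSphereProd E).symm_apply_apply x)
    rw [homeomorphUnitSphereProd_symm_apply_coe] at h1
    simp only [hg]
    rw [h1]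
  have hint : Integrable g (μ.toSphere.prod (.volumeIoiPow n)) := by
    rw [← μ.measurePreserving_homeomorphUnitSphereProd.integrable_comp_emb
      (Homeomorph.measurableEmbedding _)]
    have : g ∘ (homeomorphUnitSphereProd E) = f ∘ Subtype.val := funext hcomp
    rw [this, ← integrableOn_iff_comap_subtypeVal (measurableSet_singleton _).compl]
    exact hf.integrableOn
  have hinner : ∀ h : sphere (0 : E) 1,
      ∫ r : Ioi (0 : ℝ), g (h, r) ∂(Measure.volumeIoiPow n) =
        ∫ r in Ioi (0 : ℝ), r ^ n * f (r • (h : E)) := by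
    intro h
    simp only [Measure.volumeIoiPow, ENNReal.ofReal, hg]
    rw [integral_withDensity_eq_integral_smul ((measurable_subtype_coe.pow_const _).real_toNNReal),
      integral_subtype_comap measurableSet_Ioi
        fun a : ℝ => Real.toNNReal (a ^ n) • f (a • (h : E))]
    refine setIntegral_congr_fun measurableSet_Ioi fun x hx => ?_
    rw [NNReal.smul_def, Real.coe_toNNReal _ (pow_nonneg (le_of_lt hx) _), smul_eq_mul]
  have hleft := hint.integral_prod_left
  simp only [hinner] at hleft
  refine ⟨hleft, ?_⟩
  calc ∫ x, f x ∂μ = ∫ x : ({(0)}ᶜ : Set E), f x.1 ∂(μ.comap (↑)) := by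
        rw [integral_subtype_comap (measurableSet_singleton _).compl f, restrict_compl_singleton]
    _ = ∫ z, g z ∂μ.toSphere.prod (.volumeIoiPow n) := by
        rw [← μ.measurePreserving_homeomorphUnitSphereProd.integral_comp
          (Homeomorph.measurableEmbedding _)]
        exact integral_congr_ae (.of_forall fun x => (hcomp x).symm)
    _ = _ := by
        rw [integral_prod _ hint]
        simp only [hinner]

theorem integrable_second_diff_mul_norm_rpow {u : E → ℝ} {θ : E} {α B : ℝ} (hα : 0 < α)
    (hα2 : α < 2) (hm : Measurable u) (hB : ∀ x, |u x| ≤ B) (hu : ContDiffAt ℝ 2 u θ) :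
    Integrable (fun w => (u (θ + w) + u (θ - w) - 2 * u θ) *
      ‖w‖ ^ (-(Module.finrank ℝ E : ℝ) - α)) μ := by
  obtain ⟨K, r, hK, hr, h⟩ := hu.exists_abs_second_diff_le
  have hB0 : 0 ≤ B := (abs_nonneg _).trans (hB 0)
  have hdB : ∀ w, |u (θ + w) + u (θ - w) - 2 * u θ| ≤ 4 * B := by
    intro w
    have h1 := abs_le.1 (hB (θ + w))
    have h2 := abs_le.1 (hB (θ - w))
    have h3 := abs_le.1 (hB θ)
    rw [abs_le]
    constructor <;> linarith [h1.1, h1.2, h2.1, h2.2, h3.1, h3.2]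
  have hd2 : ∀ w, |u (θ + w) + u (θ - w) - 2 * u θ| ≤ (K + 4 * B / r ^ 2) * ‖w‖ ^ 2 := by
    intro w
    rcases lt_or_ge ‖w‖ r with hw | hw
    · refine (h w hw).trans (mul_le_mul_of_nonneg_right ?_ (sq_nonneg _))
      have : 0 ≤ 4 * B / r ^ 2 := by positivity
      linarith
    · refine (hdB w).trans ?_
      have h1 : r ^ 2 ≤ ‖w‖ ^ 2 := pow_le_pow_left₀ hr.le hw 2
      have h2 : 4 * B = 4 * B / r ^ 2 * r ^ 2 := by field_simp
      have h3 : 4 * B / r ^ 2 * r ^ 2 ≤ 4 * B / r ^ 2 * ‖w‖ ^ 2 :=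
        mul_le_mul_of_nonneg_left h1 (by positivity)
      have h4 : 0 ≤ K * ‖w‖ ^ 2 := by positivity
      linarith
  set K' := K + 4 * B / r ^ 2 with hK'
  have hK'0 : 0 ≤ K' := by positivity
  set φ : ℝ → ℝ := fun t => min (K' * t ^ 2) (4 * B) with hφ
  have hφ0 : ∀ t, 0 ≤ φ t := fun t => le_min (by positivity) (by positivity)
  have hφi : IntegrableOn (fun t => φ t * t ^ (-1 - α)) (Ioi 0) := by
    refine integrableOn_Ioi_second_diff (K := K') (B := 4 * B) hα hα2 one_pos
      (Continuous.aestronglyMeasurable (by fun_prop)) ?_ ?_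
    · intro t _
      rw [abs_of_nonneg (hφ0 t)]
      exact min_le_left _ _
    · intro t
      rw [abs_of_nonneg (hφ0 t)]
      exact min_le_right _ _
  have hdom : Integrable (fun w : E => φ ‖w‖ * ‖w‖ ^ (-(Module.finrank ℝ E : ℝ) - α)) μ := by
    rw [integrable_fun_norm_addHaar μ (f := fun t => φ t * t ^ (-(Module.finrank ℝ E : ℝ) - α))]
    refine hφi.congr_fun (fun t ht => ?_) measurableSet_Ioi
    have hpos : 0 < Module.finrank ℝ E := Module.finrank_pos
    simp only [smul_eq_mul]
    rw [mul_left_comm, ← Real.rpow_natCast, ← Real.rpow_add ht, Nat.cast_pred hpos]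
    congr 2
    ring
  refine hdom.mono' (Measurable.aestronglyMeasurable (by fun_prop)) (.of_forall fun w => ?_)
  rw [Real.norm_eq_abs, abs_mul, abs_of_nonneg (Real.rpow_nonneg (norm_nonneg w) _)]
  exact mul_le_mul_of_nonneg_right (le_min (hd2 w) (hdB w)) (Real.rpow_nonneg (norm_nonneg w) _)

theorem integrableOn_mul_norm_rpow_of_bounded {g : E → ℝ} {α B δ : ℝ} (hα : 0 < α) (hδ : 0 < δ)
    (hm : Measurable g) (hB : ∀ x, |g x| ≤ B) :
    IntegrableOn (fun w => g w * ‖w‖ ^ (-(Module.finrank ℝ E : ℝ) - α)) {w | δ < ‖w‖} μ := by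
  have hB0 : 0 ≤ B := (abs_nonneg _).trans (hB 0)
  have hms : MeasurableSet {w : E | δ < ‖w‖} := measurableSet_lt measurable_const measurable_norm
  have hdom : Integrable (fun w : E => (Ioi δ).indicator
      (fun t => B * t ^ (-(Module.finrank ℝ E : ℝ) - α)) ‖w‖) μ := by
    rw [integrable_fun_norm_addHaar μ]
    have h1 : IntegrableOn (fun t : ℝ => B * t ^ (-1 - α)) (Ioi δ) :=
      integrableOn_Ioi_mul_rpow_of_bounded (g := fun _ => B) (K := |B|) hδ hα
        aestronglyMeasurable_const (fun _ _ => le_rfl)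
    have h2 : IntegrableOn ((Ioi δ).indicator fun t : ℝ => B * t ^ (-1 - α)) (Ioi 0) :=
      (h1.integrable_indicator measurableSet_Ioi).integrableOn
    refine h2.congr_fun (fun t ht => ?_) measurableSet_Ioi
    have hpos : 0 < Module.finrank ℝ E := Module.finrank_pos
    by_cases htδ : t ∈ Ioi δ
    · simp only [indicator_of_mem htδ, smul_eq_mul]
      rw [mul_left_comm, ← Real.rpow_natCast, ← Real.rpow_add ht, Nat.cast_pred hpos]
      congr 2
      ring
    · simp only [indicator_of_notMem htδ, smul_zero]
  rw [← integrable_indicator_iff hms]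
  refine hdom.mono' ((Measurable.indicator (by fun_prop) hms).aestronglyMeasurable)
    (.of_forall fun w => ?_)
  by_cases hw : δ < ‖w‖
  · rw [indicator_of_mem (show w ∈ {w : E | δ < ‖w‖} from hw), indicator_of_mem (mem_Ioi.2 hw),
      Real.norm_eq_abs, abs_mul, abs_of_nonneg (Real.rpow_nonneg (norm_nonneg w) _)]
    exact mul_le_mul_of_nonneg_right (hB w) (Real.rpow_nonneg (norm_nonneg w) _)
  · rw [indicator_of_notMem (show w ∉ {w : E | δ < ‖w‖} from hw), indicator_of_notMem (by simpa using hw)]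
    simp

theorem tendsto_integral_norm_gt {g : E → ℝ} (hg : Integrable g μ) :
    Tendsto (fun δ : ℝ => ∫ w in {w | δ < ‖w‖}, g w ∂μ) (nhdsWithin 0 (Ioi 0))
      (nhds (∫ w, g w ∂μ)) := by
  have hms : ∀ δ, MeasurableSet {w : E | δ < ‖w‖} := fun δ =>
    measurableSet_lt measurable_const measurable_norm
  simp only [← integral_indicator (hms _)]
  refine tendsto_integral_filter_of_dominated_convergence (fun t => ‖g t‖) ?_ ?_ hg.norm ?_
  · exact .of_forall fun δ => hg.1.indicator (hms δ)
  · exact .of_forall fun δ => .of_forall fun t => norm_indicator_le_norm_self _ _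
  · have h0 : ∀ᵐ w ∂μ, w ≠ 0 := by simp [ae_iff, measure_singleton]
    filter_upwards [h0] with w hw
    refine tendsto_const_nhds.congr' ?_
    have : Iio ‖w‖ ∈ nhdsWithin (0 : ℝ) (Ioi 0) :=
      mem_nhdsWithin_of_mem_nhds (Iio_mem_nhds (norm_pos_iff.2 hw))
    filter_upwards [this] with δ hδ
    rw [indicator_of_mem (show w ∈ {w : E | δ < ‖w‖} from hδ)]

theorem integral_norm_gt_symmetrize {u : E → ℝ} {θ : E} {α B δ : ℝ} (hα : 0 < α) (hδ : 0 < δ)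
    (hm : Measurable u) (hB : ∀ x, |u x| ≤ B) :
    ∫ y in {y | δ < ‖y - θ‖}, (u y - u θ) * ‖y - θ‖ ^ (-(Module.finrank ℝ E : ℝ) - α) ∂μ =
      1 / 2 * ∫ w in {w | δ < ‖w‖}, (u (θ + w) + u (θ - w) - 2 * u θ) *
        ‖w‖ ^ (-(Module.finrank ℝ E : ℝ) - α) ∂μ := by
  have hms : ∀ θ, MeasurableSet {w : E | δ < ‖w - θ‖} := fun θ =>
    measurableSet_lt measurable_const (by fun_prop)
  have hms0 : MeasurableSet {w : E | δ < ‖w‖} := by simpa using hms 0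
  set N : ℝ := -(Module.finrank ℝ E : ℝ) - α with hN
  have hbd : ∀ x, |u x - u θ| ≤ 2 * B := fun x => by
    have h1 := abs_le.1 (hB x)
    have h3 := abs_le.1 (hB θ)
    rw [abs_le]
    constructor <;> linarith [h1.1, h1.2, h3.1, h3.2]
  have i1 := integrableOn_mul_norm_rpow_of_bounded μ (g := fun w => u (θ + w) - u θ) hα hδ
    (by fun_prop) (fun w => hbd _)
  have i2 := integrableOn_mul_norm_rpow_of_bounded μ (g := fun w => u (θ - w) - u θ) hα hδ
    (by fun_prop) (fun w => hbd _)
  have e1 : ∫ y in {y | δ < ‖y - θ‖}, (u y - u θ) * ‖y - θ‖ ^ N ∂μ =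
      ∫ w in {w | δ < ‖w‖}, (u (θ + w) - u θ) * ‖w‖ ^ N ∂μ := by
    rw [← integral_indicator (hms θ), ← integral_indicator hms0, ← integral_add_left_eq_self _ θ]
    refine integral_congr_ae (.of_forall fun w => ?_)
    simp [indicator]
  have e2 : ∫ w in {w | δ < ‖w‖}, (u (θ + w) - u θ) * ‖w‖ ^ N ∂μ =
      ∫ w in {w | δ < ‖w‖}, (u (θ - w) - u θ) * ‖w‖ ^ N ∂μ := by
    rw [← integral_indicator hms0, ← integral_indicator hms0, ← integral_neg_eq_self]
    refine integral_congr_ae (.of_forall fun w => ?_)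
    simp [indicator, sub_eq_add_neg]
  have e3 : ∫ w in {w | δ < ‖w‖}, (u (θ + w) + u (θ - w) - 2 * u θ) * ‖w‖ ^ N ∂μ =
      (∫ w in {w | δ < ‖w‖}, (u (θ + w) - u θ) * ‖w‖ ^ N ∂μ) +
      ∫ w in {w | δ < ‖w‖}, (u (θ - w) - u θ) * ‖w‖ ^ N ∂μ := by
    rw [← integral_add i1 i2]
    refine integral_congr_ae (.of_forall fun w => ?_)
    ring
  rw [e3, ← e2, e1]
  ring

end Polar

/-- The fractional Laplacian as an integral over directions of one-dimensional second
differences. -/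
theorem fracLapAt_sphere_integral {d : ℕ} (hd : 1 ≤ d) {u : Ed d → ℝ} {θ : Ed d} {α B : ℝ}
    (hα : 0 < α) (hα2 : α < 2) (hm : Measurable u) (hB : ∀ x, |u x| ≤ B)
    (hu : ContDiffAt ℝ 2 u θ) :
    Integrable (fun h : sphere (0 : Ed d) 1 => ∫ r in Ioi (0 : ℝ),
      (u (θ + r • (h : Ed d)) + u (θ - r • (h : Ed d)) - 2 * u θ) * r ^ (-1 - α))
      (volume : Measure (Ed d)).toSphere ∧
    fracLapAt d α u θ (fracConst d α / 2 * ∫ h : sphere (0 : Ed d) 1, (∫ r in Ioi (0 : ℝ),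
      (u (θ + r • (h : Ed d)) + u (θ - r • (h : Ed d)) - 2 * u θ) * r ^ (-1 - α))
      ∂(volume : Measure (Ed d)).toSphere) := by
  have hfin : Module.finrank ℝ (Ed d) = d := finrank_euclideanSpace_fin
  have : Nontrivial (Ed d) := Module.nontrivial_of_finrank_pos (R := ℝ) (by omega)
  have hD := integrable_second_diff_mul_norm_rpow (volume : Measure (Ed d)) hα hα2 hm hB hu
  obtain ⟨hi, he⟩ := integrable_and_integral_polar (volume : Measure (Ed d)) hD
  have hinner : ∀ h : sphere (0 : Ed d) 1,
      (∫ r in Ioi (0 : ℝ), r ^ (Module.finrank ℝ (Ed d) - 1) *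
        ((u (θ + r • (h : Ed d)) + u (θ - r • (h : Ed d)) - 2 * u θ) *
          ‖r • (h : Ed d)‖ ^ (-(Module.finrank ℝ (Ed d) : ℝ) - α))) =
      ∫ r in Ioi (0 : ℝ),
        (u (θ + r • (h : Ed d)) + u (θ - r • (h : Ed d)) - 2 * u θ) * r ^ (-1 - α) := by
    intro h
    refine setIntegral_congr_fun measurableSet_Ioi fun r hr => ?_
    have hr0 : 0 < r := hr
    have hn : ‖r • (h : Ed d)‖ = r := by
      rw [norm_smul, norm_eq_of_mem_sphere, mul_one, Real.norm_eq_abs, abs_of_pos hr0]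
    simp only [hn, hfin]
    rw [mul_left_comm, ← Real.rpow_natCast, ← Real.rpow_add hr0, Nat.cast_pred (by omega)]
    congr 2
    ring
  simp only [hinner] at hi he
  refine ⟨hi, ?_⟩
  rw [← he]
  unfold fracLapAt
  have hlim := ((tendsto_integral_norm_gt (volume : Measure (Ed d)) hD).const_mul
    (1 / 2)).const_mul (fracConst d α)
  rw [← mul_assoc, mul_one_div] at hlim
  refine hlim.congr' ?_
  filter_upwards [self_mem_nhdsWithin] with δ hδ
  rw [← integral_norm_gt_symmetrize (volume : Measure (Ed d)) hα hδ hm hB, hfin]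

/-- Gaussian radial moments on Euclidean space. -/
theorem integral_norm_rpow_mul_exp {n : ℕ} (hn : 1 ≤ n) {α : ℝ} (hα : 0 < α) :
    Integrable (fun x : Ed n => ‖x‖ ^ α * Real.exp (-‖x‖ ^ 2)) ∧
    ∫ x : Ed n, ‖x‖ ^ α * Real.exp (-‖x‖ ^ 2) =
      π ^ ((n : ℝ) / 2) * Gamma ((n + α) / 2) / Gamma ((n : ℝ) / 2) := by
  have hfin : Module.finrank ℝ (Ed n) = n := finrank_euclideanSpace_fin
  have : Nontrivial (Ed n) := Module.nontrivial_of_finrank_pos (R := ℝ) (by omega)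
  have : Nonempty (Fin n) := ⟨⟨0, by omega⟩⟩
  have hn0 : (0 : ℝ) < n := by exact_mod_cast hn
  have hcongr : ∀ r ∈ Ioi (0 : ℝ), r ^ ((n : ℝ) - 1 + α) * Real.exp (-r ^ (2 : ℝ)) =
      r ^ (Module.finrank ℝ (Ed n) - 1) • (r ^ α * Real.exp (-r ^ 2)) := by
    intro r hr
    rw [hfin, smul_eq_mul, ← mul_assoc, Real.rpow_add hr, ← Nat.cast_pred (by omega),
      Real.rpow_natCast, Real.rpow_two]
  constructor
  · rw [integrable_fun_norm_addHaar volume (f := fun r : ℝ => r ^ α * Real.exp (-r ^ 2))]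
    exact (integrableOn_rpow_mul_exp_neg_rpow (p := 2) (s := (n : ℝ) - 1 + α) (by linarith)
      (by norm_num)).congr_fun hcongr measurableSet_Ioi
  · rw [integral_fun_norm_addHaar volume (fun r : ℝ => r ^ α * Real.exp (-r ^ 2)),
      ← setIntegral_congr_fun measurableSet_Ioi hcongr,
      integral_rpow_mul_exp_neg_rpow (by norm_num) (by linarith), hfin, measureReal_def,
      EuclideanSpace.volume_ball]
    have hG : 0 < Gamma ((n : ℝ) / 2) := Real.Gamma_pos_of_pos (by positivity)
    have hπ : √π ^ n = π ^ ((n : ℝ) / 2) := by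
      rw [Real.sqrt_eq_rpow, ← Real.rpow_natCast, ← Real.rpow_mul pi_pos.le]
      congr 1; ring
    simp only [ENNReal.ofReal_one, one_pow, one_mul, Fintype.card_fin]
    rw [ENNReal.toReal_ofReal (by positivity), hπ, Real.Gamma_add_one (by positivity),
      show ((n : ℝ) - 1 + α + 1) / 2 = (n + α) / 2 by ring]
    simp only [nsmul_eq_mul, smul_eq_mul]
    field_simp

/-- Splitting off the last coordinate. -/
noncomputable def splitLast (n : ℕ) : Ed (n + 1) ≃ᵐ ℝ × Ed n :=
  ((MeasurableEquiv.toLp 2 (Fin (n + 1) → ℝ)).symm.trans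
    (MeasurableEquiv.piFinSuccAbove (fun _ => ℝ) (Fin.last n))).trans
    ((MeasurableEquiv.refl ℝ).prodCongr (MeasurableEquiv.toLp 2 (Fin n → ℝ)))

theorem measurePreserving_splitLast (n : ℕ) : MeasurePreserving (splitLast n) := by
  refine MeasurePreserving.trans (MeasurePreserving.trans
    (EuclideanSpace.volume_preserving_symm_measurableEquiv_toLp _)
    (volume_preserving_piFinSuccAbove (fun _ => ℝ) (Fin.last n))) ?_
  exact (MeasurePreserving.id volume).prod
    ((EuclideanSpace.volume_preserving_symm_measurableEquiv_toLp (Fin n)).symm)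

theorem splitLast_fst {n : ℕ} (x : Ed (n + 1)) : (splitLast n x).1 = x (Fin.last n) := rfl

theorem norm_splitLast_snd {n : ℕ} (x : Ed (n + 1)) : ‖(splitLast n x).2‖ = tnorm (n + 1) x := by
  rw [EuclideanSpace.norm_eq, tnorm, Fin.sum_univ_castSucc]
  simp only [Fin.val_castSucc, Fin.is_lt, Nat.add_sub_cancel, if_true, Fin.val_last, lt_irrefl,
    if_false, add_zero, Real.norm_eq_abs, sq_abs]
  congr 1
  refine Finset.sum_congr rfl fun i _ => ?_
  change x ((Fin.last n).succAbove i) ^ 2 = _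
  rw [Fin.succAbove_last]

theorem norm_sq_eq_tnorm_sq_add {n : ℕ} (x : Ed (n + 1)) :
    ‖x‖ ^ 2 = tnorm (n + 1) x ^ 2 + x (Fin.last n) ^ 2 := by
  rw [tnorm, EuclideanSpace.norm_sq_eq, Real.sq_sqrt
    (Finset.sum_nonneg fun i _ => by split_ifs <;> positivity), Fin.sum_univ_castSucc,
    Fin.sum_univ_castSucc]
  simp

theorem tnorm_smul {d : ℕ} {r : ℝ} (hr : 0 ≤ r) (x : Ed d) : tnorm d (r • x) = r * tnorm d x := by
  unfold tnorm
  rw [← Real.sqrt_sq hr, ← Real.sqrt_mul (sq_nonneg _), Finset.mul_sum, Real.sqrt_sq hr]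
  congr 1
  refine Finset.sum_congr rfl fun i _ => ?_
  split_ifs
  · simp; ring
  · simp

/-- The moments of the distance to the axis over the unit sphere. -/
theorem integral_sphere_tnorm_rpow {d : ℕ} (hd : 2 ≤ d) {α : ℝ} (hα : 0 < α) :
    ∫ h : sphere (0 : Ed d) 1, tnorm d (h : Ed d) ^ α ∂(volume : Measure (Ed d)).toSphere =
      2 * π ^ ((d : ℝ) / 2) * Gamma (((d : ℝ) - 1 + α) / 2) /
        (Gamma (((d : ℝ) - 1) / 2) * Gamma (((d : ℝ) + α) / 2)) := by
  obtain ⟨n, rfl⟩ : ∃ n, d = n + 1 := ⟨d - 1, by omega⟩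
  have hfin : Module.finrank ℝ (Ed (n + 1)) = n + 1 := finrank_euclideanSpace_fin
  have : Nontrivial (Ed (n + 1)) := Module.nontrivial_of_finrank_pos (R := ℝ) (by omega)
  obtain ⟨hi, he⟩ := integral_norm_rpow_mul_exp (n := n) (by omega) hα
  have hg : Integrable (fun t : ℝ => Real.exp (-t ^ 2)) := by
    simpa using integrable_exp_neg_mul_sq one_pos
  have hg' : ∫ t : ℝ, Real.exp (-t ^ 2) = √π := by simpa using integral_gaussian 1
  have hf : ∀ x : Ed (n + 1), tnorm (n + 1) x ^ α * Real.exp (-‖x‖ ^ 2) =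
      (fun z : ℝ × Ed n => Real.exp (-z.1 ^ 2) * (‖z.2‖ ^ α * Real.exp (-‖z.2‖ ^ 2)))
        (splitLast n x) := by
    intro x
    simp only [splitLast_fst, norm_splitLast_snd]
    rw [norm_sq_eq_tnorm_sq_add, neg_add, Real.exp_add]
    ring
  have hint : Integrable fun x : Ed (n + 1) => tnorm (n + 1) x ^ α * Real.exp (-‖x‖ ^ 2) := by
    simp only [hf]
    exact ((measurePreserving_splitLast n).integrable_comp_emb
      (splitLast n).measurableEmbedding).2 (hg.mul_prod hi)
  have hval : ∫ x : Ed (n + 1), tnorm (n + 1) x ^ α * Real.exp (-‖x‖ ^ 2) =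
      √π * (π ^ ((n : ℝ) / 2) * Gamma ((n + α) / 2) / Gamma ((n : ℝ) / 2)) := by
    rw [integral_congr_ae (.of_forall hf), (measurePreserving_splitLast n).integral_comp
      (splitLast n).measurableEmbedding (fun z : ℝ × Ed n =>
        Real.exp (-z.1 ^ 2) * (‖z.2‖ ^ α * Real.exp (-‖z.2‖ ^ 2))), Measure.volume_eq_prod,
      integral_prod_mul (fun t : ℝ => Real.exp (-t ^ 2))
        (fun z : Ed n => ‖z‖ ^ α * Real.exp (-‖z‖ ^ 2)), hg', he]
  rw [(integrable_and_integral_polar volume hint).2] at hval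
  have hinner : ∀ h : sphere (0 : Ed (n + 1)) 1,
      (∫ r in Ioi (0 : ℝ), r ^ (Module.finrank ℝ (Ed (n + 1)) - 1) *
        (tnorm (n + 1) (r • (h : Ed (n + 1))) ^ α * Real.exp (-‖r • (h : Ed (n + 1))‖ ^ 2))) =
      tnorm (n + 1) (h : Ed (n + 1)) ^ α * (1 / 2 * Gamma ((n + 1 + α) / 2)) := by
    intro h
    rw [show ((n : ℝ) + 1 + α) / 2 = ((n : ℝ) + α + 1) / 2 by ring,
      ← integral_rpow_mul_exp_neg_rpow (by norm_num)
        (by have : (0 : ℝ) ≤ n := n.cast_nonneg; linarith),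
      ← integral_const_mul]
    refine setIntegral_congr_fun measurableSet_Ioi fun r hr => ?_
    have hr0 : 0 < r := hr
    have hn : ‖r • (h : Ed (n + 1))‖ = r := by
      rw [norm_smul, norm_eq_of_mem_sphere, mul_one, Real.norm_eq_abs, abs_of_pos hr0]
    simp only [hn, hfin, Nat.add_sub_cancel]
    rw [tnorm_smul hr0.le, Real.mul_rpow hr0.le
      (show 0 ≤ tnorm (n + 1) (h : Ed (n + 1)) from Real.sqrt_nonneg _), Real.rpow_add hr0,
      Real.rpow_natCast, Real.rpow_two]
    ring
  simp only [hinner, integral_mul_const] at hval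
  have hG1 : 0 < Gamma (((n : ℝ) + 1 + α) / 2) := Real.Gamma_pos_of_pos (by positivity)
  have hπ : π ^ (((n : ℝ) + 1) / 2) = √π * π ^ ((n : ℝ) / 2) := by
    rw [Real.sqrt_eq_rpow, ← Real.rpow_add pi_pos]
    congr 1; ring
  push_cast
  have hn : (0 : ℝ) < n := by exact_mod_cast (by omega : 0 < n)
  have hG2 : 0 < Gamma ((n : ℝ) / 2) := Real.Gamma_pos_of_pos (by positivity)
  rw [add_sub_cancel_right, hπ, eq_div_iff (by positivity)]
  rw [mul_div_assoc', eq_div_iff hG2.ne'] at hval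
  linarith

theorem lastCoord_eq_inner {d : ℕ} (hd : 1 ≤ d) (x : Ed d) : lastCoord d x = ⟪eLast d, x⟫ := by
  have h0 : 0 < d := hd
  simp [lastCoord, eLast, h0, EuclideanSpace.inner_single_left]

theorem norm_eLast {d : ℕ} (hd : 1 ≤ d) : ‖eLast d‖ = 1 := by
  have h0 : 0 < d := hd
  simp [eLast, h0]

theorem tnorm_sq {d : ℕ} (hd : 1 ≤ d) (x : Ed d) :
    tnorm d x ^ 2 = ‖x‖ ^ 2 - lastCoord d x ^ 2 := by
  obtain ⟨n, rfl⟩ : ∃ n, d = n + 1 := ⟨d - 1, by omega⟩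
  rw [norm_sq_eq_tnorm_sq_add]
  simp [lastCoord, Fin.last]

theorem abs_lastCoord_le {d : ℕ} (hd : 1 ≤ d) (x : Ed d) : |lastCoord d x| ≤ ‖x‖ := by
  have := abs_real_inner_le_norm (eLast d) x
  rwa [norm_eLast hd, one_mul, ← lastCoord_eq_inner hd] at this

theorem lastCoord_add {d : ℕ} (hd : 1 ≤ d) (x y : Ed d) :
    lastCoord d (x + y) = lastCoord d x + lastCoord d y := by
  simp [lastCoord_eq_inner hd, inner_add_right]

theorem lastCoord_smul {d : ℕ} (hd : 1 ≤ d) (r : ℝ) (x : Ed d) :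
    lastCoord d (r • x) = r * lastCoord d x := by
  simp [lastCoord_eq_inner hd, inner_smul_right]

theorem lastCoord_eLast {d : ℕ} (hd : 1 ≤ d) : lastCoord d (eLast d) = 1 := by
  rw [lastCoord_eq_inner hd, real_inner_self_eq_norm_sq, norm_eLast hd, one_pow]

theorem inversion_involutive (d : ℕ) : Function.Involutive (inversion d) := by
  intro x
  rcases eq_or_ne x 0 with rfl | hx
  · simp [inversion]
  · have hx' : ‖x‖ ≠ 0 := norm_ne_zero_iff.2 hx
    simp only [inversion, norm_smul, smul_smul, norm_inv, norm_pow, norm_norm]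
    rw [show ((‖x‖ ^ 2)⁻¹ * ‖x‖) ^ 2 = (‖x‖ ^ 2)⁻¹ by field_simp, inv_inv,
      mul_inv_cancel₀ (by positivity), one_smul]

theorem inversion_mem_Lspindle {d : ℕ} {ε : ℝ} {y : Ed d} :
    inversion d y ∈ Lspindle d ε ↔ y ∈ Vcone d (2 * Real.arctan ε) :=
  (inversion_involutive d).injective.mem_set_image

theorem cos_two_mul_arctan (ε : ℝ) : Real.cos (2 * Real.arctan ε) = (1 - ε ^ 2) / (1 + ε ^ 2) := by
  have h : 0 < 1 + ε ^ 2 := by positivity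
  rw [Real.cos_two_mul, Real.cos_sq_arctan]
  field_simp
  ring

theorem mem_cone_two_mul_arctan_iff {d : ℕ} {ε : ℝ} {w : Ed d} :
    w ∈ cone d (2 * Real.arctan ε) ↔
      ‖w‖ * (1 - ε ^ 2) < lastCoord d w * (1 + ε ^ 2) := by
  have h : 0 < 1 + ε ^ 2 := by positivity
  rw [cone, mem_ofPred_eq, cos_two_mul_arctan, mul_div_assoc', div_lt_iff₀ h]

theorem lastCoord_pos_of_mem_cone {d : ℕ} {ε : ℝ} (hε : ε ^ 2 < 1) {w : Ed d}
    (hw : w ∈ cone d (2 * Real.arctan ε)) : 0 < lastCoord d w := by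
  rw [mem_cone_two_mul_arctan_iff] at hw
  have h : 0 ≤ ‖w‖ * (1 - ε ^ 2) := mul_nonneg (norm_nonneg _) (by linarith)
  exact pos_of_mul_pos_left (h.trans_lt hw) (by positivity)

theorem tnorm_sq_ystar_inversion {d : ℕ} (hd : 1 ≤ d) {w : Ed d} (hw : 0 < lastCoord d w) :
    tnorm d (ystar d (inversion d ((1 / 2 : ℝ) • eLast d + w))) ^ 2 =
      (‖w‖ - lastCoord d w) / (‖w‖ + lastCoord d w) := by
  have hn : 0 < ‖w‖ := hw.trans_le ((le_abs_self _).trans (abs_lastCoord_le hd w))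
  rw [ystar, inversion_involutive, add_sub_cancel_left, inversion,
    tnorm_smul (by positivity), mul_pow, tnorm_sq hd, norm_add_sq_real, lastCoord_add hd,
    lastCoord_smul hd, lastCoord_smul hd, lastCoord_eLast hd, real_inner_smul_left,
    real_inner_smul_right, ← lastCoord_eq_inner hd, norm_smul, norm_smul, norm_eLast hd]
  simp only [norm_inv, norm_mul, norm_norm, Real.norm_ofNat, norm_div, norm_one]
  generalize lastCoord d w = a at *
  generalize ‖w‖ = b at *
  have hab : (1 / 2 * 1 : ℝ) ^ 2 + 2 * (1 / 2 * ((2 * b)⁻¹ * a)) + ((2 * b)⁻¹ * b) ^ 2 =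
      (a + b) / (2 * b) := by field_simp; ring
  rw [hab]
  have : 0 < a + b := by positivity
  field_simp
  ring

theorem uFn_add_eq_indicator {d : ℕ} (hd : 1 ≤ d) (α : ℝ) {ε : ℝ} (hε : ε ^ 2 < 1) (w : Ed d) :
    uFn d α ε ((1 / 2 : ℝ) • eLast d + w) = (cone d (2 * Real.arctan ε)).indicator
      (fun w => Cexit d α *
        (max (ε ^ 2 - (‖w‖ - lastCoord d w) / (‖w‖ + lastCoord d w)) 0) ^ (α / 2)) w := by
  by_cases hw : w ∈ cone d (2 * Real.arctan ε)
  · have hp := lastCoord_pos_of_mem_cone hε hw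
    have h0 : (1 / 2 : ℝ) • eLast d + w ≠ 0 := by
      intro h
      have := congrArg (lastCoord d) h
      rw [lastCoord_add hd, lastCoord_smul hd, lastCoord_eLast hd, lastCoord_eq_inner hd 0,
        inner_zero_right] at this
      linarith
    have hm : inversion d ((1 / 2 : ℝ) • eLast d + w) ∈ Lspindle d ε := by
      rw [inversion_mem_Lspindle, Vcone, mem_ofPred_eq, add_sub_cancel_left]
      exact hw
    rw [indicator_of_mem hw, uFn, if_neg h0, sStar, if_pos hm, tnorm_sq_ystar_inversion hd hp]
  · have hm : inversion d ((1 / 2 : ℝ) • eLast d + w) ∉ Lspindle d ε := by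
      rw [inversion_mem_Lspindle, Vcone, mem_ofPred_eq, add_sub_cancel_left]
      exact hw
    rw [indicator_of_notMem hw, uFn, sStar, if_neg hm, ite_self]

theorem measurable_lastCoord {d : ℕ} (hd : 1 ≤ d) : Measurable (lastCoord d) := by
  have : lastCoord d = fun x => ⟪eLast d, x⟫ := funext (lastCoord_eq_inner hd)
  rw [this]
  fun_prop

theorem measurable_uFn {d : ℕ} (hd : 1 ≤ d) (α : ℝ) {ε : ℝ} (hε : ε ^ 2 < 1) :
    Measurable (uFn d α ε) := by
  have hl := measurable_lastCoord hd
  have hset : MeasurableSet (cone d (2 * Real.arctan ε)) :=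
    measurableSet_lt (by fun_prop) hl
  have hm : Measurable fun w => uFn d α ε ((1 / 2 : ℝ) • eLast d + w) := by
    simp_rw [uFn_add_eq_indicator hd α hε]
    refine Measurable.indicator ?_ hset
    fun_prop
  simpa [Function.comp_def] using hm.comp (measurable_id.sub_const ((1 / 2 : ℝ) • eLast d))

theorem abs_uFn_le {d : ℕ} (hd : 1 ≤ d) {α : ℝ} (hα : 0 < α) {ε : ℝ} (h0 : 0 ≤ ε)
    (hε : ε ^ 2 < 1) (hC : 0 ≤ Cexit d α) (y : Ed d) : |uFn d α ε y| ≤ Cexit d α * ε ^ α := by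
  obtain ⟨w, rfl⟩ : ∃ w, y = (1 / 2 : ℝ) • eLast d + w := ⟨_, (add_sub_cancel _ _).symm⟩
  rw [uFn_add_eq_indicator hd α hε]
  by_cases hw : w ∈ cone d (2 * Real.arctan ε)
  · have hp := lastCoord_pos_of_mem_cone hε hw
    have hn := (le_abs_self _).trans (abs_lastCoord_le hd w)
    rw [indicator_of_mem hw, abs_of_nonneg (by positivity)]
    refine mul_le_mul_of_nonneg_left ?_ hC
    have hq : 0 ≤ (‖w‖ - lastCoord d w) / (‖w‖ + lastCoord d w) :=
      div_nonneg (by linarith) (by positivity)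
    calc _ ≤ (ε ^ 2) ^ (α / 2) := by
          refine Real.rpow_le_rpow (le_max_right _ _) (max_le ?_ (sq_nonneg _)) (by positivity)
          linarith
      _ = ε ^ α := by
          rw [← Real.rpow_two, ← Real.rpow_mul h0]
          congr 1; ring
  · rw [indicator_of_notMem hw, abs_zero]
    positivity

/-- In the half space above the apex, `u` is a function of the squared slope. -/
theorem uFn_add_eq_coneFactor {d : ℕ} (hd : 1 ≤ d) {α : ℝ} (hα : 0 < α) {ε : ℝ}
    (hε : ε ^ 2 < 1) {w : Ed d} (hw : 0 < lastCoord d w) :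
    uFn d α ε ((1 / 2 : ℝ) • eLast d + w) = Cexit d α *
      ((max (((1 + ε ^ 2) / (1 - ε ^ 2)) ^ 2 - 1 - (‖w‖ ^ 2 / lastCoord d w ^ 2 - 1)) 0) ^ (α / 2) *
        coneFactor (α / 2) ((1 + ε ^ 2) / (1 - ε ^ 2)) (‖w‖ ^ 2 / lastCoord d w ^ 2 - 1)) := by
  have hn := (le_abs_self _).trans (abs_lastCoord_le hd w)
  have h1 : 0 < 1 - ε ^ 2 := by linarith
  have hfull : uFn d α ε ((1 / 2 : ℝ) • eLast d + w) = Cexit d α *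
        (max (ε ^ 2 - (‖w‖ - lastCoord d w) / (‖w‖ + lastCoord d w)) 0) ^ (α / 2) := by
    rw [uFn_add_eq_indicator hd α hε]
    by_cases hwc : w ∈ cone d (2 * Real.arctan ε)
    · rw [indicator_of_mem hwc]
    · rw [indicator_of_notMem hwc, max_eq_right, Real.zero_rpow (by positivity), mul_zero]
      rw [mem_cone_two_mul_arctan_iff, not_lt] at hwc
      rw [sub_nonpos, le_div_iff₀ (by positivity)]
      nlinarith
  rw [hfull, coneFactor]
  congr 1
  have hb : 0 ≤ ‖w‖ := norm_nonneg w
  generalize lastCoord d w = a at *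
  generalize ‖w‖ = b at *
  have hb0 : 0 < b := hw.trans_le hn
  have hs : √(1 + (b ^ 2 / a ^ 2 - 1)) = b / a := by
    rw [add_sub_cancel, ← div_pow, Real.sqrt_sq (by positivity)]
  have hP : 0 < (1 + ε ^ 2) / (1 - ε ^ 2) := by positivity
  have hQ : 0 < b / a := by positivity
  rw [hs, ← Real.mul_rpow (le_max_right _ _) (by positivity), max_mul_of_nonneg _ _ (by positivity),
    zero_mul]
  congr 2
  have he : ε ^ 2 = ((1 + ε ^ 2) / (1 - ε ^ 2) - 1) / ((1 + ε ^ 2) / (1 - ε ^ 2) + 1) := by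
    field_simp; ring
  have hbq : (b - a) / (b + a) = (b / a - 1) / (b / a + 1) := by field_simp
  rw [hbq, ← div_pow]
  conv_lhs => rw [he]
  generalize (1 + ε ^ 2) / (1 - ε ^ 2) = P at *
  generalize b / a = Q at *
  field_simp
  ring

theorem sq_slope_lt_of_mem_cone {d : ℕ} {ε : ℝ} (hε : ε ^ 2 < 1) {w : Ed d}
    (hw : w ∈ cone d (2 * Real.arctan ε)) :
    ‖w‖ ^ 2 / lastCoord d w ^ 2 < ((1 + ε ^ 2) / (1 - ε ^ 2)) ^ 2 := by
  have hp := lastCoord_pos_of_mem_cone hε hw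
  rw [mem_cone_two_mul_arctan_iff] at hw
  have h1 : 0 < 1 - ε ^ 2 := by linarith
  rw [← div_pow]
  refine pow_lt_pow_left₀ ?_ (by positivity) two_ne_zero
  rw [div_lt_div_iff₀ hp h1]
  linarith

theorem contDiffAt_uFn {d : ℕ} (hd : 1 ≤ d) {α : ℝ} (hα : 0 < α) {ε : ℝ} (hε : ε ^ 2 < 1)
    {w : Ed d} (hw : w ∈ cone d (2 * Real.arctan ε)) :
    ContDiffAt ℝ 2 (uFn d α ε) ((1 / 2 : ℝ) • eLast d + w) := by
  set e : Ed d := (1 / 2 : ℝ) • eLast d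
  have hp := lastCoord_pos_of_mem_cone hε hw
  have hn := (le_abs_self _).trans (abs_lastCoord_le hd w)
  have hX := sq_slope_lt_of_mem_cone hε hw
  have h1 : 0 < 1 - ε ^ 2 := by linarith
  have hlast : ContDiff ℝ 2 (lastCoord d) := by
    rw [show lastCoord d = fun x => ⟪eLast d, x⟫ from funext (lastCoord_eq_inner hd)]
    exact contDiff_const.inner ℝ contDiff_id
  set X : Ed d → ℝ := fun y => ‖y - e‖ ^ 2 / lastCoord d (y - e) ^ 2 - 1 with hXdef
  have hsub : e + w - e = w := add_sub_cancel_left _ _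
  have hXc : ContDiffAt ℝ 2 X (e + w) := by
    have hy : ContDiffAt ℝ 2 (fun y : Ed d => y - e) (e + w) := by fun_prop
    refine ((hy.norm_sq ℝ).div ((hlast.contDiffAt.comp _ hy).pow 2) ?_).sub contDiffAt_const
    simp only [Function.comp, hsub]
    positivity
  have hXw : X (e + w) = ‖w‖ ^ 2 / lastCoord d w ^ 2 - 1 := by simp only [hXdef, hsub]
  have hev : (fun y => Cexit d α * ((((1 + ε ^ 2) / (1 - ε ^ 2)) ^ 2 - 1 - X y) ^ (α / 2) *
      coneFactor (α / 2) ((1 + ε ^ 2) / (1 - ε ^ 2)) (X y))) =ᶠ[nhds (e + w)] uFn d α ε := by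
    have hc1 : ∀ᶠ y in nhds (e + w), 0 < lastCoord d (y - e) := by
      refine ContinuousAt.eventually_lt continuousAt_const
        (hlast.continuous.comp (continuous_id.sub continuous_const)).continuousAt ?_
      simpa [hsub] using hp
    have hc2 : ∀ᶠ y in nhds (e + w), X y < ((1 + ε ^ 2) / (1 - ε ^ 2)) ^ 2 - 1 := by
      refine ContinuousAt.eventually_lt hXc.continuousAt continuousAt_const ?_
      rw [hXw]
      linarith
    filter_upwards [hc1, hc2] with y hy1 hy2
    have := uFn_add_eq_coneFactor hd hα hε hy1
    rw [show (1 / 2 : ℝ) • eLast d + (y - e) = y from add_sub_cancel _ _] at this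
    rw [this, ← show X y = ‖y - e‖ ^ 2 / lastCoord d (y - e) ^ 2 - 1 from rfl,
      max_eq_left (by linarith)]
  refine ContDiffAt.congr_of_eventuallyEq ?_ hev.symm
  refine contDiffAt_const.mul (ContDiffAt.mul ?_ ?_)
  · refine ContDiffAt.rpow_const_of_ne (contDiffAt_const.sub hXc) ?_
    rw [hXw]
    linarith
  · refine contDiffAt_coneFactor contDiffAt_const hXc ?_ ?_
    · rw [le_div_iff₀ h1]
      nlinarith [sq_nonneg ε]
    · rw [hXw]
      have : 0 < ‖w‖ := hp.trans_le hn
      rw [add_sub_cancel]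
      positivity

theorem Cexit_pos {d : ℕ} (hd : 2 ≤ d) {α : ℝ} (hα : 0 < α) : 0 < Cexit d α := by
  have h2 : (2 : ℝ) ≤ d := by exact_mod_cast hd
  unfold Cexit
  have := Real.Gamma_pos_of_pos (s := ((d : ℝ) - 1) / 2) (by linarith)
  have := Real.Gamma_pos_of_pos (s := ((d : ℝ) - 1 + α) / 2) (by linarith)
  have := Real.Gamma_pos_of_pos (s := 1 + α / 2) (by linarith)
  positivity

/-- A line through a point of the cone, in slope coordinates. -/
theorem norm_sq_div_lastCoord_sq_line {d : ℕ} (hd : 1 ≤ d) {w h : Ed d} (hρ : 0 < lastCoord d w)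
    {t : ℝ} (ht : 0 < lastCoord d w + lastCoord d h * t) :
    ‖w + t • h‖ ^ 2 / lastCoord d (w + t • h) ^ 2 - 1 =
      ‖(lastCoord d w)⁻¹ • w - eLast d‖ ^ 2 +
      2 * ⟪(lastCoord d w)⁻¹ • w - eLast d, h - (lastCoord d h / lastCoord d w) • w⟫ *
        (t / (lastCoord d w + lastCoord d h * t)) +
      ‖h - (lastCoord d h / lastCoord d w) • w‖ ^ 2 *
        (t / (lastCoord d w + lastCoord d h * t)) ^ 2 := by
  set ρ := lastCoord d w with hρd
  set c := lastCoord d h with hcd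
  set v := ρ⁻¹ • w - eLast d with hv
  set k := h - (c / ρ) • w with hk
  set τ := t / (ρ + c * t) with hτ
  have hw : w + t • h = (ρ + c * t) • (eLast d + (v + τ • k)) := by
    rw [hv, hk, hτ]
    have h1 : (ρ + c * t) • (t / (ρ + c * t)) • (h - (c / ρ) • w) = t • (h - (c / ρ) • w) := by
      rw [smul_smul, mul_div_cancel₀ _ ht.ne']
    rw [smul_add, smul_add, h1, smul_sub, smul_sub, smul_smul, smul_smul]
    have h2 : (ρ + c * t) * ρ⁻¹ = 1 + t * (c / ρ) := by field_simp
    rw [h2, add_smul 1, one_smul]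
    abel
  have hev : ⟪eLast d, v⟫ = 0 := by
    rw [hv, inner_sub_right, inner_smul_right, ← lastCoord_eq_inner hd, ← lastCoord_eq_inner hd,
      lastCoord_eLast hd, ← hρd, inv_mul_cancel₀ hρ.ne', sub_self]
  have hek : ⟪eLast d, k⟫ = 0 := by
    rw [hk, inner_sub_right, inner_smul_right, ← lastCoord_eq_inner hd, ← lastCoord_eq_inner hd,
      ← hρd, ← hcd, div_mul_cancel₀ _ hρ.ne', sub_self]
  have hl : lastCoord d (w + t • h) = ρ + c * t := by
    rw [lastCoord_add hd, lastCoord_smul hd]; ring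
  rw [hl, hw, norm_smul, mul_pow, Real.norm_eq_abs, sq_abs, mul_div_cancel_left₀ _ (by positivity),
    norm_add_sq_real, norm_eLast hd, inner_add_right, inner_smul_right, hev, hek,
    norm_add_sq_real v, inner_smul_right, norm_smul, mul_pow, Real.norm_eq_abs, sq_abs]
  ring

theorem norm_slope_sq {d : ℕ} (hd : 1 ≤ d) {w : Ed d} (hρ : 0 < lastCoord d w) :
    ‖(lastCoord d w)⁻¹ • w - eLast d‖ ^ 2 = ‖w‖ ^ 2 / lastCoord d w ^ 2 - 1 := by
  simpa using (norm_sq_div_lastCoord_sq_line hd (w := w) (h := 0) (t := 0) hρ (by simpa)).symm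

theorem norm_sub_smul_sub_le {d : ℕ} (hd : 1 ≤ d) {w h : Ed d} (hh : ‖h‖ = 1) :
    |‖h - (lastCoord d h / lastCoord d w) • w‖ - tnorm d h| ≤
      ‖(lastCoord d w)⁻¹ • w - eLast d‖ := by
  have h1 : ‖h - lastCoord d h • eLast d‖ = tnorm d h := by
    have h2 : ‖h - lastCoord d h • eLast d‖ ^ 2 = tnorm d h ^ 2 := by
      rw [tnorm_sq hd, norm_sub_sq_real, inner_smul_right, real_inner_comm,
        ← lastCoord_eq_inner hd, norm_smul, mul_pow, Real.norm_eq_abs, sq_abs, norm_eLast hd]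
      ring
    exact (pow_left_inj₀ (norm_nonneg _) (Real.sqrt_nonneg _) two_ne_zero).1 h2
  have hc : |lastCoord d h| ≤ 1 := (abs_lastCoord_le hd h).trans_eq hh
  rw [← h1]
  refine (abs_norm_sub_norm_le _ _).trans ?_
  have : h - (lastCoord d h / lastCoord d w) • w - (h - lastCoord d h • eLast d) =
      (-lastCoord d h) • ((lastCoord d w)⁻¹ • w - eLast d) := by
    rw [smul_sub, smul_smul, div_eq_mul_inv, neg_mul, neg_smul, neg_smul]
    abel
  rw [this, norm_smul, Real.norm_eq_abs, abs_neg]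
  exact mul_le_of_le_one_left (norm_nonneg _) hc

theorem tnorm_le_norm {d : ℕ} (hd : 1 ≤ d) (x : Ed d) : tnorm d x ≤ ‖x‖ := by
  refine le_of_sq_le_sq ?_ (norm_nonneg _)
  rw [tnorm_sq hd]
  linarith [sq_nonneg (lastCoord d x)]

/-- The parameters of a cone of small aperture. -/
theorem cone_parameter_bounds {d : ℕ} (hd : 1 ≤ d) {ε : ℝ} (h0 : 0 < ε) (h1 : ε < 1 / 20)
    {w : Ed d} (hw : w ∈ cone d (2 * Real.arctan ε)) (hn : ‖w‖ = 1 / 2) :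
    (1 + ε ^ 2) / (1 - ε ^ 2) ∈ Icc (1 : ℝ) (1 + 3 * ε) ∧
    ((1 + ε ^ 2) / (1 - ε ^ 2)) ^ 2 - 1 ≤ (3 * ε) ^ 2 ∧
    lastCoord d w ∈ Icc (1 / 2 - ε) (1 / 2) := by
  have hε : ε ^ 2 < 1 := by nlinarith
  have hp : 0 < 1 - ε ^ 2 := by linarith
  rw [mem_cone_two_mul_arctan_iff, hn] at hw
  refine ⟨⟨?_, ?_⟩, ?_, ?_, ?_⟩
  · rw [le_div_iff₀ hp]; nlinarith
  · rw [div_le_iff₀ hp]; nlinarith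
  · rw [div_pow, sub_le_iff_le_add, div_le_iff₀ (by positivity)]
    have : (2 / 3 : ℝ) ^ 2 ≤ (1 - ε ^ 2) ^ 2 := pow_le_pow_left₀ (by norm_num) (by nlinarith) 2
    nlinarith [mul_le_mul_of_nonneg_left this (sq_nonneg ε)]
  · have h2 : (1 / 2 - ε) * (1 + ε ^ 2) ≤ 1 / 2 * (1 - ε ^ 2) := by
      nlinarith [sq_nonneg ε, mul_pos h0 h0]
    exact le_of_mul_le_mul_right (h2.trans hw.le) (by positivity)
  · exact hn ▸ (le_abs_self _).trans (abs_lastCoord_le hd w)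

/-- The estimate of the one-dimensional integrals along all lines through a point of the cone. -/
theorem exists_abs_integral_second_diff_uFn_le {d : ℕ} (hd : 2 ≤ d) {α : ℝ} (hα : 0 < α)
    (hα2 : α < 2) :
    ∃ C : ℝ, 0 ≤ C ∧ ∀ (ε : ℝ) (w h : Ed d), 0 < ε → ε < 1 / 20 →
      w ∈ cone d (2 * Real.arctan ε) → ‖w‖ = 1 / 2 → ‖h‖ = 1 →
      |(∫ r in Ioi (0 : ℝ), (uFn d α ε ((1 / 2 : ℝ) • eLast d + w + r • h) +
          uFn d α ε ((1 / 2 : ℝ) • eLast d + w - r • h) -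
          2 * uFn d α ε ((1 / 2 : ℝ) • eLast d + w)) * r ^ (-1 - α)) +
        Cexit d α * (lastCoord d w ^ (-α) * (coneFactor (α / 2) ((1 + ε ^ 2) / (1 - ε ^ 2))
          (‖w‖ ^ 2 / lastCoord d w ^ 2 - 1) * (Gamma (α / 2) * Gamma (1 - α / 2) *
            ‖h - (lastCoord d h / lastCoord d w) • w‖ ^ α)))| ≤
        Cexit d α * (C * omegaFn α ε) := by
  have hd1 : 1 ≤ d := by omega
  obtain ⟨C, hC, hmain⟩ := exists_abs_integral_second_diff_cone_le hα hα2
  refine ⟨C, hC, fun ε w h h0 h1 hw hn hh => ?_⟩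
  have hε : ε ^ 2 < 1 := by nlinarith
  have hCe := Cexit_pos hd hα
  obtain ⟨hs, hR, hρ⟩ := cone_parameter_bounds hd1 h0 h1 hw hn
  have hρ0 := lastCoord_pos_of_mem_cone hε hw
  have hX := norm_slope_sq hd1 hρ0
  have hXR := sq_slope_lt_of_mem_cone hε hw
  have hv : ‖(lastCoord d w)⁻¹ • w - eLast d‖ ≤ 3 * ε := by
    refine le_of_sq_le_sq ?_ (by positivity)
    linarith
  have hc := abs_le.1 ((abs_lastCoord_le hd1 h).trans_eq hh)
  have hk : ‖h - (lastCoord d h / lastCoord d w) • w‖ ≤ 2 := by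
    have := (abs_le.1 (norm_sub_smul_sub_le hd1 (w := w) hh)).2
    have := tnorm_le_norm hd1 h
    linarith
  have hm := measurable_uFn hd1 α hε
  set c := lastCoord d h with hcd
  set ρ := lastCoord d w with hρd
  have key := (hmain ε (((1 + ε ^ 2) / (1 - ε ^ 2)) ^ 2 - 1) ((1 + ε ^ 2) / (1 - ε ^ 2))
    (‖w‖ ^ 2 / ρ ^ 2 - 1) ρ c
    ‖h - (c / ρ) • w‖ ⟪ρ⁻¹ • w - eLast d, h - (c / ρ) • w⟫
    (fun t => (Cexit d α)⁻¹ * uFn d α ε ((1 / 2 : ℝ) • eLast d + w + t • h)) h0 h1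
    (hX ▸ sq_nonneg _) (by linarith) hR ⟨hs.1, by linarith [hs.2]⟩
    ⟨by linarith [hρ.1], hρ.2⟩ ⟨hc.1, hc.2⟩ ⟨norm_nonneg _, hk⟩ ?_
    (by fun_prop) ?_ ?_).2
  · simp only [neg_smul, zero_smul, add_zero, ← sub_eq_add_neg] at key
    have hfac : ∀ r : ℝ, (Cexit d α)⁻¹ *
        ((uFn d α ε ((1 / 2 : ℝ) • eLast d + w + r • h) +
          uFn d α ε ((1 / 2 : ℝ) • eLast d + w - r • h) -
          2 * uFn d α ε ((1 / 2 : ℝ) • eLast d + w)) * r ^ (-1 - α)) =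
        ((Cexit d α)⁻¹ * uFn d α ε ((1 / 2 : ℝ) • eLast d + w + r • h) +
          (Cexit d α)⁻¹ * uFn d α ε ((1 / 2 : ℝ) • eLast d + w - r • h) -
          2 * ((Cexit d α)⁻¹ * uFn d α ε ((1 / 2 : ℝ) • eLast d + w))) * r ^ (-1 - α) := by
      intro r; ring
    simp only [← hfac, integral_const_mul] at key
    refine le_trans (le_of_eq ?_) (mul_le_mul_of_nonneg_left key hCe.le)
    rw [← abs_of_pos hCe, ← abs_mul, abs_of_pos hCe, mul_add, mul_inv_cancel_left₀ hCe.ne']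
  · rw [← hX, ← mul_pow]
    exact sq_le_sq' (neg_le_of_abs_le (abs_real_inner_le_norm _ _)) (real_inner_le_norm _ _)
  · intro t
    rw [abs_mul, abs_of_pos (inv_pos.2 hCe), inv_mul_le_iff₀ hCe]
    refine (abs_uFn_le hd1 hα h0.le hε hCe.le _).trans (mul_le_mul_of_nonneg_left ?_ hCe.le)
    linarith [Real.rpow_nonneg h0.le α]
  · intro t ht1 ht2
    have hpos : 0 < ρ + c * t := by
      rw [neg_le, le_div_iff₀ (by linarith [hc.1])] at ht1
      rw [le_div_iff₀ (by linarith [hc.2])] at ht2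
      nlinarith
    have hl : lastCoord d (w + t • h) = ρ + c * t := by
      rw [lastCoord_add hd1, lastCoord_smul hd1]; ring
    have hline := norm_sq_div_lastCoord_sq_line hd1 hρ0 (h := h) (t := t) hpos
    rw [hX] at hline
    rw [add_assoc _ w, uFn_add_eq_coneFactor hd1 hα hε (hl ▸ hpos), hline,
      inv_mul_cancel_left₀ hCe.ne']

theorem abs_rpow_sub_one_le {p G : ℝ} (hp : 0 ≤ p) (hp1 : p ≤ 1) (hG : 0 < G) :
    |G ^ p - 1| ≤ |G - 1| := by
  rcases le_total 1 G with h | h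
  · rw [abs_of_nonneg (sub_nonneg.2 (Real.one_le_rpow h hp)), abs_of_nonneg (sub_nonneg.2 h)]
    have := Real.rpow_le_rpow_of_exponent_le h hp1
    rw [Real.rpow_one] at this
    linarith
  · rw [abs_of_nonpos (sub_nonpos.2 (Real.rpow_le_one hG.le h hp)),
      abs_of_nonpos (sub_nonpos.2 h)]
    have := Real.rpow_le_rpow_of_exponent_ge hG h hp1
    rw [Real.rpow_one] at this
    linarith

theorem abs_rpow_neg_mul_coneFactor_sub_one_le {α ε ρ S : ℝ} (hα : 0 < α) (hα2 : α < 2)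
    (h0 : 0 < ε) (h1 : ε < 1 / 20) (hS : S ∈ Icc 1 (1 + 3 * ε)) (hρ : ρ ∈ Icc (1 / 2 - ε) (1 / 2)) :
    |ρ ^ (-α) * coneFactor (α / 2) S ((1 / 2) ^ 2 / ρ ^ 2 - 1) - 1| ≤ 20 * ε := by
  have hρ0 : 0 < ρ := by linarith [hρ.1]
  obtain ⟨q, hq⟩ : ∃ q, q = 1 / 2 / ρ := ⟨_, rfl⟩
  have hq1 : 1 ≤ q := by rw [hq, le_div_iff₀ hρ0]; linarith [hρ.2]
  have hq2 : q ≤ 1 + 3 * ε := by rw [hq, div_le_iff₀ hρ0]; nlinarith [hρ.1]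
  have hs : √(1 + ((1 / 2) ^ 2 / ρ ^ 2 - 1)) = q := by
    rw [add_sub_cancel, ← div_pow, ← hq, Real.sqrt_sq (by linarith)]
  have hρq : ρ ^ (-α) = (4 * q ^ 2) ^ (α / 2) := by
    have : 4 * q ^ 2 = ρ ^ (-2 : ℝ) := by
      rw [hq, Real.rpow_neg hρ0.le, Real.rpow_two]
      field_simp
      norm_num
    rw [this, ← Real.rpow_mul hρ0.le]
    congr 1; ring
  have hS1 := hS.1
  have hS2 := hS.2
  rw [coneFactor, hs, hρq, ← Real.mul_rpow (by positivity) (by positivity)]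
  refine (abs_rpow_sub_one_le (by positivity) (by linarith) (by positivity)).trans ?_
  have hD : 8 ≤ (S + 1) * (q + 1) * (S + q) := by
    have : 4 ≤ (S + 1) * (q + 1) := by nlinarith
    nlinarith
  have hD2 : (S + 1) * (q + 1) * (S + q) ≤ 8 + 80 * ε := by
    calc (S + 1) * (q + 1) * (S + q) ≤ (2 + 3 * ε) * (2 + 3 * ε) * (2 + 6 * ε) :=
          mul_le_mul (mul_le_mul (by linarith) (by linarith) (by linarith) (by linarith))
            (by linarith) (by linarith) (by positivity)
      _ ≤ _ := by nlinarith [mul_pos h0 h0, mul_pos (mul_pos h0 h0) h0]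
  generalize (S + 1) * (q + 1) * (S + q) = D at *
  have hD0 : 0 < D := by linarith
  rw [mul_div_assoc', div_sub_one hD0.ne', abs_div, abs_of_pos hD0, div_le_iff₀ hD0, abs_le]
  constructor
  · nlinarith
  · nlinarith [mul_pos h0 h0]

theorem abs_rpow_neg_two_mul_sub_one_le {α ε x : ℝ} (hα : 0 < α) (hα2 : α < 2)
    (h1 : ε < 1 / 20) (hx : 0 ≤ x) (hx2 : x ^ 2 ∈ Icc (1 - ε) 1) :
    |x ^ (-(2 * α)) - 1| ≤ 3 * ε := by
  have h2 : x ^ (-(2 * α)) = (x ^ 2) ^ (-α) := by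
    rw [← Real.rpow_two, ← Real.rpow_mul hx]
    congr 1; ring
  rw [h2]
  generalize x ^ 2 = y at *
  have hy : 0 < y := by linarith [hx2.1]
  have hl : 1 ≤ y ^ (-α) := Real.one_le_rpow_of_pos_of_le_one_of_nonpos hy hx2.2 (by linarith)
  have hu : y ^ (-α) ≤ 1 + 3 * ε := by
    refine (Real.rpow_le_rpow_of_exponent_ge hy hx2.2 (by linarith : (-2 : ℝ) ≤ -α)).trans ?_
    rw [Real.rpow_neg hy.le, Real.rpow_two, inv_le_iff_one_le_mul₀ (by positivity)]
    have := pow_le_pow_left₀ (by linarith : 0 ≤ 1 - ε) hx2.1 2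
    have h0 : 0 ≤ ε := by linarith [hx2.1, hx2.2]
    nlinarith [mul_nonneg h0 h0]
  rw [abs_of_nonneg (by linarith)]
  linarith

theorem rpow_sub_rpow_le_mul_sub {α a b : ℝ} (hα : 1 ≤ α) (hb : 0 ≤ b) (hba : b ≤ a) :
    a ^ α - b ^ α ≤ α * a ^ (α - 1) * (a - b) := by
  rcases hb.trans hba |>.eq_or_lt with ha | ha
  · have : b = a := by linarith
    simp [this]
  · have h := one_add_mul_self_le_rpow_one_add (s := b / a - 1) (by
      have : 0 ≤ b / a := by positivity
      linarith) hα
    rw [add_sub_cancel, Real.div_rpow hb ha.le, le_div_iff₀ (by positivity)] at h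
    have hpow : a ^ α = a ^ (α - 1) * a := by
      rw [← Real.rpow_add_one ha.ne']; congr 1; ring
    have : (1 + α * (b / a - 1)) * a ^ α = a ^ α - α * a ^ (α - 1) * (a - b) := by
      rw [hpow]; field_simp; ring
    linarith

theorem abs_rpow_sub_rpow_le_omegaFn {α ε a b : ℝ} (hα : 0 < α) (hα2 : α < 2)
    (h0 : 0 < ε) (h1 : ε < 1 / 20) (ha : a ∈ Icc (0 : ℝ) 2) (hb : b ∈ Icc (0 : ℝ) 2)
    (hab : |a - b| ≤ 3 * ε) : |a ^ α - b ^ α| ≤ 12 * omegaFn α ε := by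
  wlog hba : b ≤ a generalizing a b
  · rw [abs_sub_comm] at hab ⊢
    exact this hb ha hab (le_of_not_ge hba)
  have hd := (abs_le.1 hab).2
  rw [abs_of_nonneg (sub_nonneg.2 (Real.rpow_le_rpow hb.1 hba hα.le))]
  rcases le_total α 1 with h | h
  · have h2 := Real.rpow_add_le_add_rpow (sub_nonneg.2 hba) hb.1 hα.le h
    rw [sub_add_cancel] at h2
    have h3 : (a - b) ^ α ≤ 3 * ε ^ α := by
      refine (Real.rpow_le_rpow (sub_nonneg.2 hba) hd hα.le).trans ?_
      rw [Real.mul_rpow (by norm_num) h0.le]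
      refine mul_le_mul_of_nonneg_right ?_ (Real.rpow_nonneg h0.le _)
      exact (Real.rpow_le_rpow_of_exponent_le (by norm_num) h).trans_eq (Real.rpow_one _)
    have h4 := rpow_le_omegaFn (α := α) h0 h1
    have := Real.rpow_nonneg h0.le α
    linarith
  · have h2 := rpow_sub_rpow_le_mul_sub h hb.1 hba
    have h3 : a ^ (α - 1) ≤ 2 := by
      refine (Real.rpow_le_rpow ha.1 ha.2 (by linarith)).trans ?_
      exact (Real.rpow_le_rpow_of_exponent_le (by norm_num) (by linarith : α - 1 ≤ 1)).trans_eq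
        (Real.rpow_one _)
    have h4 := le_omegaFn (α := α) h0 h1
    have h5 : α * a ^ (α - 1) * (a - b) ≤ 2 * 2 * (3 * ε) :=
      mul_le_mul (mul_le_mul hα2.le h3 (Real.rpow_nonneg ha.1 _) (by norm_num)) hd
        (sub_nonneg.2 hba) (by norm_num)
    linarith

theorem fracConst_div_two_mul_Cexit {d : ℕ} (hd : 2 ≤ d) {α : ℝ} (hα : 0 < α) (hα2 : α < 2) :
    fracConst d α / 2 * (Cexit d α * (Gamma (α / 2) * Gamma (1 - α / 2) *
      ∫ h : sphere (0 : Ed d) 1, tnorm d (h : Ed d) ^ α ∂(volume : Measure (Ed d)).toSphere)) =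
      1 := by
  have h2 : (2 : ℝ) ≤ d := by exact_mod_cast hd
  have g1 := Real.Gamma_pos_of_pos (s := ((d : ℝ) - 1) / 2) (by linarith)
  have g2 := Real.Gamma_pos_of_pos (s := ((d : ℝ) - 1 + α) / 2) (by linarith)
  have g3 := Real.Gamma_pos_of_pos (s := α / 2) (by linarith)
  have g4 := Real.Gamma_pos_of_pos (s := 1 - α / 2) (by linarith)
  have g5 := Real.Gamma_pos_of_pos (s := ((d : ℝ) + α) / 2) (by linarith)
  have hπ := Real.rpow_pos_of_pos pi_pos ((d : ℝ) / 2)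
  have h2α := Real.rpow_pos_of_pos (two_pos (α := ℝ)) α
  rw [integral_sphere_tnorm_rpow hd hα, fracConst, Cexit, add_comm 1 (α / 2),
    Real.Gamma_add_one (by positivity), neg_div, Real.rpow_neg pi_pos.le, Real.rpow_sub two_pos,
    Real.rpow_one]
  generalize Gamma (((d : ℝ) - 1) / 2) = G1 at *
  generalize Gamma (((d : ℝ) - 1 + α) / 2) = G2 at *
  generalize Gamma (α / 2) = G3 at *
  generalize Gamma (1 - α / 2) = G4 at *
  generalize Gamma (((d : ℝ) + α) / 2) = G5 at *
  generalize π ^ ((d : ℝ) / 2) = P at *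
  generalize (2 : ℝ) ^ α = Q at *
  field_simp

theorem fracConst_pos (d : ℕ) {α : ℝ} (hα : 0 < α) (hα2 : α < 2) : 0 < fracConst d α := by
  have g4 := Real.Gamma_pos_of_pos (s := 1 - α / 2) (by linarith)
  have g5 := Real.Gamma_pos_of_pos (s := ((d : ℝ) + α) / 2) (by positivity)
  unfold fracConst
  positivity

theorem continuous_tnorm (d : ℕ) : Continuous (tnorm d) := by
  unfold tnorm
  refine Real.continuous_sqrt.comp (continuous_finsetSum _ fun i _ => ?_)
  split_ifs <;> fun_prop

/-- The one-dimensional integrals along all lines, compared with their limit as `ε → 0`. -/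
theorem exists_abs_integral_second_diff_uFn_add_le {d : ℕ} (hd : 2 ≤ d) {α : ℝ} (hα : 0 < α)
    (hα2 : α < 2) :
    ∃ C : ℝ, 0 ≤ C ∧ ∀ (ε : ℝ) (w h : Ed d), 0 < ε → ε < 1 / 20 →
      w ∈ cone d (2 * Real.arctan ε) → ‖w‖ = 1 / 2 → ‖h‖ = 1 →
      |(∫ r in Ioi (0 : ℝ), (uFn d α ε ((1 / 2 : ℝ) • eLast d + w + r • h) +
          uFn d α ε ((1 / 2 : ℝ) • eLast d + w - r • h) -
          2 * uFn d α ε ((1 / 2 : ℝ) • eLast d + w)) * r ^ (-1 - α)) +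
        Cexit d α * (Gamma (α / 2) * Gamma (1 - α / 2) * tnorm d h ^ α)| ≤ C * omegaFn α ε := by
  have hd1 : 1 ≤ d := by omega
  obtain ⟨C, hC, hmain⟩ := exists_abs_integral_second_diff_uFn_le hd hα hα2
  have hCe := Cexit_pos hd hα
  have hB : 0 < Gamma (α / 2) * Gamma (1 - α / 2) :=
    mul_pos (Real.Gamma_pos_of_pos (by linarith)) (Real.Gamma_pos_of_pos (by linarith))
  refine ⟨Cexit d α * C + Cexit d α * (Gamma (α / 2) * Gamma (1 - α / 2)) * 92, by positivity,
    fun ε w h h0 h1 hw hn hh => ?_⟩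
  have hε : ε ^ 2 < 1 := by nlinarith
  obtain ⟨hs, hR, hρ⟩ := cone_parameter_bounds hd1 h0 h1 hw hn
  have hρ0 := lastCoord_pos_of_mem_cone hε hw
  have hX := norm_slope_sq hd1 hρ0
  have hXR := sq_slope_lt_of_mem_cone hε hw
  have hv : ‖(lastCoord d w)⁻¹ • w - eLast d‖ ≤ 3 * ε := by
    refine le_of_sq_le_sq ?_ (by positivity)
    linarith
  have hkt := (norm_sub_smul_sub_le hd1 (w := w) hh).trans hv
  have ht1 : tnorm d h ≤ 1 := (tnorm_le_norm hd1 h).trans_eq hh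
  have hk : ‖h - (lastCoord d h / lastCoord d w) • w‖ ≤ 2 := by
    have := (abs_le.1 hkt).2
    linarith
  have hmain := hmain ε w h h0 h1 hw hn hh
  have hN := abs_rpow_neg_mul_coneFactor_sub_one_le hα hα2 h0 h1 hs hρ
  have hpow := abs_rpow_sub_rpow_le_omegaFn (b := tnorm d h) hα hα2 h0 h1 ⟨norm_nonneg _, hk⟩
    ⟨Real.sqrt_nonneg _, by linarith⟩ hkt
  have hkα : ‖h - (lastCoord d h / lastCoord d w) • w‖ ^ α ≤ 4 := by
    refine (Real.rpow_le_rpow (norm_nonneg _) hk hα.le).trans ?_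
    refine (Real.rpow_le_rpow_of_exponent_le (by norm_num) hα2.le).trans ?_
    rw [Real.rpow_two]; norm_num
  have hω := le_omegaFn (α := α) h0 h1
  rw [← hn] at hN
  have hkα0 : 0 ≤ ‖h - (lastCoord d h / lastCoord d w) • w‖ ^ α :=
    Real.rpow_nonneg (norm_nonneg _) _
  generalize (∫ r in Ioi (0 : ℝ), (uFn d α ε ((1 / 2 : ℝ) • eLast d + w + r • h) +
          uFn d α ε ((1 / 2 : ℝ) • eLast d + w - r • h) -
          2 * uFn d α ε ((1 / 2 : ℝ) • eLast d + w)) * r ^ (-1 - α)) = J at *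
  rw [← mul_assoc (lastCoord d w ^ (-α))] at hmain
  generalize lastCoord d w ^ (-α) * coneFactor (α / 2) ((1 + ε ^ 2) / (1 - ε ^ 2))
    (‖w‖ ^ 2 / lastCoord d w ^ 2 - 1) = N at *
  generalize ‖h - (lastCoord d h / lastCoord d w) • w‖ ^ α = K at *
  generalize tnorm d h ^ α = T at *
  generalize Gamma (α / 2) * Gamma (1 - α / 2) = B at *
  have hNK : |N * K - T| ≤ 92 * omegaFn α ε := by
    have : N * K - T = (N - 1) * K + (K - T) := by ring
    rw [this]
    refine (abs_add_le _ _).trans ?_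
    rw [abs_mul, abs_of_nonneg hkα0]
    have : |N - 1| * K ≤ 20 * ε * 4 := mul_le_mul hN hkα hkα0 (by positivity)
    linarith
  have : J + Cexit d α * (B * T) =
      (J + Cexit d α * (N * (B * K))) - Cexit d α * B * (N * K - T) := by ring
  rw [this]
  refine (abs_sub _ _).trans ?_
  rw [abs_mul (Cexit d α * B), abs_of_pos (mul_pos hCe hB)]
  have := mul_le_mul_of_nonneg_left hNK (mul_pos hCe hB).le
  linarith

theorem norm_sq_half_eLast_add {d : ℕ} (hd : 1 ≤ d) {w : Ed d} (hn : ‖w‖ = 1 / 2) :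
    ‖(1 / 2 : ℝ) • eLast d + w‖ ^ 2 = 1 / 2 + lastCoord d w := by
  rw [norm_add_sq_real, real_inner_smul_left, ← lastCoord_eq_inner hd, norm_smul, norm_eLast hd, hn]
  norm_num
  ring

/-- `Δ^{α/2} u(θ) = -|θ|^{-2α} + O(ω(ε))` for `θ` on the sphere of radius `1/2`
centered at `e_d/2`, inside the shifted cone `V_Θ`; here `u(y) = s*_ε(Ty)`, `u(0)=0`,
and `ε = tan(Θ/2)`. -/
theorem fracLap_uFn (d : ℕ) (hd : 2 ≤ d) (α : ℝ) (hα : 0 < α) (hα2 : α < 2) :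
    ∃ C : ℝ, 0 < C ∧ ∃ Θ₀ ∈ Set.Ioo (0 : ℝ) π, ∀ Θ ∈ Set.Ioo (0 : ℝ) Θ₀,
      Real.tan (Θ / 2) < 1 / 20 ∧
      ∀ θ ∈ Vcone d Θ, ‖θ - (1 / 2 : ℝ) • eLast d‖ = 1 / 2 →
        ∃ L : ℝ, fracLapAt d α (uFn d α (Real.tan (Θ / 2))) θ L ∧
          |L + ‖θ‖ ^ (-(2 * α))| ≤ C * omegaFn α (Real.tan (Θ / 2)) := by
  have hd1 : 1 ≤ d := by omega
  obtain ⟨C, hC, hmain⟩ := exists_abs_integral_second_diff_uFn_add_le hd hα hα2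
  have hA := fracConst_pos d hα hα2
  have hCe := Cexit_pos hd hα
  set σ := (volume : Measure (Ed d)).toSphere with hσ
  refine ⟨fracConst d α / 2 * (C * σ.real univ) + 3, by positivity, 2 * Real.arctan (1 / 20),
    ⟨by positivity, by linarith [Real.arctan_lt_pi_div_two (1 / 20)]⟩, fun Θ hΘ => ?_⟩
  have harc := Real.arctan_lt_pi_div_two (1 / 20)
  have hΘ0 := hΘ.1
  have hΘ1 := hΘ.2
  have h0 : 0 < Real.tan (Θ / 2) :=
    Real.tan_pos_of_pos_of_lt_pi_div_two (by linarith) (by linarith)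
  have h1 : Real.tan (Θ / 2) < 1 / 20 := by
    rw [← Real.tan_arctan (1 / 20)]
    exact Real.tan_lt_tan_of_lt_of_lt_pi_div_two (by linarith) harc (by linarith)
  have hΘε : 2 * Real.arctan (Real.tan (Θ / 2)) = Θ := by
    rw [Real.arctan_tan (by linarith) (by linarith)]; ring
  refine ⟨h1, fun θ hθ hn => ?_⟩
  generalize Real.tan (Θ / 2) = ε at *
  have hε : ε ^ 2 < 1 := by nlinarith
  obtain ⟨w, hw⟩ : ∃ w, w = θ - (1 / 2 : ℝ) • eLast d := ⟨_, rfl⟩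
  have hθw : θ = (1 / 2 : ℝ) • eLast d + w := by rw [hw, add_sub_cancel]
  have hwc : w ∈ cone d (2 * Real.arctan ε) := by rw [hΘε, hw]; exact hθ
  rw [← hw] at hn
  subst hθw
  obtain ⟨hJ, hL⟩ := fracLapAt_sphere_integral hd1 hα hα2 (measurable_uFn hd1 α hε)
    (abs_uFn_le hd1 hα h0.le hε hCe.le) (contDiffAt_uFn hd1 hα hε hwc)
  refine ⟨_, hL, ?_⟩
  rw [← hσ] at hJ ⊢
  have hT : Integrable (fun h : sphere (0 : Ed d) 1 => tnorm d (h : Ed d) ^ α) σ := by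
    refine Continuous.integrable_of_hasCompactSupport ?_ (HasCompactSupport.of_compactSpace _)
    exact ((continuous_tnorm d).comp continuous_subtype_val).rpow_const fun _ => Or.inr hα.le
  have hbound := norm_integral_le_of_norm_le_const (μ := σ)
    (f := fun h : sphere (0 : Ed d) 1 => (∫ r in Ioi (0 : ℝ),
      (uFn d α ε ((1 / 2 : ℝ) • eLast d + w + r • (h : Ed d)) +
        uFn d α ε ((1 / 2 : ℝ) • eLast d + w - r • (h : Ed d)) -
        2 * uFn d α ε ((1 / 2 : ℝ) • eLast d + w)) * r ^ (-1 - α)) +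
      Cexit d α * (Gamma (α / 2) * Gamma (1 - α / 2) * tnorm d (h : Ed d) ^ α)) (.of_forall fun h =>
    hmain ε w (h : Ed d) h0 h1 hwc hn (norm_eq_of_mem_sphere h))
  rw [integral_add hJ ((hT.const_mul _).const_mul _), integral_const_mul, integral_const_mul,
    Real.norm_eq_abs] at hbound
  have hone := fracConst_div_two_mul_Cexit hd hα hα2
  rw [← hσ] at hone
  have hρ := (cone_parameter_bounds hd1 h0 h1 hwc hn).2.2
  have hsq := norm_sq_half_eLast_add hd1 hn
  have hθn := abs_rpow_neg_two_mul_sub_one_le hα hα2 h1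
    (norm_nonneg ((1 / 2 : ℝ) • eLast d + w)) ⟨by linarith [hρ.1], by linarith [hρ.2]⟩
  have hω := le_omegaFn (α := α) h0 h1
  generalize (∫ h : sphere (0 : Ed d) 1, (∫ r in Ioi (0 : ℝ),
    (uFn d α ε ((1 / 2 : ℝ) • eLast d + w + r • (h : Ed d)) +
      uFn d α ε ((1 / 2 : ℝ) • eLast d + w - r • (h : Ed d)) -
      2 * uFn d α ε ((1 / 2 : ℝ) • eLast d + w)) * r ^ (-1 - α)) ∂σ) = J at *
  generalize (∫ h : sphere (0 : Ed d) 1, tnorm d (h : Ed d) ^ α ∂σ) = T at *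
  generalize ‖(1 / 2 : ℝ) • eLast d + w‖ ^ (-(2 * α)) = n at *
  have hsplit : fracConst d α / 2 * J + n = fracConst d α / 2 *
      (J + Cexit d α * (Gamma (α / 2) * Gamma (1 - α / 2) * T)) + (n - 1) := by
    rw [mul_add, hone]; ring
  rw [hsplit]
  refine (abs_add_le _ _).trans ?_
  rw [abs_mul, abs_of_pos (half_pos hA)]
  have := mul_le_mul_of_nonneg_left hbound (half_pos hA).le
  linarith
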